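/- arXiv:2012.00275 — 2 statements merged into one kernel-verified Lean document; each statement's English description precedes it below -/
import Mathlib

section
/- Let M be a connected compact topological n-manifold without boundary and let f : M → M be a continuous map. If f is homotopic to the identity map, then f is surjective. -/
/-!
A compact `n`-manifold carries a mod 2 fundamental cycle all of whose simplices are as small as we
please, a simplex being nothing more than a set of `n + 1` points. The cycle is built one chart at a
time: rounding the points near a chart to a fine cubical grid moves them only slightly, and the
missing simplices of the Kuhn triangulation of the grid are then added. The local degree of a cycle
at the centre of a chart is the parity of the number of its simplices on which a Sperner type
labelling by coordinate signs takes all the values `0, …, n`. Moving the vertices slightly does not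
change it, so `f` and the identity transport a sufficiently fine fundamental cycle to chains of
equal local degree. At a point missed by `f` that degree is `0` for `f`, yet it is `1` for the
identity.
-/

open Finset
open scoped Topology

/-- Mod 2 simplicial chains on the full simplex with vertex set `X`: a simplex is the finite set of
its vertices, so the dimension of `σ` is `#σ - 1`. -/
abbrev Mod2Chain (X : Type*) := Finset X →₀ ZMod 2

namespace Mod2Chain

variable {X Y Z : Type*}

lemma linearMap_ext {f g : Mod2Chain X →ₗ[ZMod 2] Mod2Chain Y}
    (h : ∀ σ, f (Finsupp.single σ 1) = g (Finsupp.single σ 1)) : f = g :=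
  Finsupp.lhom_ext' fun σ ↦ LinearMap.ext_ring (h σ)

lemma exists_add_apply_eq_one (z : Mod2Chain X) {T : Set (Finset X)} (hT : T.Finite) :
    ∃ w : Mod2Chain X, (∀ σ ∈ w.support, σ ∈ T ∧ z σ = 0) ∧ ∀ σ ∈ T, (z + w) σ = 1 := by
  classical
  have hfill : ∀ a : ZMod 2, a + (if a = 0 then 1 else 0) = 1 := by decide
  have hsupport : ∀ σ, (if σ ∈ T ∧ z σ = 0 then 1 else 0 : ZMod 2) ≠ 0 → σ ∈ hT.toFinset :=
    fun σ hσ ↦ hT.mem_toFinset.2 (by simpa using hσ : σ ∈ T ∧ z σ = 0).1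
  refine ⟨Finsupp.onFinset hT.toFinset _ hsupport, fun σ hσ ↦ ?_, fun σ hσ ↦ ?_⟩
  · simpa using hσ
  · simpa [hσ] using hfill (z σ)

section Boundary

variable [DecidableEq X]

/-- The simplicial boundary, augmented: the boundary of a vertex is the empty simplex. -/
noncomputable def boundary : Mod2Chain X →ₗ[ZMod 2] Mod2Chain X :=
  Finsupp.linearCombination (ZMod 2) fun σ ↦ ∑ x ∈ σ, Finsupp.single (σ.erase x) 1

lemma boundary_single (σ : Finset X) :
    boundary (Finsupp.single σ 1) = ∑ x ∈ σ, Finsupp.single (σ.erase x) 1 := by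
  simp [boundary]

lemma boundary_apply (z : Mod2Chain X) (τ : Finset X) :
    boundary z τ = ∑ σ ∈ z.support with τ ⊆ σ ∧ #σ = #τ + 1, z σ := by
  rw [boundary, Finsupp.linearCombination_apply, Finsupp.sum, Finsupp.finsetSum_apply, sum_filter]
  refine sum_congr rfl fun σ _ ↦ ?_
  rw [Finsupp.smul_apply, Finsupp.finsetSum_apply, smul_eq_mul]
  split_ifs with h
  · obtain ⟨x, hx, rfl⟩ := (covBy_iff_card_sdiff_eq_one.2
      ⟨h.1, by rw [card_sdiff_of_subset h.1]; omega⟩).exists_finset_cons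
    have hne : ∀ y ∈ τ, (cons x τ hx).erase y ≠ τ := fun y hy he ↦
      notMem_erase y _ (he.symm ▸ hy)
    rw [sum_cons, sum_eq_zero fun y hy ↦ Finsupp.single_eq_of_ne (hne y hy).symm]
    simp [erase_eq_of_notMem hx]
  · rw [sum_eq_zero, mul_zero]
    intro x hx
    refine Finsupp.single_eq_of_ne ?_
    rintro rfl
    exact h ⟨erase_subset _ _, (card_erase_add_one hx).symm⟩

lemma exists_mem_support_of_boundary_ne_zero {z : Mod2Chain X} {τ : Finset X}
    (h : boundary z τ ≠ 0) : ∃ σ ∈ z.support, τ ⊆ σ ∧ #σ = #τ + 1 := by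
  rw [boundary_apply] at h
  obtain ⟨σ, hσ, -⟩ := exists_ne_zero_of_sum_ne_zero h
  exact ⟨σ, mem_filter.1 hσ⟩

lemma boundary_apply_eq_add {z : Mod2Chain X} {τ : Finset X} {u v : X} (huv : u ≠ v) (hu : u ∉ τ)
    (hv : v ∉ τ) (h : ∀ σ ∈ z.support, τ ⊆ σ → #σ = #τ + 1 → σ = insert u τ ∨ σ = insert v τ) :
    boundary z τ = z (insert u τ) + z (insert v τ) := by
  have hne : insert u τ ≠ insert v τ := fun he ↦ by
    have : u ∈ insert v τ := he ▸ mem_insert_self u τ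
    simp_all
  rw [boundary_apply, ← sum_pair hne (f := z)]
  refine sum_subset_zero_on_sdiff (fun σ hσ ↦ ?_) (fun σ hσ ↦ ?_) fun _ _ ↦ rfl
  · obtain ⟨hσ, hsub, hcard⟩ := mem_filter.1 hσ
    simpa using h σ hσ hsub hcard
  · obtain ⟨hmem, hσ⟩ := mem_sdiff.1 hσ
    by_contra hz
    refine hσ (mem_filter.2 ⟨Finsupp.mem_support_iff.2 hz, ?_⟩)
    rcases mem_insert.1 hmem with rfl | hmem
    · exact ⟨subset_insert _ _, card_insert_of_notMem hu⟩
    · rw [mem_singleton.1 hmem]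
      exact ⟨subset_insert _ _, card_insert_of_notMem hv⟩

end Boundary

section Map

variable [DecidableEq Y]

/-- The chain map induced by a map of vertices; simplices that `f` collapses are sent to `0`. -/
noncomputable def map (f : X → Y) : Mod2Chain X →ₗ[ZMod 2] Mod2Chain Y :=
  Finsupp.linearCombination (ZMod 2) fun σ ↦
    if #(σ.image f) = #σ then Finsupp.single (σ.image f) 1 else 0

lemma map_single (f : X → Y) (σ : Finset X) :
    map f (Finsupp.single σ 1) =
      if #(σ.image f) = #σ then Finsupp.single (σ.image f) 1 else 0 := by
  simp [map]

lemma map_apply (f : X → Y) (z : Mod2Chain X) (T : Finset Y) :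
    map f z T = ∑ σ ∈ z.support with σ.image f = T ∧ #T = #σ, z σ := by
  rw [map, Finsupp.linearCombination_apply, Finsupp.sum, Finsupp.finsetSum_apply, sum_filter]
  refine sum_congr rfl fun σ _ ↦ ?_
  by_cases hT : σ.image f = T <;> by_cases hσ : #(σ.image f) = #σ <;> simp_all

lemma exists_mem_support_of_map_ne_zero {f : X → Y} {z : Mod2Chain X} {T : Finset Y}
    (h : map f z T ≠ 0) : ∃ σ ∈ z.support, σ.image f = T ∧ #T = #σ := by
  rw [map_apply] at h
  obtain ⟨σ, hσ, -⟩ := exists_ne_zero_of_sum_ne_zero h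
  exact ⟨σ, mem_filter.1 hσ⟩

lemma map_apply_congr {f g : X → Y} {z : Mod2Chain X} {T : Finset Y}
    (h : ∀ σ ∈ z.support, σ.image f = T ↔ σ.image g = T) : map f z T = map g z T := by
  rw [map_apply, map_apply]
  exact sum_congr (filter_congr fun σ hσ ↦ by rw [h σ hσ]) fun _ _ ↦ rfl

lemma map_map [DecidableEq Z] (f : X → Y) (g : Y → Z) (z : Mod2Chain X) :
    map g (map f z) = map (g ∘ f) z := by
  classical
  suffices (map g).comp (map f) = map (g ∘ f) from LinearMap.congr_fun this z
  refine linearMap_ext fun σ ↦ ?_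
  rw [LinearMap.comp_apply, map_single, map_single, ← image_image]
  have h₁ := card_image_le (s := σ) (f := f)
  have h₂ := card_image_le (s := σ.image f) (f := g)
  split_ifs with hf hgf hgf
  · rw [map_single, if_pos (hgf.trans hf.symm)]
  · rw [map_single, if_neg fun hg ↦ hgf (hg.trans hf)]
  · omega
  · exact _root_.map_zero _

variable [DecidableEq X]

lemma image_erase_of_eq {f : X → Y} {σ : Finset X} {x y : X} (hy : y ∈ σ) (hxy : x ≠ y)
    (hf : f x = f y) : (σ.erase x).image f = σ.image f := by
  refine (image_subset_image (erase_subset x σ)).antisymm fun b hb ↦ ?_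
  obtain ⟨a, ha, rfl⟩ := mem_image.1 hb
  by_cases hax : a = x
  · exact mem_image.2 ⟨y, mem_erase.2 ⟨hxy.symm, hy⟩, by rw [hax, hf]⟩
  · exact mem_image_of_mem f (mem_erase.2 ⟨hax, ha⟩)

lemma map_boundary_single_of_injOn {f : X → Y} {σ : Finset X} (hf : Set.InjOn f σ) :
    map f (boundary (Finsupp.single σ 1)) = boundary (Finsupp.single (σ.image f) 1) := by
  rw [boundary_single, boundary_single, map_sum, sum_image hf]
  refine sum_congr rfl fun x hx ↦ ?_
  have hinj : Set.InjOn f (σ.erase x) := hf.mono (coe_subset.2 (erase_subset x σ))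
  rw [map_single, if_pos (card_image_of_injOn hinj), erase_eq, erase_eq,
    image_sdiff_of_injOn hf (singleton_subset_iff.2 hx), image_singleton]

-- The two faces of `σ` opposite to the identified vertices have the same image and cancel mod 2.
lemma map_boundary_single_of_not_injOn {f : X → Y} {σ : Finset X} (hf : ¬ Set.InjOn f σ) :
    map f (boundary (Finsupp.single σ 1)) = 0 := by
  simp only [Set.InjOn, not_forall] at hf
  obtain ⟨x, hx, y, hy, hxy, hne⟩ := hf
  have hpair : ({x, y} : Finset X) ⊆ σ := insert_subset hx (singleton_subset_iff.2 hy)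
  have hother : ∀ w ∈ σ, w ∉ ({x, y} : Finset X) →
      map f (Finsupp.single (σ.erase w) 1) = 0 := fun w _ hw ↦ by
    simp only [mem_insert, mem_singleton, not_or] at hw
    rw [map_single, if_neg]
    exact fun hcard ↦ hne (card_image_iff.1 hcard (mem_erase.2 ⟨Ne.symm hw.1, hx⟩)
      (mem_erase.2 ⟨Ne.symm hw.2, hy⟩) hxy)
  rw [boundary_single, map_sum, ← sum_subset hpair hother, sum_pair hne, map_single, map_single,
    image_erase_of_eq hy hne hxy, image_erase_of_eq hx (Ne.symm hne) hxy.symm,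
    card_erase_of_mem hx, card_erase_of_mem hy]
  exact ZModModule.add_self _

lemma map_boundary (f : X → Y) (z : Mod2Chain X) : map f (boundary z) = boundary (map f z) := by
  suffices (map f).comp boundary = boundary.comp (map f) from LinearMap.congr_fun this z
  refine linearMap_ext fun σ ↦ ?_
  rw [LinearMap.comp_apply, LinearMap.comp_apply, map_single]
  split_ifs with hf
  · exact map_boundary_single_of_injOn (card_image_iff.1 hf)
  · rw [map_boundary_single_of_not_injOn (mt card_image_iff.2 hf), _root_.map_zero]

end Map

/-! ### The degree of a labelling -/

variable {I : Type*}

section Degree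

variable [Fintype I] [DecidableEq I]

/-- The number mod 2 of rainbow simplices of `z`: those whose vertices carry every label in `I`
exactly once. Vertices labelled `none` are regarded as lying outside the region of interest. -/
noncomputable def degree (l : X → Option I) (z : Mod2Chain X) : ZMod 2 :=
  map l z (univ.erase none)

lemma degree_add (l : X → Option I) (z w : Mod2Chain X) :
    degree l (z + w) = degree l z + degree l w := by
  rw [degree, map_add, Finsupp.add_apply, degree, degree]

lemma degree_map [DecidableEq Y] (f : X → Y) (l : Y → Option I) (z : Mod2Chain X) :
    degree l (map f z) = degree (l ∘ f) z := by
  rw [degree, map_map, degree]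

lemma exists_rainbow_of_degree_ne_zero {l : X → Option I} {z : Mod2Chain X}
    (h : degree l z ≠ 0) : ∃ σ ∈ z.support, ∀ i, ∃ x ∈ σ, l x = some i := by
  obtain ⟨σ, hσ, himage, -⟩ := exists_mem_support_of_map_ne_zero h
  refine ⟨σ, hσ, fun i ↦ mem_image.1 ?_⟩
  simp [himage]

lemma degree_eq_apply {l : X → Option I} {z : Mod2Chain X} {S : Finset X}
    (hz : ∀ σ ∈ z.support, (∀ i, ∃ x ∈ σ, l x = some i) → σ = S)
    (hS : S.image l = univ.erase none) (hcard : #S = Fintype.card I) : degree l z = z S := by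
  have hrainbow : #(univ.erase (none : Option I)) = #S := by simp [hcard]
  rw [degree, map_apply, sum_filter, sum_eq_single S, if_pos ⟨hS, hrainbow⟩]
  · refine fun σ hσ hne ↦ if_neg fun himage ↦ hne (hz σ hσ fun i ↦ mem_image.1 ?_)
    simp [himage.1]
  · exact fun hS' ↦ by rw [Finsupp.notMem_support_iff.1 hS', ite_self]

end Degree

variable [DecidableEq X]

/-- Two labellings that never exhaust the labels together on a simplex of `z`, nor exhaust `I`
together on a simplex of its boundary. -/
def AreHomotopic (z : Mod2Chain X) (l m : X → Option I) : Prop :=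
  (∀ σ ∈ z.support, ∃ a, ∀ x ∈ σ, l x ≠ a ∧ m x ≠ a) ∧
    ∀ τ ∈ (boundary z).support, ∃ i : I, ∀ x ∈ τ, l x ≠ some i ∧ m x ≠ some i

lemma AreHomotopic.symm {z : Mod2Chain X} {l m : X → Option I} (h : AreHomotopic z l m) :
    AreHomotopic z m l :=
  ⟨fun σ hσ ↦ (h.1 σ hσ).imp fun _ ha x hx ↦ (ha x hx).symm,
    fun τ hτ ↦ (h.2 τ hτ).imp fun _ ha x hx ↦ (ha x hx).symm⟩

lemma AreHomotopic.of_mem_pair {z : Mod2Chain X} {l m l' m' : X → Option I}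
    (h : AreHomotopic z l m) (hl : ∀ x, l' x = l x ∨ l' x = m x)
    (hm : ∀ x, m' x = l x ∨ m' x = m x) : AreHomotopic z l' m' := by
  have hne : ∀ {x a}, (l x ≠ a ∧ m x ≠ a) → l' x ≠ a ∧ m' x ≠ a := fun {x a} ha ↦ by
    rcases hl x with h₁ | h₁ <;> rcases hm x with h₂ | h₂ <;> simp [h₁, h₂, ha]
  exact ⟨fun σ hσ ↦ (h.1 σ hσ).imp fun _ ha x hx ↦ hne (ha x hx),
    fun τ hτ ↦ (h.2 τ hτ).imp fun _ ha x hx ↦ hne (ha x hx)⟩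

variable [Fintype I] [DecidableEq I]

-- Sperner's double counting of the simplices having a face with exactly the labels other than `i`.
lemma degree_eq_map_boundary_add (l : X → Option I) (z : Mod2Chain X) (i : I) :
    degree l z = map l (boundary z) ((univ.erase none).erase (some i)) +
      map l z (univ.erase (some i)) := by
  have hface : boundary (map l z) ((univ.erase none).erase (some i)) =
      degree l z + map l z (univ.erase (some i)) := by
    rw [boundary_apply_eq_add (u := some i) (v := none) (by simp) (by simp) (by simp),
      insert_erase (by simp), erase_right_comm, insert_erase (by simp), degree]
    intro σ _ hsub hcard
    obtain ⟨a, ha, rfl⟩ := (covBy_iff_card_sdiff_eq_one.2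
      ⟨hsub, by rw [card_sdiff_of_subset hsub]; omega⟩).exists_finset_insert
    rcases a with - | j <;> simp_all
  rw [map_boundary, hface, add_assoc, ZModModule.add_self, add_zero]

lemma degree_eq_of_eqOn_compl_singleton_of_eq_some {l m : X → Option I} {z : Mod2Chain X} {v : X}
    {i : I} (hlm : ∀ x ≠ v, l x = m x) (hi : l v = some i) (h : AreHomotopic z l m) :
    degree l z = degree m z := by
  -- A simplex through `v` sees `some i` under `l`, so neither labelling gives it the labels `T`.
  have himage : ∀ (τ : Finset X) (T : Finset (Option I)), some i ∉ T →
      (v ∈ τ → τ.image m ≠ T) → (τ.image l = T ↔ τ.image m = T) := by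
    intro τ T hT hm
    by_cases hv : v ∈ τ
    · refine iff_of_false (fun hl ↦ hT ?_) (hm hv)
      exact hl ▸ hi ▸ mem_image_of_mem l hv
    · rw [image_congr fun x hx ↦ hlm x (ne_of_mem_of_not_mem hx hv)]
  rw [degree_eq_map_boundary_add l z i, degree_eq_map_boundary_add m z i]
  congr 1 <;> refine map_apply_congr fun τ hτ ↦ himage τ _ (by simp) fun hv hm ↦ ?_
  · obtain ⟨j, hj⟩ := h.2 τ hτ
    have hji : j ≠ i := fun hji ↦ (hj v hv).1 (hji ▸ hi)
    obtain ⟨x, hx, hxj⟩ := mem_image.1 (show some j ∈ τ.image m by simp [hm, hji])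
    exact (hj x hx).2 hxj
  · obtain ⟨a, ha⟩ := h.1 τ hτ
    have hai : a ≠ some i := fun hai ↦ (ha v hv).1 (hai ▸ hi)
    obtain ⟨x, hx, hxa⟩ := mem_image.1 (show a ∈ τ.image m by simp [hm, hai])
    exact (ha x hx).2 hxa

lemma degree_eq_of_eqOn_compl_singleton {l m : X → Option I} {z : Mod2Chain X} {v : X}
    (hlm : ∀ x ≠ v, l x = m x) (h : AreHomotopic z l m) : degree l z = degree m z := by
  rcases hl : l v with - | i
  · rcases hm : m v with - | i
    · have : l = m := funext fun x ↦ by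
        by_cases hx : x = v
        · rw [hx, hl, hm]
        · exact hlm x hx
      rw [this]
    · exact (degree_eq_of_eqOn_compl_singleton_of_eq_some (fun x hx ↦ (hlm x hx).symm) hm
        h.symm).symm
  · exact degree_eq_of_eqOn_compl_singleton_of_eq_some hlm hl h

lemma degree_eq_of_areHomotopic {l m : X → Option I} {z : Mod2Chain X} (h : AreHomotopic z l m) :
    degree l z = degree m z := by
  have hpiecewise : ∀ F : Finset X, degree l z = degree (F.piecewise m l) z := by
    intro F
    induction F using Finset.induction_on with
    | empty => rw [piecewise_empty]
    | insert v F _ ih =>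
      have hmem : ∀ (F : Finset X) (x : X), F.piecewise m l x = l x ∨ F.piecewise m l x = m x :=
        fun F x ↦ by by_cases hx : x ∈ F <;> simp [hx]
      exact ih.trans (degree_eq_of_eqOn_compl_singleton (v := v)
        (fun x hx ↦ (piecewise_insert_of_ne _ _ _ hx).symm) (h.of_mem_pair (hmem _) (hmem _)))
  rw [hpiecewise (z.support.biUnion id)]
  refine map_apply_congr fun σ hσ ↦ ?_
  have himage : σ.image ((z.support.biUnion id).piecewise m l) = σ.image m :=
    image_congr fun x hx ↦ piecewise_eq_of_mem _ _ _ (mem_biUnion.2 ⟨σ, hσ, hx⟩)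
  rw [himage]

end Mod2Chain

/-! ### The Kuhn triangulation -/

section Grid

variable {ι : Type*} {v w : ι → ℤ}

/-- Grid points joined by an edge of the Kuhn triangulation of `ι → ℝ`, or equal. -/
def GridAdjacent (v w : ι → ℤ) : Prop := v ≤ w ∧ w ≤ v + 1 ∨ w ≤ v ∧ v ≤ w + 1

/-- The vertex set of a simplex of the Kuhn triangulation. -/
def IsGridClique (σ : Finset (ι → ℤ)) : Prop := ∀ v ∈ σ, ∀ w ∈ σ, GridAdjacent v w

lemma GridAdjacent.symm (h : GridAdjacent v w) : GridAdjacent w v := Or.symm h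

lemma IsGridClique.mono {σ τ : Finset (ι → ℤ)} (hσ : IsGridClique σ) (h : τ ⊆ σ) :
    IsGridClique τ :=
  fun v hv w hw ↦ hσ v (h hv) w (h hw)

lemma GridAdjacent.refl (v : ι → ℤ) : GridAdjacent v v :=
  .inl ⟨le_rfl, le_add_of_nonneg_right zero_le_one⟩

lemma IsGridClique.insert_of_gridAdjacent [DecidableEq (ι → ℤ)] {τ : Finset (ι → ℤ)}
    (hτ : IsGridClique τ) (h : ∀ w ∈ τ, GridAdjacent v w) : IsGridClique (insert v τ) := by
  intro a ha b hb
  obtain rfl | ha := mem_insert.1 ha <;> obtain hb' | hb' := mem_insert.1 hb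
  exacts [hb' ▸ .refl _, h b hb', hb' ▸ (h a ha).symm, hτ a ha b hb']

variable [Fintype ι]

/-- The sum of the coordinates; it strictly increases along the simplices of the triangulation. -/
def gridHeight (v : ι → ℤ) : ℤ := ∑ i, v i

lemma gridHeight_mono : Monotone (gridHeight (ι := ι)) := fun _ _ h ↦ sum_le_sum fun i _ ↦ h i

lemma gridHeight_add_one (v : ι → ℤ) : gridHeight (v + 1) = gridHeight v + Fintype.card ι := by
  simp [gridHeight, sum_add_distrib]

lemma eq_of_le_of_gridHeight_le (h : v ≤ w) (hle : gridHeight w ≤ gridHeight v) : v = w :=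
  funext fun i ↦ (sum_eq_sum_iff_of_le fun i _ ↦ h i).1 ((gridHeight_mono h).antisymm hle) i
    (mem_univ i)

lemma GridAdjacent.le_and_le_add_one (h : GridAdjacent v w) (hle : gridHeight v ≤ gridHeight w) :
    v ≤ w ∧ w ≤ v + 1 := by
  rcases h with h | h
  · exact h
  · rw [eq_of_le_of_gridHeight_le h.1 hle]
    exact ⟨le_rfl, le_add_of_nonneg_right zero_le_one⟩

lemma GridAdjacent.eq_of_gridHeight_eq (h : GridAdjacent v w) (heq : gridHeight v = gridHeight w) :
    v = w :=
  eq_of_le_of_gridHeight_le (h.le_and_le_add_one heq.le).1 heq.ge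

lemma GridAdjacent.gridHeight_le_add_card (h : GridAdjacent v w) :
    gridHeight w ≤ gridHeight v + Fintype.card ι := by
  rw [← gridHeight_add_one]
  rcases h with h | h
  · exact gridHeight_mono h.2
  · exact gridHeight_mono (h.1.trans (le_add_of_nonneg_right zero_le_one))

lemma GridAdjacent.eq_add_one (h : GridAdjacent v w)
    (heq : gridHeight w = gridHeight v + Fintype.card ι) : w = v + 1 :=
  eq_of_le_of_gridHeight_le (h.le_and_le_add_one (by omega)).2 (by rw [gridHeight_add_one, heq])

lemma IsGridClique.injOn_gridHeight {σ : Finset (ι → ℤ)} (hσ : IsGridClique σ) :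
    Set.InjOn gridHeight (σ : Set (ι → ℤ)) :=
  fun a ha b hb hab ↦ (hσ a ha b hb).eq_of_gridHeight_eq hab

lemma IsGridClique.image_gridHeight {σ : Finset (ι → ℤ)} (hσ : IsGridClique σ)
    (hcard : #σ = Fintype.card ι + 1) :
    ∃ v ∈ σ, σ.image gridHeight = Icc (gridHeight v) (gridHeight v + Fintype.card ι) := by
  obtain ⟨v, hv, hmin⟩ := exists_min_image σ gridHeight (card_pos.1 (by omega))
  refine ⟨v, hv, eq_of_subset_of_card_le (fun a ha ↦ ?_) ?_⟩
  · obtain ⟨w, hw, rfl⟩ := mem_image.1 ha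
    exact mem_Icc.2 ⟨hmin w hw, (hσ v hv w hw).gridHeight_le_add_card⟩
  · rw [card_image_of_injOn hσ.injOn_gridHeight, hcard, Int.card_Icc]
    omega

lemma gridHeight_add_single [DecidableEq ι] (v : ι → ℤ) (i : ι) :
    gridHeight (v + Pi.single i 1) = gridHeight v + 1 := by
  simp [gridHeight, sum_add_distrib]

lemma exists_eq_add_single_of_le [DecidableEq ι] (h : v ≤ w)
    (hheight : gridHeight w = gridHeight v + 1) : ∃ i, w = v + Pi.single i 1 := by
  have hne : v ≠ w := by rintro rfl; omega
  obtain ⟨i, hi⟩ := (Pi.lt_def.1 (h.lt_of_ne hne)).2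
  refine ⟨i, (eq_of_le_of_gridHeight_le (fun j ↦ ?_) ?_).symm⟩
  · rcases eq_or_ne j i with rfl | hj
    · simpa using Int.add_one_le_iff.2 hi
    · simpa [hj] using h j
  · rw [gridHeight_add_single, hheight]

end Grid

section Kuhn

variable {n : ℕ} (v : Fin n → ℤ) (r : Equiv.Perm (Fin n))

/-- The `k`-th vertex of the monotone path from `v` to `v + 1` that increments the coordinates in
the order prescribed by `r`. -/
def kuhnVertex (k : ℕ) : Fin n → ℤ := fun i ↦ v i + if (r i : ℕ) < k then 1 else 0

/-- The simplex of the Kuhn triangulation of the cube `[v, v + 1]` belonging to `r`. -/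
def kuhnSimplex : Finset (Fin n → ℤ) := (range (n + 1)).image (kuhnVertex v r)

lemma mem_kuhnSimplex {w : Fin n → ℤ} : w ∈ kuhnSimplex v r ↔ ∃ k ≤ n, kuhnVertex v r k = w := by
  simp [kuhnSimplex]

lemma kuhnVertex_zero : kuhnVertex v r 0 = v := by
  ext i
  simp [kuhnVertex]

lemma kuhnVertex_last : kuhnVertex v r n = v + 1 := by
  ext i
  simp [kuhnVertex]

lemma kuhnVertex_mono : Monotone (kuhnVertex v r) := by
  intro j k hjk i
  simp only [kuhnVertex]
  split_ifs <;> omega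

lemma kuhnVertex_succ {k : ℕ} (hk : k < n) :
    kuhnVertex v r (k + 1) = kuhnVertex v r k + Pi.single (r.symm ⟨k, hk⟩) 1 := by
  ext i
  have hi : i = r.symm ⟨k, hk⟩ ↔ (r i : ℕ) = k := by rw [Equiv.eq_symm_apply, Fin.ext_iff]
  simp only [kuhnVertex, Pi.add_apply, Pi.single_apply, hi]
  split_ifs <;> omega

lemma gridHeight_kuhnVertex {k : ℕ} (hk : k ≤ n) :
    gridHeight (kuhnVertex v r k) = gridHeight v + k := by
  induction k with
  | zero => simp [kuhnVertex_zero]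
  | succ k ih =>
    rw [kuhnVertex_succ v r hk, gridHeight_add_single, ih (by omega), Nat.cast_succ, add_assoc]

lemma injOn_kuhnVertex : Set.InjOn (kuhnVertex v r) (range (n + 1)) := by
  intro j hj k hk hjk
  have hheight := congrArg gridHeight hjk
  rw [gridHeight_kuhnVertex v r (mem_range_succ_iff.1 hj),
    gridHeight_kuhnVertex v r (mem_range_succ_iff.1 hk)] at hheight
  omega

lemma card_kuhnSimplex : #(kuhnSimplex v r) = n + 1 := by
  rw [kuhnSimplex, card_image_of_injOn (injOn_kuhnVertex v r), card_range]

lemma le_kuhnVertex (k : ℕ) : v ≤ kuhnVertex v r k :=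
  (kuhnVertex_zero v r).symm.le.trans (kuhnVertex_mono v r k.zero_le)

lemma kuhnVertex_le (k : ℕ) : kuhnVertex v r k ≤ v + 1 := by
  intro i
  simp only [kuhnVertex, Pi.add_apply, Pi.one_apply]
  split_ifs <;> omega

lemma isGridClique_kuhnSimplex : IsGridClique (kuhnSimplex v r) := by
  have hadj : ∀ j k, j ≤ k → GridAdjacent (kuhnVertex v r j) (kuhnVertex v r k) := fun j k hjk ↦
    .inl ⟨kuhnVertex_mono v r hjk,
      (kuhnVertex_le v r k).trans (add_le_add_left (le_kuhnVertex v r j) 1)⟩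
  intro a ha b hb
  obtain ⟨j, -, rfl⟩ := (mem_kuhnSimplex v r).1 ha
  obtain ⟨k, -, rfl⟩ := (mem_kuhnSimplex v r).1 hb
  rcases le_total j k with h | h
  · exact hadj j k h
  · exact (hadj k j h).symm

variable {v r}

lemma exists_eq_kuhnVertex {w : ℕ → Fin n → ℤ}
    (hadj : ∀ j ≤ n, ∀ k ≤ n, GridAdjacent (w j) (w k))
    (hheight : ∀ k ≤ n, gridHeight (w k) = gridHeight (w 0) + k) :
    ∃ r : Equiv.Perm (Fin n), ∀ k ≤ n, w k = kuhnVertex (w 0) r k := by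
  have hle : ∀ j k, j ≤ k → k ≤ n → w j ≤ w k ∧ w k ≤ w j + 1 := fun j k hjk hk ↦
    (hadj j (hjk.trans hk) k hk).le_and_le_add_one
      (by rw [hheight j (hjk.trans hk), hheight k hk]; omega)
  have hsucc : ∀ k : Fin n, ∃ i, w (k + 1) = w k + Pi.single i 1 := fun k ↦
    exists_eq_add_single_of_le (hle k (k + 1) (by omega) k.2).1
      (by rw [hheight k k.2.le, hheight (k + 1) k.2]; push_cast; ring)
  choose a ha using hsucc
  have hinj : Function.Injective a := by
    refine Function.Injective.of_lt_imp_ne fun j k hjk heq ↦ ?_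
    have hj := congrFun (ha j) (a j)
    have hk := congrFun (ha k) (a j)
    have hlast := (hle 0 (k + 1) (by omega) k.2).2 (a j)
    have hmid : w (j + 1) (a j) ≤ w k (a j) := (hle (j + 1) k hjk k.2.le).1 (a j)
    have hfirst : w 0 (a j) ≤ w j (a j) := (hle 0 j (by omega) j.2.le).1 (a j)
    rw [← heq] at hk
    simp only [Pi.add_apply, Pi.single_eq_same, Pi.one_apply] at hj hk hlast
    omega
  refine ⟨(Equiv.ofBijective a hinj.bijective_of_finite).symm, fun k hk ↦ ?_⟩
  induction k with
  | zero => rw [kuhnVertex_zero]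
  | succ k ih => rw [kuhnVertex_succ _ _ hk, ← ih (by omega)]; exact ha ⟨k, hk⟩

lemma IsGridClique.exists_eq_kuhnSimplex {σ : Finset (Fin n → ℤ)} (hσ : IsGridClique σ)
    (hcard : #σ = n + 1) : ∃ v r, σ = kuhnSimplex v r := by
  obtain ⟨v, -, himage⟩ := hσ.image_gridHeight (by rw [hcard, Fintype.card_fin])
  rw [Fintype.card_fin] at himage
  have hexists : ∀ k : ℕ, ∃ w, k ≤ n → w ∈ σ ∧ gridHeight w = gridHeight v + k := by
    intro k
    by_cases hk : k ≤ n
    · obtain ⟨w, hw⟩ := mem_image.1 (himage.ge (mem_Icc.2 ⟨by omega, by omega⟩ :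
        gridHeight v + k ∈ Icc (gridHeight v) (gridHeight v + n)))
      exact ⟨w, fun _ ↦ hw⟩
    · exact ⟨0, fun h ↦ absurd h hk⟩
  choose w hw using hexists
  obtain ⟨r, hr⟩ := exists_eq_kuhnVertex (fun j hj k hk ↦ hσ _ (hw j hj).1 _ (hw k hk).1)
    fun k hk ↦ by rw [(hw k hk).2, (hw 0 n.zero_le).2]; simp
  refine ⟨w 0, r, (eq_of_subset_of_card_le (fun u hu ↦ ?_) ?_).symm⟩
  · obtain ⟨k, hk, rfl⟩ := (mem_kuhnSimplex _ _).1 hu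
    exact hr k hk ▸ (hw k hk).1
  · rw [card_kuhnSimplex, hcard]

lemma kuhnVertex_swap {k : ℕ} (hk : k + 1 < n) {j : ℕ} (hj : j ≠ k + 1) :
    kuhnVertex v (r.trans (Equiv.swap ⟨k, by omega⟩ ⟨k + 1, hk⟩)) j = kuhnVertex v r j := by
  ext i
  have : ((Equiv.swap (⟨k, by omega⟩ : Fin n) ⟨k + 1, hk⟩ (r i) : Fin n) : ℕ) < j ↔
      (r i : ℕ) < j := by
    rw [Equiv.swap_apply_def]
    split_ifs with h₁ h₂ <;> simp only [Fin.ext_iff] at * <;> omega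
  simp only [kuhnVertex, Equiv.trans_apply, this]

/-- The vertex opposite to the `k`-th one across the facet they both span: with the path continued
periodically, the increments before and after the `k`-th vertex are exchanged. -/
def kuhnReflection (v : Fin n → ℤ) (r : Equiv.Perm (Fin n)) (k : ℕ) : Fin n → ℤ :=
  if k = 0 then kuhnVertex v r 1 + 1 else if k = n then kuhnVertex v r (n - 1) - 1 else
    kuhnVertex v r (k - 1) + kuhnVertex v r (k + 1) - kuhnVertex v r k

lemma kuhnReflection_zero : kuhnReflection v r 0 = kuhnVertex v r 1 + 1 := if_pos rfl

lemma kuhnReflection_last (hn : n ≠ 0) :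
    kuhnReflection v r n = kuhnVertex v r (n - 1) - 1 := by
  rw [kuhnReflection, if_neg hn, if_pos rfl]

lemma kuhnReflection_succ {k : ℕ} (hk : k + 1 < n) :
    kuhnReflection v r (k + 1) = kuhnVertex v r k + Pi.single (r.symm ⟨k + 1, hk⟩) 1 := by
  rw [kuhnReflection, if_neg k.succ_ne_zero, if_neg hk.ne, kuhnVertex_succ v r hk,
    Nat.add_sub_cancel, ← add_assoc, add_sub_right_comm, add_sub_cancel_right]

lemma gridAdjacent_kuhnReflection {k j : ℕ} (hk : k ≤ n) (hj : j ≤ n) (hjk : j ≠ k) :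
    GridAdjacent (kuhnReflection v r k) (kuhnVertex v r j) := by
  have hle := le_kuhnVertex v r
  have hle' := kuhnVertex_le v r
  rcases Nat.eq_zero_or_pos k with rfl | hpos
  · rw [kuhnReflection_zero]
    have := kuhnVertex_mono v r (show 1 ≤ j by omega)
    exact .inr ⟨(hle' j).trans (add_le_add_left (hle 1) 1), add_le_add_left this 1⟩
  rcases hk.eq_or_lt with rfl | hlt
  · rw [kuhnReflection_last hpos.ne']
    have := kuhnVertex_mono v r (show j ≤ k - 1 by omega)
    refine .inl ⟨sub_le_iff_le_add.2 ((hle' _).trans (add_le_add_left (hle j) 1)), ?_⟩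
    rwa [sub_add_cancel]
  · obtain ⟨k, rfl⟩ := Nat.exists_eq_add_one.2 hpos
    have hlower : kuhnVertex v r k ≤ kuhnReflection v r (k + 1) := by
      rw [kuhnReflection_succ hlt]
      exact le_add_of_nonneg_right (Pi.single_nonneg.2 zero_le_one)
    have hupper : kuhnReflection v r (k + 1) ≤ kuhnVertex v r (k + 2) := by
      rw [kuhnReflection_succ hlt, kuhnVertex_succ v r hlt]
      exact add_le_add_left (kuhnVertex_mono v r k.le_succ) _
    rcases hjk.lt_or_gt with hj' | hj'
    · exact .inr ⟨(kuhnVertex_mono v r (by omega)).trans hlower,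
        hupper.trans ((hle' _).trans (add_le_add_left (hle j) 1))⟩
    · exact .inl ⟨hupper.trans (kuhnVertex_mono v r (by omega)),
        (hle' j).trans (add_le_add_left ((hle k).trans hlower) 1)⟩

lemma kuhnReflection_notMem (hn : n ≠ 0) {k : ℕ} (hk : k ≤ n) :
    kuhnReflection v r k ∉ kuhnSimplex v r := by
  intro hmem
  obtain ⟨j, hj, heq⟩ := (mem_kuhnSimplex v r).1 hmem
  have hheight := congrArg gridHeight heq
  rw [gridHeight_kuhnVertex v r hj] at hheight
  rcases Nat.eq_zero_or_pos k with rfl | hpos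
  · rw [kuhnReflection_zero, gridHeight_add_one, gridHeight_kuhnVertex v r (by omega),
      Fintype.card_fin] at hheight
    omega
  rcases hk.eq_or_lt with rfl | hlt
  · have hsub := gridHeight_add_one (kuhnReflection v r k)
    rw [kuhnReflection_last hn, sub_add_cancel, gridHeight_kuhnVertex v r (by omega),
      ← kuhnReflection_last hn, Fintype.card_fin] at hsub
    omega
  · obtain ⟨k, rfl⟩ := Nat.exists_eq_add_one.2 hpos
    have hj' : j = k + 1 := by
      rw [kuhnReflection_succ hlt, gridHeight_add_single,
        gridHeight_kuhnVertex v r (by omega)] at hheight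
      omega
    rw [hj', kuhnReflection_succ hlt, kuhnVertex_succ v r (by omega), add_right_inj] at heq
    have := congrFun heq (r.symm ⟨k + 1, hlt⟩)
    simp at this

lemma eq_kuhnReflection_of_gridHeight_eq {k : ℕ} (hk : k + 1 < n) {u : Fin n → ℤ}
    (hu : ∀ j ≤ n, j ≠ k + 1 → GridAdjacent u (kuhnVertex v r j))
    (hheight : gridHeight u = gridHeight v + (k + 1)) (hmem : u ∉ kuhnSimplex v r) :
    u = kuhnReflection v r (k + 1) := by
  obtain ⟨a, ha⟩ := exists_eq_add_single_of_le
    ((hu k (by omega) (by omega)).symm.le_and_le_add_one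
      (by rw [hheight, gridHeight_kuhnVertex v r (by omega)]; omega)).1
    (by rw [hheight, gridHeight_kuhnVertex v r (by omega), add_assoc])
  have hupper : u ≤ kuhnVertex v r (k + 2) := ((hu (k + 2) hk (by omega)).le_and_le_add_one
    (by rw [hheight, gridHeight_kuhnVertex v r hk]; push_cast; omega)).1
  have hle := hupper a
  rw [kuhnVertex_succ v r hk, kuhnVertex_succ v r (Nat.lt_of_succ_lt hk), ha] at hle
  rw [kuhnReflection_succ hk, ha]
  by_cases h₁ : a = r.symm ⟨k + 1, hk⟩
  · rw [h₁]
  · refine absurd ((mem_kuhnSimplex v r).2 ⟨k + 1, hk.le, ?_⟩) hmem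
    rw [kuhnVertex_succ v r (Nat.lt_of_succ_lt hk), ha]
    by_cases h₂ : a = r.symm ⟨k, by omega⟩
    · rw [h₂]
    · simp [h₁, h₂] at hle

lemma eq_kuhnReflection (hn : n ≠ 0) {k : ℕ} (hk : k ≤ n) {u : Fin n → ℤ}
    (hu : ∀ j ≤ n, j ≠ k → GridAdjacent u (kuhnVertex v r j)) (hmem : u ∉ kuhnSimplex v r) :
    u = kuhnReflection v r k := by
  have hvertex : ∀ j ≤ n, u ≠ kuhnVertex v r j := fun j hj h ↦
    hmem ((mem_kuhnSimplex v r).2 ⟨j, hj, h.symm⟩)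
  have hheight : ∀ j ≤ n, j ≠ k → gridHeight u ≠ gridHeight v + j := fun j hj hjk h ↦
    hvertex j hj ((hu j hj hjk).eq_of_gridHeight_eq (by rw [h, gridHeight_kuhnVertex v r hj]))
  have hlower : ∀ j ≤ n, j ≠ k → gridHeight v + j ≤ gridHeight u + n := fun j hj hjk ↦ by
    simpa [gridHeight_kuhnVertex v r hj] using (hu j hj hjk).gridHeight_le_add_card
  have hupper : ∀ j ≤ n, j ≠ k → gridHeight u ≤ gridHeight v + j + n := fun j hj hjk ↦ by
    simpa [gridHeight_kuhnVertex v r hj] using (hu j hj hjk).symm.gridHeight_le_add_card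
  obtain ⟨d, hd⟩ : ∃ d, gridHeight u = gridHeight v + d := ⟨_, (add_sub_cancel _ _).symm⟩
  have hd' : 0 ≤ d → d ≤ n → d = k := fun h₀ h₁ ↦ by
    by_contra hne
    exact hheight d.toNat (by omega) (by omega) (by omega)
  rcases Nat.eq_zero_or_pos k with rfl | hpos
  · have h₁ := hlower n le_rfl hn
    have h₂ := hupper 1 (by omega) one_ne_zero
    have hd₀ : d ≠ 0 := fun h ↦ hvertex 0 n.zero_le <| by
      have := (hu n le_rfl hn).eq_add_one (by simp [kuhnVertex_last, gridHeight_add_one, hd, h])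
      rwa [kuhnVertex_last, add_left_inj, ← kuhnVertex_zero v r, eq_comm] at this
    rw [kuhnReflection_zero]
    exact (hu 1 (by omega) one_ne_zero).symm.eq_add_one
      (by rw [gridHeight_kuhnVertex v r (by omega), Fintype.card_fin]; omega)
  have h₁ := hupper 0 n.zero_le hpos.ne
  rcases hk.eq_or_lt with rfl | hlt
  · have h₂ := hlower (k - 1) (by omega) (by omega)
    have hd₀ : d ≠ k := fun h ↦ hvertex k le_rfl <| by
      have := (hu 0 k.zero_le hn.symm).symm.eq_add_one (by simp [kuhnVertex_zero, hd, h])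
      rwa [kuhnVertex_zero, ← kuhnVertex_last v r] at this
    rw [kuhnReflection_last hn, eq_sub_iff_add_eq, eq_comm]
    exact (hu (k - 1) (by omega) (by omega)).eq_add_one
      (by rw [gridHeight_kuhnVertex v r (by omega), Fintype.card_fin]; omega)
  · have h₂ := hlower n le_rfl hlt.ne'
    obtain ⟨k, rfl⟩ := Nat.exists_eq_add_one.2 hpos
    exact eq_kuhnReflection_of_gridHeight_eq hlt hu (by omega) hmem

lemma IsGridClique.exists_opposite_vertex (hn : n ≠ 0) {τ : Finset (Fin n → ℤ)} (hτ : #τ = n)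
    {u : Fin n → ℤ} (hu : u ∉ τ) (hclique : IsGridClique (insert u τ)) :
    ∃ u', u' ≠ u ∧ u' ∉ τ ∧ IsGridClique (insert u' τ) ∧
      ∀ u'' ∉ τ, IsGridClique (insert u'' τ) → u'' = u ∨ u'' = u' := by
  obtain ⟨v, r, hS⟩ := hclique.exists_eq_kuhnSimplex (by rw [card_insert_of_notMem hu, hτ])
  obtain ⟨k, hk, rfl⟩ := (mem_kuhnSimplex v r).1 (hS ▸ mem_insert_self u τ)
  have hmem : ∀ j ≤ n, j ≠ k → kuhnVertex v r j ∈ τ := fun j hj hjk ↦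
    (mem_insert.1 (hS ▸ (mem_kuhnSimplex v r).2 ⟨j, hj, rfl⟩)).resolve_left fun h ↦
      hjk (injOn_kuhnVertex v r (by simpa using hj) (by simpa using hk) h)
  have hnotMem := kuhnReflection_notMem (v := v) (r := r) hn hk
  rw [← hS, mem_insert, not_or] at hnotMem
  refine ⟨kuhnReflection v r k, hnotMem.1, hnotMem.2,
    (hclique.mono (subset_insert _ _)).insert_of_gridAdjacent fun w hw ↦ ?_, fun u'' hu'' h ↦ ?_⟩
  · obtain ⟨j, hj, rfl⟩ := (mem_kuhnSimplex v r).1 (hS ▸ mem_insert_of_mem hw)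
    exact gridAdjacent_kuhnReflection hk hj fun h ↦ hu (h ▸ hw)
  · refine or_iff_not_imp_left.2 fun hne ↦ eq_kuhnReflection hn hk (fun j hj hjk ↦
      h _ (mem_insert_self _ _) _ (mem_insert_of_mem (hmem j hj hjk))) ?_
    rw [← hS, mem_insert, not_or]
    exact ⟨hne, hu''⟩

lemma le_card_inter_kuhnSimplex_swap (v : Fin n → ℤ) (r : Equiv.Perm (Fin n)) {k : ℕ}
    (hk : k + 1 < n) :
    n ≤ #(kuhnSimplex v r ∩
      kuhnSimplex v (r.trans (Equiv.swap ⟨k, Nat.lt_of_succ_lt hk⟩ ⟨k + 1, hk⟩))) := by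
  have hsub : ((range (n + 1)).erase (k + 1)).image (kuhnVertex v r) ⊆ kuhnSimplex v r ∩
      kuhnSimplex v (r.trans (Equiv.swap ⟨k, Nat.lt_of_succ_lt hk⟩ ⟨k + 1, hk⟩)) := by
    refine image_subset_iff.2 fun j hj ↦ ?_
    obtain ⟨hne, hj⟩ := mem_erase.1 hj
    exact mem_inter.2 ⟨mem_image_of_mem _ hj, mem_image.2 ⟨j, hj, kuhnVertex_swap hk hne⟩⟩
  refine le_trans (le_of_eq ?_) (card_le_card hsub)
  rw [card_image_of_injOn ((injOn_kuhnVertex v r).mono (erase_subset _ _)),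
    card_erase_of_mem (by simp; omega), card_range, Nat.add_sub_cancel]

lemma apply_kuhnSimplex_eq {α : Type*} {a : Finset (Fin n → ℤ) → α}
    (ha : ∀ r r', n ≤ #(kuhnSimplex v r ∩ kuhnSimplex v r') →
      a (kuhnSimplex v r) = a (kuhnSimplex v r')) (r : Equiv.Perm (Fin n)) :
    a (kuhnSimplex v r) = a (kuhnSimplex v 1) := by
  rcases n with - | m
  · rw [Subsingleton.elim r 1]
  suffices ∀ g s : Equiv.Perm (Fin (m + 1)), a (kuhnSimplex v (g * s)) = a (kuhnSimplex v s) by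
    simpa using this r 1
  intro g
  have hg : g ∈ Submonoid.closure (Set.range fun i : Fin m ↦ Equiv.swap i.castSucc i.succ) := by
    rw [Equiv.Perm.mclosure_swap_castSucc_succ]
    trivial
  induction hg using Submonoid.closure_induction with
  | mem g hg =>
    obtain ⟨i, rfl⟩ := hg
    exact fun s ↦ (ha s _ (le_card_inter_kuhnSimplex_swap v s (Nat.succ_lt_succ i.2))).symm
  | one => intro s; rw [one_mul]
  | mul g h _ _ ihg ihh => intro s; rw [mul_assoc, ihg, ihh]

end Kuhn

/-! ### Rounding to the grid -/

section Rounding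

variable {ι : Type*} [Fintype ι]

-- Among the shifts by multiples of `1 / (card ι + 1)`, each coordinate rules out at most one.
lemma exists_shift_forall_le_abs_sub_intCast (x : ι → ℝ) : ∃ s ∈ Set.Icc (0 : ℝ) 1,
    ∀ i, ∀ m : ℤ, 1 / (2 * (Fintype.card ι + 1)) ≤ |x i + s - m| := by
  set N := Fintype.card ι + 1 with hN
  have hNpos : (0 : ℝ) < N := by positivity
  obtain ⟨j, hj⟩ : ∃ j : ZMod N, ∀ i, ((-round (N * x i) : ℤ) : ZMod N) ≠ j := by
    by_contra! hsurj
    have := Fintype.card_le_of_surjective _ hsurj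
    rw [ZMod.card] at this
    omega
  refine ⟨j.val / N, ⟨by positivity, (div_le_one hNpos).2 (by exact_mod_cast j.val_lt.le)⟩,
    fun i m ↦ ?_⟩
  have hone : 1 ≤ |round (N * x i) + j.val - N * m| := by
    refine Int.one_le_abs fun h ↦ hj i ?_
    have hcast := congrArg (Int.cast : ℤ → ZMod N) h
    push_cast at hcast ⊢
    rw [ZMod.natCast_self, ZMod.natCast_zmod_val] at hcast
    linear_combination -hcast
  have hround := abs_sub_round (N * x i)
  have hscale : (N : ℝ) * (x i + j.val / N - m) =
      (N * x i - round (N * x i)) + ((round (N * x i) + j.val - N * m : ℤ) : ℝ) := by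
    push_cast
    field_simp
    ring
  have hle : 1 / 2 ≤ N * |x i + j.val / N - m| := by
    rw [← abs_of_pos hNpos, ← abs_mul, abs_of_pos hNpos, hscale, add_comm]
    have hcast : (1 : ℝ) ≤ |((round (N * x i) + j.val - N * m : ℤ) : ℝ)| := by exact_mod_cast hone
    linarith [abs_sub_abs_le_abs_add ((round (N * x i) + j.val - N * m : ℤ) : ℝ)
      (N * x i - round (N * x i))]
  rw [div_le_iff₀ (by positivity)]
  push_cast [hN] at hle ⊢
  linarith

lemma floor_add_eq_floor_add {x y s δ : ℝ} (hx : ∀ m : ℤ, δ ≤ |x + s - m|) (hxy : |x - y| < δ) :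
    ⌊x + s⌋ = ⌊y + s⌋ := by
  have hxy := abs_lt.1 hxy
  refine le_antisymm (Int.le_floor.2 ?_) (Int.le_floor.2 ?_)
  · have h := hx ⌊x + s⌋
    rw [abs_of_nonneg (sub_nonneg.2 (Int.floor_le _))] at h
    linarith
  · by_contra! hlt
    have h := hx ⌊y + s⌋
    rw [abs_of_neg (sub_neg.2 hlt)] at h
    linarith [Int.floor_le (y + s)]

-- Each point is shifted so that its coordinates avoid the discontinuities of the floor function.
lemma exists_gridRounding : ∃ rnd : (ι → ℝ) → ι → ℤ, (∀ x i, |x i - rnd x i| ≤ 1) ∧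
    ∀ x y : ι → ℝ, (∀ i, |x i - y i| < 1 / (2 * ((Fintype.card ι : ℝ) + 1))) →
      GridAdjacent (rnd x) (rnd y) := by
  choose s hs haway using exists_shift_forall_le_abs_sub_intCast (ι := ι)
  refine ⟨fun x i ↦ ⌊x i + s x⌋, fun x i ↦ ?_, fun x y hxy ↦ ?_⟩
  · rw [abs_le]
    constructor <;>
      linarith [Int.floor_le (x i + s x), Int.lt_floor_add_one (x i + s x), (hs x).1, (hs x).2]
  · have hadj : ∀ x y, (∀ i, |x i - y i| < 1 / (2 * ((Fintype.card ι : ℝ) + 1))) → s x ≤ s y →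
        GridAdjacent (fun i ↦ ⌊x i + s x⌋) (fun i ↦ ⌊y i + s y⌋) := by
      refine fun x y hxy hle ↦ .inl ⟨fun i ↦ ?_, fun i ↦ ?_⟩
      · exact (floor_add_eq_floor_add (haway x i) (hxy i)).le.trans (Int.floor_mono (by gcongr))
      · simp only [Pi.add_apply, Pi.one_apply, floor_add_eq_floor_add (haway x i) (hxy i),
          ← Int.floor_add_one]
        exact Int.floor_mono (by linarith [(hs x).1, (hs y).2])
    rcases le_total (s x) (s y) with h | h
    · exact hadj x y hxy h
    · exact (hadj y x (fun i ↦ by rw [abs_sub_comm]; exact hxy i) h).symm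

end Rounding

/-! ### Kuhn labels -/

section Label

variable {n : ℕ}

/-- The first negative coordinate of `u`, or `⊤` if there is none. The `n + 1` labels cut `ℝⁿ` into
cones meeting at the origin only. -/
noncomputable def kuhnLabel (u : Fin n → ℝ) : WithTop (Fin n) := ({i | u i < 0} : Finset _).min

lemma kuhnLabel_eq_top_iff {u : Fin n → ℝ} : kuhnLabel u = ⊤ ↔ ∀ i, 0 ≤ u i := by
  simp [kuhnLabel, Finset.min_eq_top, filter_eq_empty_iff]

lemma kuhnLabel_eq_coe_iff {u : Fin n → ℝ} {i : Fin n} :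
    kuhnLabel u = i ↔ u i < 0 ∧ ∀ j < i, 0 ≤ u j := by
  refine ⟨fun h ↦ ⟨(mem_filter.1 (mem_of_min h)).2, fun j hj ↦ ?_⟩, fun ⟨hi, hlt⟩ ↦ ?_⟩
  · by_contra! hneg
    exact hj.not_ge (min_le_of_eq (mem_filter.2 ⟨mem_univ j, hneg⟩) h)
  · refine le_antisymm (min_le (by simpa using hi)) (Finset.le_min fun j hj ↦ ?_)
    by_contra! hji
    exact (mem_filter.1 hj).2.not_ge (hlt j (WithTop.coe_lt_coe.1 hji))

lemma norm_le_of_forall_kuhnLabel {S : Set (Fin n → ℝ)} {δ : ℝ} (hδ : 0 ≤ δ)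
    (hS : ∀ u ∈ S, ∀ u' ∈ S, ‖u - u'‖ ≤ δ) (hlabel : ∀ i, ∃ u ∈ S, kuhnLabel u = i)
    {u : Fin n → ℝ} (hu : u ∈ S) : ‖u‖ ≤ δ := by
  refine (pi_norm_le_iff_of_nonneg hδ).2 fun i ↦ abs_le.2 ?_
  have hcoord : ∀ u' ∈ S, |u i - u' i| ≤ δ := fun u' hu' ↦
    (norm_le_pi_norm (u - u') i).trans (hS u hu u' hu')
  obtain ⟨a, ha, htop⟩ := hlabel ⊤
  obtain ⟨b, hb, hi⟩ := hlabel i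
  have ha' := abs_le.1 (hcoord a ha)
  have hb' := abs_le.1 (hcoord b hb)
  constructor <;> linarith [kuhnLabel_eq_top_iff.1 htop i, (kuhnLabel_eq_coe_iff.1 hi).1]

/-- The vertices of the grid of mesh `h`. -/
def gridPoint (h : ℝ) (v : Fin n → ℤ) : Fin n → ℝ := h • fun i ↦ (v i : ℝ)

/-- The centre of the cube with lowest corner `v` in the grid of mesh `h`. -/
noncomputable def gridCentre (h : ℝ) (v : Fin n → ℤ) : Fin n → ℝ := h • fun i ↦ (v i : ℝ) + 1 / 2

variable {h : ℝ} {v w : Fin n → ℤ}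

lemma gridPoint_injective (hh : 0 < h) : Function.Injective (gridPoint h (n := n)) := by
  intro v w hvw
  ext i
  simpa [gridPoint, hh.ne'] using congrFun hvw i

lemma norm_gridPoint_sub_gridPoint_le (hh : 0 < h) (hvw : GridAdjacent v w) :
    ‖gridPoint h v - gridPoint h w‖ ≤ h := by
  refine (pi_norm_le_iff_of_nonneg hh.le).2 fun i ↦ ?_
  have hi : |v i - w i| ≤ 1 := by
    refine abs_le.2 ?_
    rcases hvw with ⟨h₁, h₂⟩ | ⟨h₁, h₂⟩ <;>
    · have := h₁ i
      have := h₂ i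
      simp only [Pi.add_apply, Pi.one_apply] at this
      constructor <;> linarith
  have hi' : |(v i : ℝ) - w i| ≤ 1 := by exact_mod_cast hi
  simpa [gridPoint, ← mul_sub, abs_mul, abs_of_pos hh] using mul_le_mul_of_nonneg_left hi' hh.le

lemma norm_gridPoint_sub_gridCentre_le (hh : 0 < h) (h₁ : v ≤ w) (h₂ : w ≤ v + 1) :
    ‖gridPoint h w - gridCentre h v‖ ≤ h := by
  refine (pi_norm_le_iff_of_nonneg hh.le).2 fun i ↦ ?_
  have hi₁ : (v i : ℝ) ≤ w i := by exact_mod_cast h₁ i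
  have hi₂ : (w i : ℝ) ≤ v i + 1 := by exact_mod_cast h₂ i
  have hi : |(w i : ℝ) - (v i + 1 / 2)| ≤ 1 := abs_le.2 ⟨by linarith, by linarith⟩
  simpa [gridPoint, gridCentre, ← mul_sub, abs_mul, abs_of_pos hh] using
    mul_le_mul_of_nonneg_left hi hh.le

lemma exists_norm_gridCentre_sub_le (hh : 0 < h) (c : Fin n → ℝ) :
    ∃ v, ‖gridCentre h v - c‖ ≤ h := by
  refine ⟨fun i ↦ ⌊c i / h⌋, (pi_norm_le_iff_of_nonneg hh.le).2 fun i ↦ ?_⟩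
  have h₁ := Int.floor_le (c i / h)
  have h₂ := Int.lt_floor_add_one (c i / h)
  rw [le_div_iff₀ hh] at h₁
  rw [div_lt_iff₀ hh] at h₂
  simp only [gridCentre, Pi.sub_apply, Pi.smul_apply, smul_eq_mul, Real.norm_eq_abs]
  exact abs_le.2 ⟨by linarith, by linarith⟩

lemma gridPoint_sub_gridCentre_neg_iff (hh : 0 < h) (i : Fin n) :
    (gridPoint h w - gridCentre h v) i < 0 ↔ w i ≤ v i := by
  have hi : (gridPoint h w - gridCentre h v) i = h * (w i - (v i + 1 / 2)) := by
    simp [gridPoint, gridCentre, mul_sub]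
  rw [hi, ← smul_eq_mul, smul_neg_iff_of_pos_left hh]
  refine ⟨fun hlt ↦ ?_, fun hle ↦ ?_⟩
  · rw [← Int.lt_add_one_iff, ← Int.cast_lt (R := ℝ)]
    push_cast
    linarith
  · have : (w i : ℝ) ≤ v i := by exact_mod_cast hle
    linarith

lemma gridPoint_sub_gridCentre_nonneg_iff (hh : 0 < h) (i : Fin n) :
    0 ≤ (gridPoint h w - gridCentre h v) i ↔ v i < w i := by
  rw [← not_lt, gridPoint_sub_gridCentre_neg_iff hh, not_le]

lemma exists_kuhnLabel_kuhnSimplex_one (hh : 0 < h) (v : Fin n → ℤ) (l : WithTop (Fin n)) :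
    ∃ w ∈ kuhnSimplex v 1, kuhnLabel (gridPoint h w - gridCentre h v) = l := by
  induction l with
  | top =>
    refine ⟨kuhnVertex v 1 n, (mem_kuhnSimplex v 1).2 ⟨n, le_rfl, rfl⟩, ?_⟩
    simp [kuhnLabel_eq_top_iff, gridPoint_sub_gridCentre_nonneg_iff hh, kuhnVertex, -Pi.sub_apply]
  | coe i =>
    refine ⟨kuhnVertex v 1 i, (mem_kuhnSimplex v 1).2 ⟨i, i.2.le, rfl⟩, ?_⟩
    simp +contextual [kuhnLabel_eq_coe_iff, gridPoint_sub_gridCentre_neg_iff hh,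
      gridPoint_sub_gridCentre_nonneg_iff hh, kuhnVertex, -Pi.sub_apply]

lemma IsGridClique.eq_kuhnSimplex_one {σ : Finset (Fin n → ℤ)} (hσ : IsGridClique σ)
    (hcard : #σ = n + 1) (hh : 0 < h)
    (hlabel : ∀ l, ∃ w ∈ σ, kuhnLabel (gridPoint h w - gridCentre h v) = l) :
    σ = kuhnSimplex v 1 := by
  obtain ⟨v', r, rfl⟩ := hσ.exists_eq_kuhnSimplex hcard
  have htop : v ≤ v' := fun i ↦ by
    obtain ⟨w, hw, hl⟩ := hlabel ⊤
    obtain ⟨k, -, rfl⟩ := (mem_kuhnSimplex v' r).1 hw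
    have hlt := (gridPoint_sub_gridCentre_nonneg_iff hh i).1 (kuhnLabel_eq_top_iff.1 hl i)
    exact Int.lt_add_one_iff.1 (hlt.trans_le (kuhnVertex_le v' r k i))
  have hcoe (i) : ∃ k, kuhnVertex v' r k i ≤ v i ∧ ∀ j < i, v j < kuhnVertex v' r k j := by
    obtain ⟨w, hw, hl⟩ := hlabel i
    obtain ⟨k, -, rfl⟩ := (mem_kuhnSimplex v' r).1 hw
    rw [kuhnLabel_eq_coe_iff] at hl
    exact ⟨k, (gridPoint_sub_gridCentre_neg_iff hh i).1 hl.1, fun j hj ↦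
      (gridPoint_sub_gridCentre_nonneg_iff hh j).1 (hl.2 j hj)⟩
  obtain rfl : v' = v := le_antisymm (fun i ↦ by
    obtain ⟨k, hk, -⟩ := hcoe i
    exact (le_kuhnVertex v' r k i).trans hk) htop
  have hmono : StrictMono r := fun j i hji ↦ by
    obtain ⟨k, hi, hlt⟩ := hcoe i
    have hj := hlt j hji
    simp only [kuhnVertex] at hi hj
    split_ifs at hi hj <;> omega
  rw [r.monotone_iff.1 hmono.monotone, Equiv.Perm.one_def]

end Label

/-! ### Labels in a chart -/

/-- Any two points of `S` are at distance less than `ε`. -/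
def IsSmall {M : Type*} [PseudoMetricSpace M] (ε : ℝ) (S : Set M) : Prop :=
  ∀ x ∈ S, ∀ y ∈ S, dist x y < ε

lemma IsSmall.mono {M : Type*} [PseudoMetricSpace M] {ε ε' : ℝ} {S T : Set M} (hS : IsSmall ε S)
    (hε : ε ≤ ε') (hTS : T ⊆ S) : IsSmall ε' T :=
  fun x hx y hy ↦ (hS x (hTS hx) y (hTS hy)).trans_le hε

/-- An `n`-dimensional chain whose simplices have vertices at mutual distances less than `ε`. -/
def IsFine {M : Type*} [PseudoMetricSpace M] (n : ℕ) (ε : ℝ) (z : Mod2Chain M) : Prop :=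
  ∀ σ ∈ z.support, #σ = n + 1 ∧ IsSmall ε (σ : Set M)

namespace IsFine

variable {M : Type*} [PseudoMetricSpace M] {n : ℕ} {ε ε' : ℝ} {z w : Mod2Chain M}

lemma mono (hz : IsFine n ε z) (hε : ε ≤ ε') : IsFine n ε' z :=
  fun σ hσ ↦ ⟨(hz σ hσ).1, (hz σ hσ).2.mono hε subset_rfl⟩

lemma add (hz : IsFine n ε z) (hw : IsFine n ε w) : IsFine n ε (z + w) := by
  classical
  exact fun σ hσ ↦ (mem_union.1 (Finsupp.support_add hσ)).elim (hz σ) (hw σ)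

variable [DecidableEq M]

lemma nonempty_of_mem_support_boundary (hz : IsFine n ε z) (hn : n ≠ 0) {τ : Finset M}
    (hτ : τ ∈ (Mod2Chain.boundary z).support) : τ.Nonempty := by
  obtain ⟨σ, hσ, -, hcard⟩ :=
    Mod2Chain.exists_mem_support_of_boundary_ne_zero (Finsupp.mem_support_iff.1 hτ)
  have := (hz σ hσ).1
  exact card_pos.1 (by lia)

lemma map (hz : IsFine n ε z) {p : M → M} {m : ℝ} (hp : ∀ x, dist (p x) x < m) (hεm : ε ≤ m) :
    IsFine n (3 * m) (Mod2Chain.map p z) := fun _ hpσ ↦ by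
  obtain ⟨σ, hσ, rfl, hcard⟩ :=
    Mod2Chain.exists_mem_support_of_map_ne_zero (Finsupp.mem_support_iff.1 hpσ)
  refine ⟨hcard.trans (hz σ hσ).1, ?_⟩
  rw [coe_image]
  rintro _ ⟨x, hx, rfl⟩ _ ⟨y, hy, rfl⟩
  linarith [dist_triangle4_right (p x) (p y) x y, hp x, hp y, (hz σ hσ).2 x hx y hy]

end IsFine

lemma apply_eq_of_isPreconnected {X α : Type*} [PseudoMetricSpace X] {s : Set X}
    (hs : IsPreconnected s) {f : X → α} {η : ℝ} (hη : 0 < η)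
    (hf : ∀ x ∈ s, ∀ y ∈ s, dist x y < η → f x = f y) {x y : X} (hx : x ∈ s) (hy : y ∈ s) :
    f x = f y := by
  let _ : TopologicalSpace α := ⊥
  have : DiscreteTopology α := ⟨rfl⟩
  refine hs.constant (fun a ha ↦ ?_) hx hy
  refine (continuousWithinAt_const (b := f a)).congr_of_eventuallyEq ?_ rfl
  filter_upwards [self_mem_nhdsWithin, mem_nhdsWithin_of_mem_nhds (Metric.ball_mem_nhds a hη)] with
    b hb hab using hf b hb a ha hab

lemma eventually_forall_dist_lt {M N : Type*} [PseudoMetricSpace M] [PseudoMetricSpace N]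
    (e : OpenPartialHomeomorph M N) {K : Set M} (hK : IsCompact K) (hKe : K ⊆ e.source) {κ : ℝ}
    (hκ : 0 < κ) :
    ∀ᶠ η in 𝓝[>] (0 : ℝ), ∀ x ∈ K, ∀ y, dist x y < η → y ∈ e.source ∧ dist (e x) (e y) < κ := by
  have hunif := hK.uniformContinuousAt_of_continuousAt e (fun a ha ↦ e.continuousAt (hKe ha))
    (Metric.dist_mem_uniformity hκ)
  obtain ⟨η₁, hη₁, hdist⟩ := Metric.mem_uniformity_dist.1 hunif
  obtain ⟨η₂, hη₂, hsource⟩ := hK.exists_thickening_subset_open e.open_source hKe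
  filter_upwards [Ioo_mem_nhdsGT (lt_min hη₁ hη₂)] with η hη x hx y hxy
  exact ⟨hsource (Metric.mem_thickening_iff.2
    ⟨x, hx, dist_comm x y ▸ hxy.trans (hη.2.trans_le (min_le_right _ _))⟩),
    hdist (hxy.trans (hη.2.trans_le (min_le_left _ _))) hx⟩

section ChartLabel

variable {M : Type*} [PseudoMetricSpace M] {n : ℕ} (e : OpenPartialHomeomorph M (Fin n → ℝ))

/-- On the preimage of the ball of radius `4`, points at distance less than `r` have coordinates at
distance less than `κ`. -/
def IsChartModulus (κ r : ℝ) : Prop :=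
  ∀ x ∈ e.source, ‖e x‖ ≤ 4 → ∀ y, dist x y < r → y ∈ e.source ∧ ‖e x - e y‖ < κ

/-- On the ball of radius `4`, coordinates at distance less than `κ` belong to points at distance
less than `r`. -/
def IsChartSymmModulus (r κ : ℝ) : Prop :=
  ∀ c : Fin n → ℝ, ‖c‖ ≤ 4 → ∀ u, ‖c - u‖ < κ → dist (e.symm c) (e.symm u) < r

variable {e}

lemma eventually_isChartModulus (he : Metric.closedBall 0 4 ⊆ e.target) {κ : ℝ} (hκ : 0 < κ) :
    ∀ᶠ r in 𝓝[>] (0 : ℝ), IsChartModulus e κ r := by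
  have hK : IsCompact (e.symm '' Metric.closedBall 0 4) :=
    (isCompact_closedBall _ _).image_of_continuousOn (e.continuousOn_symm.mono he)
  have hKe : e.symm '' Metric.closedBall 0 4 ⊆ e.source :=
    (Set.image_mono he).trans e.symm_image_target_eq_source.subset
  filter_upwards [eventually_forall_dist_lt e hK hKe hκ] with r hr x hx hx4 y hxy
  rw [← dist_eq_norm]
  exact hr x ⟨e x, by simpa using hx4, e.left_inv hx⟩ y hxy

lemma eventually_isChartSymmModulus (he : Metric.closedBall 0 4 ⊆ e.target) {r : ℝ} (hr : 0 < r) :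
    ∀ᶠ κ in 𝓝[>] (0 : ℝ), IsChartSymmModulus e r κ := by
  filter_upwards [eventually_forall_dist_lt e.symm (isCompact_closedBall 0 4) he hr] with κ hκ c hc
    u hcu
  exact (hκ c (by simpa using hc) u (dist_eq_norm c u ▸ hcu)).2

lemma IsChartModulus.mono {κ κ' r r' : ℝ} (hr : IsChartModulus e κ r) (hκ : κ ≤ κ') (hr' : r' ≤ r) :
    IsChartModulus e κ' r' :=
  fun x hx hx4 y hxy ↦ (hr x hx hx4 y (hxy.trans_le hr')).imp_right fun h ↦ h.trans_le hκ

lemma IsChartSymmModulus.mono {r r' κ : ℝ} (hκ : IsChartSymmModulus e r κ) (hr : r ≤ r') :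
    IsChartSymmModulus e r' κ :=
  fun c hc u hcu ↦ (hκ c hc u hcu).trans_le hr

lemma IsChartModulus.apply_of_dist_symm_lt {κ r : ℝ} (hr : IsChartModulus e κ r)
    (he : Metric.closedBall 0 4 ⊆ e.target) {c : Fin n → ℝ} (hc : ‖c‖ ≤ 4) {y : M}
    (hy : dist y (e.symm c) < r) : y ∈ e.source ∧ ‖e y - c‖ < κ := by
  have hct : c ∈ e.target := he (by simpa using hc)
  rw [dist_comm] at hy
  simpa only [e.right_inv hct, norm_sub_rev c] using
    hr (e.symm c) (e.map_target hct) (by rwa [e.right_inv hct]) y hy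

variable (e)

open Classical in
/-- The Kuhn label of `y`, seen in the chart `e` from the centre `c`, or `none` outside the
preimage of the ball of radius `4`. -/
noncomputable def chartLabel (c : Fin n → ℝ) (y : M) : Option (WithTop (Fin n)) :=
  if y ∈ e.source ∧ ‖e y‖ ≤ 4 then some (kuhnLabel (e y - c)) else none

variable {e}

lemma chartLabel_eq_some_iff {c : Fin n → ℝ} {y : M} {i : WithTop (Fin n)} :
    chartLabel e c y = some i ↔ (y ∈ e.source ∧ ‖e y‖ ≤ 4) ∧ kuhnLabel (e y - c) = i := by
  simp [chartLabel]

lemma chartLabel_ne_none_iff {c : Fin n → ℝ} {y : M} :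
    chartLabel e c y ≠ none ↔ y ∈ e.source ∧ ‖e y‖ ≤ 4 := by
  simp [chartLabel]

variable (e) in
/-- At scale `η`, the labels of the chart `e` seen from `c`, or from a centre `c'` near `c`, all
occur only within `r` of the point with coordinates `c`. -/
def LocalizesLabels (r η : ℝ) : Prop :=
  ∀ c c' : Fin n → ℝ, ‖c‖ ≤ 2 → ‖c - c'‖ < η → ∀ S : Set M, IsSmall η S →
    (∀ i : WithTop (Fin n), ∃ y ∈ S, chartLabel e c y = some i ∨ chartLabel e c' y = some i) →
    ∀ y ∈ S, dist y (e.symm c) < r ∧ chartLabel e c y ≠ none ∧ chartLabel e c' y ≠ none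

lemma eventually_localizesLabels (he : Metric.closedBall 0 4 ⊆ e.target) {r : ℝ} (hr : 0 < r) :
    ∀ᶠ η in 𝓝[>] (0 : ℝ), LocalizesLabels e r η := by
  obtain ⟨κ, hκ, hκ₀, hκ₁⟩ := ((eventually_isChartSymmModulus he hr).and
    (Ioo_mem_nhdsGT (zero_lt_two' ℝ))).exists
  have hκ₅ : 0 < κ / 5 := by positivity
  filter_upwards [eventually_isChartModulus he hκ₅, Ioo_mem_nhdsGT hκ₅] with η hη hη' c c' hc hcc' S
    hS hall y hy
  let U : Set (Fin n → ℝ) := {u | ∃ x ∈ S, (x ∈ e.source ∧ ‖e x‖ ≤ 4) ∧ ∃ b, ‖c - b‖ < κ / 5 ∧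
    e x - b = u}
  have hUsmall : ∀ u ∈ U, ∀ u' ∈ U, ‖u - u'‖ ≤ 3 * (κ / 5) := by
    rintro _ ⟨x, hx, hx', b, hb, rfl⟩ _ ⟨x', hx'', -, b', hb', rfl⟩
    have hxx' := (hη x hx'.1 hx'.2 x' (hS x hx x' hx'')).2
    rw [show e x - b - (e x' - b') = e x - e x' + (c - b) - (c - b') by abel]
    linarith [norm_sub_le (e x - e x' + (c - b)) (c - b'), norm_add_le (e x - e x') (c - b)]
  have hUlabel (i : WithTop (Fin n)) : ∃ u ∈ U, kuhnLabel u = i := by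
    obtain ⟨x, hx, hlabel⟩ := hall i
    simp only [chartLabel_eq_some_iff, ← and_or_left] at hlabel
    obtain ⟨b, hb, hi⟩ : ∃ b, ‖c - b‖ < κ / 5 ∧ kuhnLabel (e x - b) = i :=
      hlabel.2.elim (fun h ↦ ⟨c, by simpa using hκ₅, h⟩) fun h ↦ ⟨c', hcc'.trans hη'.2, h⟩
    exact ⟨_, ⟨x, hx, hlabel.1, b, hb, rfl⟩, hi⟩
  obtain ⟨_, ⟨x, hx, hx', b, hb, rfl⟩, -⟩ := hUlabel ⊤
  have hxb : ‖e x - b‖ ≤ 3 * (κ / 5) := norm_le_of_forall_kuhnLabel (by positivity) hUsmall hUlabel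
    ⟨x, hx, hx', b, hb, rfl⟩
  obtain ⟨hy_source, hxy⟩ := hη x hx'.1 hx'.2 y (hS x hx y hy)
  have hcy : ‖c - e y‖ < κ := by
    rw [show c - e y = c - b - (e x - b) + (e x - e y) by abel]
    linarith [norm_add_le (c - b - (e x - b)) (e x - e y), norm_sub_le (c - b) (e x - b)]
  have hy4 : ‖e y‖ ≤ 4 := by linarith [norm_le_norm_add_norm_sub c (e y)]
  have hdist := hκ c (by linarith) (e y) hcy
  rw [e.left_inv hy_source, dist_comm] at hdist
  exact ⟨hdist, chartLabel_ne_none_iff.2 ⟨hy_source, hy4⟩,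
    chartLabel_ne_none_iff.2 ⟨hy_source, hy4⟩⟩

namespace LocalizesLabels

open Mod2Chain

variable {r η : ℝ} {c c' : Fin n → ℝ} {z : Mod2Chain M}

lemma dist_lt_of_rainbow (hloc : LocalizesLabels e r η) (hη : 0 < η) (hc : ‖c‖ ≤ 2)
    {σ : Finset M} (hσ : IsSmall η (σ : Set M))
    (hlabel : ∀ i, ∃ x ∈ σ, chartLabel e c x = some i) {x : M} (hx : x ∈ σ) :
    dist x (e.symm c) < r :=
  (hloc c c hc (by simpa using hη) σ hσ (by simpa using hlabel) x hx).1

lemma exists_mem_support_of_degree_ne_zero (hloc : LocalizesLabels e r η) (hη : 0 < η)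
    (hc : ‖c‖ ≤ 2) (hz : IsFine n η z) (hdeg : degree (chartLabel e c) z ≠ 0) :
    ∃ σ ∈ z.support, ∀ x ∈ σ, dist x (e.symm c) < r := by
  obtain ⟨σ, hσ, hlabel⟩ := exists_rainbow_of_degree_ne_zero hdeg
  exact ⟨σ, hσ, fun x ↦ hloc.dist_lt_of_rainbow hη hc (hz σ hσ).2 hlabel⟩

lemma degree_comp_eq {X : Type*} [DecidableEq X] (hloc : LocalizesLabels e r η) (hc : ‖c‖ ≤ 2)
    (hcc' : ‖c - c'‖ < η) {f g : X → M} {z : Mod2Chain X}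
    (hsmall : ∀ σ ∈ z.support, IsSmall η (f '' σ ∪ g '' σ))
    (hboundary : ∀ τ ∈ (boundary z).support, ∃ x ∈ τ, r ≤ dist (f x) (e.symm c)) :
    degree (chartLabel e c ∘ f) z = degree (chartLabel e c' ∘ g) z := by
  have hnear {σ : Finset X} (hσ : IsSmall η (f '' (σ : Set X) ∪ g '' σ)) (hall : ∀ i,
      ∃ x ∈ σ, (chartLabel e c ∘ f) x ≠ some i → (chartLabel e c' ∘ g) x = some i) :=
    hloc c c' hc hcc' _ hσ fun i ↦ by
      obtain ⟨x, hx, hi⟩ := hall i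
      by_cases hf : (chartLabel e c ∘ f) x = some i
      · exact ⟨f x, .inl ⟨x, hx, rfl⟩, .inl hf⟩
      · exact ⟨g x, .inr ⟨x, hx, rfl⟩, .inr (hi hf)⟩
  refine degree_eq_of_areHomotopic ⟨fun σ hσ ↦ ?_, fun τ hτ ↦ ?_⟩ <;> by_contra! hcon
  · have hσ' := hnear (hsmall σ hσ) fun i ↦ hcon (some i)
    obtain ⟨x, hx, hnone⟩ := hcon none
    exact (hσ' (g x) (.inr ⟨x, hx, rfl⟩)).2.2 (hnone (hσ' (f x) (.inl ⟨x, hx, rfl⟩)).2.1)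
  · obtain ⟨σ, hσ, hτσ, -⟩ :=
      exists_mem_support_of_boundary_ne_zero (Finsupp.mem_support_iff.1 hτ)
    have hτ' := hnear ((hsmall σ hσ).mono le_rfl
      (Set.union_subset_union (Set.image_mono hτσ) (Set.image_mono hτσ))) hcon
    obtain ⟨x, hx, hfar⟩ := hboundary τ hτ
    exact hfar.not_gt (hτ' (f x) (.inl ⟨x, hx, rfl⟩)).1

lemma degree_comp_eq_zero {X : Type*} (hloc : LocalizesLabels e r η) (hη : 0 < η)
    (hc : ‖c‖ ≤ 2) {f : X → M} {z : Mod2Chain X} (hsmall : ∀ σ ∈ z.support, IsSmall η (f '' σ))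
    (hfar : ∀ x, r ≤ dist (f x) (e.symm c)) : degree (chartLabel e c ∘ f) z = 0 := by
  classical
  by_contra hne
  obtain ⟨σ, hσ, hrainbow⟩ := exists_rainbow_of_degree_ne_zero hne
  obtain ⟨x, hx, -⟩ := hrainbow ⊤
  refine (hfar x).not_gt (hloc.dist_lt_of_rainbow hη hc (σ := σ.image f)
    (by simpa using hsmall σ hσ) (fun i ↦ ?_) (mem_image_of_mem f hx))
  obtain ⟨y, hy, hi⟩ := hrainbow i
  exact ⟨f y, mem_image_of_mem f hy, hi⟩

variable [DecidableEq M]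

lemma degree_eq_of_norm_sub_lt (hloc : LocalizesLabels e r η) (hc : ‖c‖ ≤ 2) (hcc' : ‖c - c'‖ < η)
    (hz : IsFine n η z) (hboundary : ∀ τ ∈ (boundary z).support, ∃ x ∈ τ, r ≤ dist x (e.symm c)) :
    degree (chartLabel e c) z = degree (chartLabel e c') z :=
  hloc.degree_comp_eq (f := id) (g := id) hc hcc' (fun σ hσ ↦ by simpa using (hz σ hσ).2) hboundary

lemma degree_eq_of_isPreconnected (hloc : LocalizesLabels e r η) (hη : 0 < η)
    {B : Set (Fin n → ℝ)} (hB : IsPreconnected B) (hB2 : ∀ b ∈ B, ‖b‖ ≤ 2) (hz : IsFine n η z)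
    (hboundary : ∀ b ∈ B, ∀ τ ∈ (boundary z).support, ∃ x ∈ τ, r ≤ dist x (e.symm b))
    (hc : c ∈ B) (hc' : c' ∈ B) : degree (chartLabel e c) z = degree (chartLabel e c') z :=
  apply_eq_of_isPreconnected hB hη (fun b hb b' _ hbb' ↦
    hloc.degree_eq_of_norm_sub_lt (hB2 b hb) (dist_eq_norm b b' ▸ hbb') hz (hboundary b hb)) hc hc'

end LocalizesLabels

end ChartLabel

/-! ### Grid chains in a chart -/

section GridSimplices

variable {n : ℕ} {h R : ℝ}

/-- The `n`-simplices of the Kuhn triangulation of mesh `h` inside the ball of radius `R`. -/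
def gridSimplices (n : ℕ) (h R : ℝ) : Set (Finset (Fin n → ℤ)) :=
  {ς | IsGridClique ς ∧ #ς = n + 1 ∧ ∀ v ∈ ς, ‖gridPoint h v‖ ≤ R}

lemma gridSimplices_mono {R' : ℝ} (hR : R ≤ R') : gridSimplices n h R ⊆ gridSimplices n h R' :=
  fun _ hς ↦ ⟨hς.1, hς.2.1, fun v hv ↦ (hς.2.2 v hv).trans hR⟩

lemma gridSimplices_finite (hh : 0 < h) : (gridSimplices n h R).Finite := by
  have hfin : {v : Fin n → ℤ | ‖gridPoint h v‖ ≤ R}.Finite := by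
    refine (Set.finite_Icc (fun _ ↦ -⌊R / h⌋) fun _ ↦ ⌊R / h⌋).subset fun v hv ↦ ?_
    have hcoord (i) : |v i| ≤ ⌊R / h⌋ := by
      have hi := (norm_le_pi_norm (gridPoint h v) i).trans hv
      rw [Int.le_floor, le_div_iff₀' hh]
      simpa [gridPoint, abs_mul, abs_of_pos hh] using hi
    exact ⟨fun i ↦ (abs_le.1 (hcoord i)).1, fun i ↦ (abs_le.1 (hcoord i)).2⟩
  exact hfin.toFinset.powerset.finite_toSet.subset fun ς hς ↦
    mem_powerset.2 fun v hv ↦ hfin.mem_toFinset.2 (hς.2.2 v hv)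

lemma IsGridClique.mem_gridSimplices {ς : Finset (Fin n → ℤ)} (hς : IsGridClique ς)
    (hcard : #ς = n + 1) (hh : 0 < h) {v : Fin n → ℤ} (hv : v ∈ ς) (hR : ‖gridPoint h v‖ + h ≤ R) :
    ς ∈ gridSimplices n h R :=
  ⟨hς, hcard, fun w hw ↦ by
    linarith [norm_le_norm_add_norm_sub (gridPoint h v) (gridPoint h w),
      norm_gridPoint_sub_gridPoint_le hh (hς v hv w hw)]⟩

lemma kuhnSimplex_mem_gridSimplices (hh : 0 < h) {v : Fin n → ℤ} (r : Equiv.Perm (Fin n))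
    (hR : ‖gridCentre h v‖ + h ≤ R) : kuhnSimplex v r ∈ gridSimplices n h R :=
  ⟨isGridClique_kuhnSimplex v r, card_kuhnSimplex v r, fun w hw ↦ by
    obtain ⟨k, -, rfl⟩ := (mem_kuhnSimplex v r).1 hw
    linarith [norm_le_norm_add_norm_sub' (gridPoint h (kuhnVertex v r k)) (gridCentre h v),
      norm_gridPoint_sub_gridCentre_le hh (le_kuhnVertex v r k) (kuhnVertex_le v r k)]⟩

lemma exists_gridRounding_of_mesh (n : ℕ) (hh : 0 < h) :
    ∃ q : (Fin n → ℝ) → Fin n → ℤ, (∀ x, ‖gridPoint h (q x) - x‖ ≤ h) ∧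
      ∃ κ > 0, ∀ x y, ‖x - y‖ < κ → GridAdjacent (q x) (q y) := by
  obtain ⟨rnd, hnear, hadj⟩ := exists_gridRounding (ι := Fin n)
  refine ⟨fun x ↦ rnd (h⁻¹ • x), fun x ↦ (pi_norm_le_iff_of_nonneg hh.le).2 fun i ↦ ?_,
    h * (1 / (2 * ((Fintype.card (Fin n) : ℝ) + 1))), by positivity, fun x y hxy ↦ hadj _ _
      fun i ↦ ?_⟩
  · have hi := mul_le_mul_of_nonneg_left (hnear (h⁻¹ • x) i) hh.le
    rw [abs_sub_comm, ← abs_of_pos hh, ← abs_mul, abs_of_pos hh, mul_sub] at hi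
    simpa [gridPoint, hh.ne'] using hi
  · have hi := (norm_le_pi_norm (x - y) i).trans_lt hxy
    rw [← inv_mul_lt_iff₀ hh, ← abs_of_pos (inv_pos.2 hh), Real.norm_eq_abs, ← abs_mul] at hi
    simpa [mul_sub, abs_of_pos hh] using hi

end GridSimplices

section GridChain

variable {M : Type*} [PseudoMetricSpace M] {n : ℕ} {e : OpenPartialHomeomorph M (Fin n → ℝ)}
  {h : ℝ} {v : Fin n → ℤ}

variable (e h) in
/-- The point of `M` whose coordinates in the chart `e` are those of the grid vertex `v`. -/
def chartGridPoint (v : Fin n → ℤ) : M := e.symm (gridPoint h v)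

lemma chartGridPoint_mem_source (he : Metric.closedBall 0 4 ⊆ e.target)
    (hv : ‖gridPoint h v‖ ≤ 4) : chartGridPoint e h v ∈ e.source :=
  e.map_target (he (by simpa using hv))

lemma apply_chartGridPoint (he : Metric.closedBall 0 4 ⊆ e.target) (hv : ‖gridPoint h v‖ ≤ 4) :
    e (chartGridPoint e h v) = gridPoint h v :=
  e.right_inv (he (by simpa using hv))

lemma injOn_chartGridPoint (he : Metric.closedBall 0 4 ⊆ e.target) (hh : 0 < h) :
    Set.InjOn (chartGridPoint e h) {v | ‖gridPoint h v‖ ≤ 4} := fun v hv w hw hvw ↦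
  gridPoint_injective hh <| by
    rw [← apply_chartGridPoint he hv, hvw, apply_chartGridPoint he hw]

lemma chartLabel_chartGridPoint (he : Metric.closedBall 0 4 ⊆ e.target) {c : Fin n → ℝ}
    (hv : ‖gridPoint h v‖ ≤ 4) :
    chartLabel e c (chartGridPoint e h v) = some (kuhnLabel (gridPoint h v - c)) := by
  rw [chartLabel_eq_some_iff, apply_chartGridPoint he hv]
  exact ⟨⟨chartGridPoint_mem_source he hv, hv⟩, rfl⟩

lemma dist_chartGridPoint_lt {m κ : ℝ} (hm : IsChartSymmModulus e m κ) (hhκ : h < κ) {x : M}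
    (hx : x ∈ e.source) (hx4 : ‖e x‖ ≤ 4) (hv : ‖gridPoint h v - e x‖ ≤ h) :
    dist (chartGridPoint e h v) x < m := by
  have hdist := hm (e x) hx4 (gridPoint h v) (norm_sub_rev (e x) _ ▸ hv.trans_lt hhκ)
  rwa [e.left_inv hx, dist_comm] at hdist

variable [DecidableEq M]

variable (e h) in
/-- The simplex of `M` that corresponds to the simplex `ς` of the grid under the chart `e`. -/
def chartSimplex (ς : Finset (Fin n → ℤ)) : Finset M := ς.image (chartGridPoint e h)

variable {ς ς' τ : Finset (Fin n → ℤ)}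

lemma chartGridPoint_mem_chartSimplex (hv : v ∈ ς) : chartGridPoint e h v ∈ chartSimplex e h ς :=
  mem_image_of_mem _ hv

lemma card_chartSimplex (he : Metric.closedBall 0 4 ⊆ e.target) (hh : 0 < h)
    (hς : ∀ v ∈ ς, ‖gridPoint h v‖ ≤ 4) : #(chartSimplex e h ς) = #ς :=
  card_image_of_injOn ((injOn_chartGridPoint he hh).mono hς)

lemma chartSimplex_subset_chartSimplex_iff (he : Metric.closedBall 0 4 ⊆ e.target) (hh : 0 < h)
    (hτ : ∀ v ∈ τ, ‖gridPoint h v‖ ≤ 4) (hς : ∀ v ∈ ς, ‖gridPoint h v‖ ≤ 4) :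
    chartSimplex e h τ ⊆ chartSimplex e h ς ↔ τ ⊆ ς := by
  rw [← coe_subset, chartSimplex, chartSimplex, coe_image, coe_image,
    (injOn_chartGridPoint he hh).image_subset_image_iff hτ hς, coe_subset]

lemma isSmall_chartSimplex {m κ : ℝ} (he : Metric.closedBall 0 4 ⊆ e.target) (hh : 0 < h)
    (hm : IsChartSymmModulus e m κ) (hhκ : h < κ) (hς : ς ∈ gridSimplices n h 4) :
    IsSmall m (chartSimplex e h ς : Set M) := by
  simp only [chartSimplex, coe_image]
  rintro _ ⟨v, hv, rfl⟩ _ ⟨w, hw, rfl⟩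
  have hw4 := hς.2.2 w hw
  refine dist_chartGridPoint_lt hm hhκ (chartGridPoint_mem_source he hw4) ?_ ?_ <;>
    rw [apply_chartGridPoint he hw4]
  exacts [hw4, norm_gridPoint_sub_gridPoint_le hh (hς.1 v hv w hw)]

lemma isFine_of_forall_exists_chartSimplex_eq {m κ : ℝ} (he : Metric.closedBall 0 4 ⊆ e.target)
    (hh : 0 < h) (hm : IsChartSymmModulus e m κ) (hhκ : h < κ) {z : Mod2Chain M}
    (hz : ∀ σ ∈ z.support, ∃ ς ∈ gridSimplices n h 4, chartSimplex e h ς = σ) : IsFine n m z := by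
  intro σ hσ
  obtain ⟨ς, hς, rfl⟩ := hz σ hσ
  exact ⟨(card_chartSimplex he hh hς.2.2).trans hς.2.1, isSmall_chartSimplex he hh hm hhκ hς⟩

variable (e h) in
/-- A chain whose simplices near the preimage of the ball of radius `3` are simplices of the grid of
mesh `h` in the chart `e`. -/
def IsGridChain (y : Mod2Chain M) : Prop :=
  ∀ σ ∈ y.support, ∀ x ∈ σ, x ∈ e.source → ‖e x‖ ≤ 3 →
    ∃ ς ∈ gridSimplices n h 4, chartSimplex e h ς = σ

namespace IsGridChain

open Mod2Chain

variable {y w : Mod2Chain M}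

lemma add (hy : IsGridChain e h y) (hw : IsGridChain e h w) : IsGridChain e h (y + w) :=
  fun σ hσ ↦ (mem_union.1 (Finsupp.support_add hσ)).elim (hy σ) (hw σ)

lemma exists_chartSimplex_insert_eq (hy : IsGridChain e h y)
    (he : Metric.closedBall 0 4 ⊆ e.target) (hh : 0 < h) (hτ : #τ = n)
    (hτ4 : ∀ w ∈ τ, ‖gridPoint h w‖ ≤ 4) (hv : v ∈ τ) (hv3 : ‖gridPoint h v‖ ≤ 3) {σ : Finset M}
    (hσ : σ ∈ y.support) (hτσ : chartSimplex e h τ ⊆ σ) :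
    ∃ u ∉ τ, IsGridClique (insert u τ) ∧ chartSimplex e h (insert u τ) = σ := by
  obtain ⟨ς, hς, rfl⟩ := hy σ hσ _ (hτσ (chartGridPoint_mem_chartSimplex hv))
    (chartGridPoint_mem_source he (hτ4 v hv)) (by rwa [apply_chartGridPoint he (hτ4 v hv)])
  have hsub := (chartSimplex_subset_chartSimplex_iff he hh hτ4 hς.2.2).1 hτσ
  obtain ⟨u, hu, rfl⟩ := (covBy_iff_card_sdiff_eq_one.2
    ⟨hsub, by rw [card_sdiff_of_subset hsub, hς.2.1, hτ]; omega⟩).exists_finset_insert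
  exact ⟨u, hu, hς.1, rfl⟩

lemma boundary_apply (hy : IsGridChain e h y) (he : Metric.closedBall 0 4 ⊆ e.target) (hh : 0 < h)
    (hh1 : h ≤ 1) (hτ : #τ = n) (hv : v ∈ τ) (hv3 : ‖gridPoint h v‖ ≤ 3) {u u' : Fin n → ℤ}
    (huu' : u ≠ u') (hu : u ∉ τ) (hu' : u' ∉ τ) (hclique : IsGridClique (insert u τ))
    (hclique' : IsGridClique (insert u' τ)) :
    boundary y (chartSimplex e h τ) =
      y (chartSimplex e h (insert u τ)) + y (chartSimplex e h (insert u' τ)) := by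
  have hle {u w : Fin n → ℤ} (hclique : IsGridClique (insert u τ)) (hw : w ∈ insert u τ) :
      ‖gridPoint h w‖ ≤ 4 := by
    linarith [norm_le_norm_add_norm_sub (gridPoint h v) (gridPoint h w),
      norm_gridPoint_sub_gridPoint_le hh (hclique v (mem_insert_of_mem hv) w hw)]
  have hτ4 : ∀ w ∈ τ, ‖gridPoint h w‖ ≤ 4 := fun w hw ↦ hle hclique (mem_insert_of_mem hw)
  have hnotMem {u : Fin n → ℤ} (hu : u ∉ τ) (hclique : IsGridClique (insert u τ)) :
      chartGridPoint e h u ∉ chartSimplex e h τ := fun hmem ↦ by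
    obtain ⟨w, hw, hwu⟩ := mem_image.1 hmem
    exact hu (injOn_chartGridPoint he hh (hτ4 w hw) (hle hclique (mem_insert_self u τ)) hwu ▸ hw)
  rw [chartSimplex, chartSimplex, chartSimplex, image_insert, image_insert]
  refine boundary_apply_eq_add (fun heq ↦ huu' ?_) (hnotMem hu hclique) (hnotMem hu' hclique') ?_
  · exact injOn_chartGridPoint he hh (hle hclique (mem_insert_self u τ))
      (hle hclique' (mem_insert_self u' τ)) heq
  intro σ hσ hτσ _
  obtain ⟨u'', hu'', hclique'', rfl⟩ := hy.exists_chartSimplex_insert_eq he hh hτ hτ4 hv hv3 hσ hτσ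
  have hn : n ≠ 0 := hτ ▸ (card_pos.2 ⟨v, hv⟩).ne'
  obtain ⟨u₀, -, -, -, hunique⟩ := hclique.exists_opposite_vertex hn hτ hu
  obtain rfl : u' = u₀ := (hunique u' hu' hclique').resolve_left huu'.symm
  rw [← image_insert, ← image_insert]
  exact (hunique u'' hu'' hclique'').imp (by rintro rfl; rfl) (by rintro rfl; rfl)

lemma apply_kuhnSimplex_eq (hy : IsGridChain e h y) (he : Metric.closedBall 0 4 ⊆ e.target)
    (hn : n ≠ 0) (hh : 0 < h) (hh1 : h ≤ 1) (hv : ‖gridCentre h v‖ ≤ 2)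
    (hboundary : ∀ τ ∈ (boundary y).support, ∀ w, ‖gridPoint h w - gridCentre h v‖ ≤ h →
      chartGridPoint e h w ∉ τ) (r : Equiv.Perm (Fin n)) :
    y (chartSimplex e h (kuhnSimplex v r)) = y (chartSimplex e h (kuhnSimplex v 1)) := by
  refine _root_.apply_kuhnSimplex_eq (a := fun ς ↦ y (chartSimplex e h ς)) (fun r r' hcard ↦ ?_) r
  by_cases heq : kuhnSimplex v r = kuhnSimplex v r'
  · rw [heq]
  obtain ⟨τ, hτsub, hτ⟩ := exists_subset_card_eq hcard
  obtain ⟨hsub, hsub'⟩ := subset_inter_iff.1 hτsub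
  have hinsert {r : Equiv.Perm (Fin n)} (hsub : τ ⊆ kuhnSimplex v r) :
      ∃ u ∉ τ, insert u τ = kuhnSimplex v r := (covBy_iff_card_sdiff_eq_one.2
    ⟨hsub, by rw [card_sdiff_of_subset hsub, card_kuhnSimplex, hτ]; omega⟩).exists_finset_insert
  obtain ⟨u, hu, hur⟩ := hinsert hsub
  obtain ⟨u', hu', hur'⟩ := hinsert hsub'
  obtain ⟨w, hw⟩ : τ.Nonempty := card_pos.1 (by lia)
  have hwv : ‖gridPoint h w - gridCentre h v‖ ≤ h := by
    obtain ⟨k, -, rfl⟩ := (mem_kuhnSimplex v r).1 (hsub hw)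
    exact norm_gridPoint_sub_gridCentre_le hh (le_kuhnVertex v r k) (kuhnVertex_le v r k)
  have hzero : boundary y (chartSimplex e h τ) = 0 := by
    by_contra hne
    exact hboundary _ (Finsupp.mem_support_iff.2 hne) w hwv (chartGridPoint_mem_chartSimplex hw)
  rw [hy.boundary_apply he hh hh1 hτ hw
    (by linarith [norm_le_norm_add_norm_sub' (gridPoint h w) (gridCentre h v)])
    (fun huu' ↦ heq (by rw [← hur, ← hur', huu'])) hu hu'
    (hur ▸ isGridClique_kuhnSimplex v r) (hur' ▸ isGridClique_kuhnSimplex v r'), hur, hur'] at hzero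
  exact CharTwo.add_eq_zero.1 hzero

lemma degree_eq_apply (hy : IsGridChain e h y) (he : Metric.closedBall 0 4 ⊆ e.target)
    (hh : 0 < h) (hh1 : h ≤ 1) {r η : ℝ} (hr : IsChartModulus e 1 r) (hloc : LocalizesLabels e r η)
    (hη : 0 < η) (hfine : IsFine n η y) (hv : ‖gridCentre h v‖ ≤ 2) :
    degree (chartLabel e (gridCentre h v)) y = y (chartSimplex e h (kuhnSimplex v 1)) := by
  have hS := kuhnSimplex_mem_gridSimplices (R := 4) hh 1 (show ‖gridCentre h v‖ + h ≤ 4 by linarith)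
  refine Mod2Chain.degree_eq_apply (fun σ hσ hrainbow ↦ ?_) ?_ ?_
  · obtain ⟨x, hx, -⟩ := hrainbow ⊤
    obtain ⟨hx_source, hxv⟩ := hr.apply_of_dist_symm_lt he (by linarith)
      (hloc.dist_lt_of_rainbow hη hv (hfine σ hσ).2 hrainbow hx)
    obtain ⟨ς, hς, rfl⟩ := hy σ hσ x hx hx_source
      (by linarith [norm_le_norm_add_norm_sub' (e x) (gridCentre h v)])
    rw [hς.1.eq_kuhnSimplex_one hς.2.1 hh fun l ↦ ?_]
    obtain ⟨_, hx, hl⟩ := hrainbow l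
    obtain ⟨w, hw, rfl⟩ := mem_image.1 hx
    rw [chartLabel_chartGridPoint he (hς.2.2 w hw)] at hl
    exact ⟨w, hw, Option.some_injective _ hl⟩
  · ext l
    simp only [chartSimplex, image_image, mem_image, mem_erase, mem_univ, and_true,
      Function.comp_apply]
    constructor
    · rintro ⟨w, hw, rfl⟩
      simp [chartLabel_chartGridPoint he (hS.2.2 w hw)]
    · intro hl
      obtain ⟨l, rfl⟩ := Option.ne_none_iff_exists'.1 hl
      obtain ⟨w, hw, rfl⟩ := exists_kuhnLabel_kuhnSimplex_one hh v l
      exact ⟨w, hw, chartLabel_chartGridPoint he (hS.2.2 w hw)⟩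
  · rw [card_chartSimplex he hh hS.2.2, card_kuhnSimplex]
    exact (Fintype.card_option.trans (by rw [Fintype.card_fin])).symm

lemma apply_chartSimplex_eq (hy : IsGridChain e h y) (he : Metric.closedBall 0 4 ⊆ e.target)
    (hn : n ≠ 0) (hh : 0 < h) (hh1 : h ≤ 1) {r η κ : ℝ} (hr₀ : 0 < r) (hr : IsChartModulus e 1 r)
    (hloc : LocalizesLabels e r η) (hη : 0 < η) (hfine : IsFine n η y) (hhκ : h ≤ κ)
    {a : Fin n → ℝ} (ha : ‖a‖ + 2 * κ ≤ 2)
    (hboundary : ∀ b, ‖b - a‖ < 3 * κ → ∀ τ ∈ (boundary y).support, ∀ x ∈ τ, r ≤ dist x (e.symm b))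
    {w w' : Fin n → ℤ} (hς : IsGridClique ς) (hcard : #ς = n + 1) (hw : w ∈ ς)
    (hwa : ‖gridPoint h w - a‖ < κ) (hς' : IsGridClique ς') (hcard' : #ς' = n + 1) (hw' : w' ∈ ς')
    (hwa' : ‖gridPoint h w' - a‖ < κ) : y (chartSimplex e h ς) = y (chartSimplex e h ς') := by
  have hball : ∀ b ∈ Metric.ball a (2 * κ), ‖b‖ ≤ 2 := fun b hb ↦ by
    rw [mem_ball_iff_norm] at hb
    linarith [norm_le_norm_add_norm_sub' b a]
  have hdegree {ς : Finset (Fin n → ℤ)} {w : Fin n → ℤ} (hς : IsGridClique ς) (hcard : #ς = n + 1)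
      (hw : w ∈ ς) (hwa : ‖gridPoint h w - a‖ < κ) : ∃ b ∈ Metric.ball a (2 * κ),
        y (chartSimplex e h ς) = degree (chartLabel e b) y := by
    obtain ⟨v, q, rfl⟩ := hς.exists_eq_kuhnSimplex hcard
    obtain ⟨k, -, rfl⟩ := (mem_kuhnSimplex v q).1 hw
    have hcentre := norm_gridPoint_sub_gridCentre_le hh (le_kuhnVertex v q k) (kuhnVertex_le v q k)
    rw [norm_sub_rev] at hcentre
    have hva : ‖gridCentre h v - a‖ < 2 * κ := by
      linarith [norm_sub_le_norm_sub_add_norm_sub (gridCentre h v)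
        (gridPoint h (kuhnVertex v q k)) a]
    have hv := hball _ (mem_ball_iff_norm.2 hva)
    refine ⟨gridCentre h v, mem_ball_iff_norm.2 hva, ?_⟩
    rw [hy.degree_eq_apply he hh hh1 hr hloc hη hfine hv]
    refine hy.apply_kuhnSimplex_eq he hn hh hh1 hv (fun τ hτ u hu hmem ↦ ?_) q
    refine (hboundary (gridPoint h u) ?_ τ hτ _ hmem).not_gt (by rwa [chartGridPoint, dist_self])
    linarith [norm_sub_le_norm_sub_add_norm_sub (gridPoint h u) (gridCentre h v) a]
  obtain ⟨b, hb, hςb⟩ := hdegree hς hcard hw hwa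
  obtain ⟨b', hb', hςb'⟩ := hdegree hς' hcard' hw' hwa'
  rw [hςb, hςb']
  refine hloc.degree_eq_of_isPreconnected hη (convex_ball a (2 * κ)).isPreconnected hball hfine
    (fun b hb τ hτ ↦ ?_) hb hb'
  obtain ⟨x, hx⟩ := hfine.nonempty_of_mem_support_boundary hn hτ
  refine ⟨x, hx, hboundary b ?_ τ hτ x hx⟩
  linarith [mem_ball_iff_norm.1 hb]

end IsGridChain

lemma exists_chartGridRounding (he : Metric.closedBall 0 4 ⊆ e.target) (hh : 0 < h)
    (hh1 : h ≤ 1 / 16) {m κ : ℝ} (hm₀ : 0 < m) (hm : IsChartModulus e (1 / 4) m)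
    (hm' : IsChartSymmModulus e m κ) (hhκ : h < κ) :
    ∃ p : M → M, (∀ x, dist (p x) x < m) ∧
      ∀ᶠ δ in 𝓝[>] 0, ∀ z, IsFine n δ z → IsGridChain e h (Mod2Chain.map p z) := by
  classical
  obtain ⟨q, hq, κ', hκ', hadj⟩ := exists_gridRounding_of_mesh n hh
  let p (x : M) : M := if x ∈ e.source ∧ ‖e x‖ ≤ 7 / 2 then chartGridPoint e h (q (e x)) else x
  have hp (x : M) : dist (p x) x < m := by
    dsimp only [p]
    split_ifs with hx
    · exact dist_chartGridPoint_lt hm' hhκ hx.1 (by linarith) (hq (e x))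
    · rwa [dist_self]
  refine ⟨p, hp, ?_⟩
  filter_upwards [eventually_isChartModulus he (lt_min hκ' (show (0 : ℝ) < 1 / 8 by norm_num))] with
    δ hδ z hz _ hpσ _ hx hx_source hx3
  obtain ⟨σ, hσ, rfl, hcard⟩ :=
    Mod2Chain.exists_mem_support_of_map_ne_zero (Finsupp.mem_support_iff.1 hpσ)
  obtain ⟨x, hxσ, rfl⟩ := mem_image.1 hx
  obtain ⟨hx_source, hpx⟩ := hm (p x) hx_source (by linarith) x (hp x)
  have hx' : ‖e x‖ ≤ 13 / 4 := by linarith [norm_le_norm_add_norm_sub (e (p x)) (e x)]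
  have hσe (y : M) (hy : y ∈ σ) : y ∈ e.source ∧ ‖e y‖ ≤ 7 / 2 := by
    obtain ⟨hy_source, hxy⟩ := hδ x hx_source (by linarith) y ((hz σ hσ).2 x hxσ y hy)
    refine ⟨hy_source, ?_⟩
    linarith [norm_le_norm_add_norm_sub (e x) (e y), min_le_right κ' (1 / 8)]
  have himage : chartSimplex e h (σ.image (q ∘ e)) = σ.image p := by
    rw [chartSimplex, image_image]
    exact image_congr fun y hy ↦ (if_pos (hσe y hy)).symm
  refine ⟨σ.image (q ∘ e), ⟨?_, ?_, ?_⟩, himage⟩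
  · simp only [IsGridClique, forall_mem_image]
    refine fun y hy y' hy' ↦ hadj _ _ ?_
    exact (hδ y (hσe y hy).1 (by linarith [hσe y hy]) y' ((hz σ hσ).2 y hy y' hy')).2.trans_le
      (min_le_left _ _)
  · refine le_antisymm (card_image_le.trans (hz σ hσ).1.le) ?_
    rw [← (hz σ hσ).1, ← hcard, ← himage]
    exact card_image_le
  · simp only [forall_mem_image, Function.comp_apply]
    intro y hy
    linarith [norm_le_norm_add_norm_sub' (gridPoint h (q (e y))) (e y), hq (e y), hσe y hy]

end GridChain

/-! ### Fundamental chains -/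

section Fundamental

open Mod2Chain

variable {M : Type*} [PseudoMetricSpace M] [DecidableEq M] {n : ℕ}
  {e f : OpenPartialHomeomorph M (Fin n → ℝ)} {r η ρ ρ' : ℝ} {z w : Mod2Chain M}

/-- A chain that represents the fundamental class mod 2 along the preimage of the unit ball in the
chart `e`: its boundary stays at distance at least `ρ`, and it has nonzero local degree there. -/
structure IsFundamentalIn (e : OpenPartialHomeomorph M (Fin n → ℝ)) (ρ : ℝ) (z : Mod2Chain M) :
    Prop where
  le_dist : ∀ c : Fin n → ℝ, ‖c‖ ≤ 1 → ∀ τ ∈ (boundary z).support, ∀ x ∈ τ,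
    ρ ≤ dist x (e.symm c)
  degree_ne_zero : ∀ c : Fin n → ℝ, ‖c‖ ≤ 1 → degree (chartLabel e c) z ≠ 0

namespace IsFundamentalIn

lemma map (hz : IsFundamentalIn e ρ z) (hn : n ≠ 0) {δ m : ℝ} (hfine : IsFine n δ z) {p : M → M}
    (hp : ∀ x, dist (p x) x < m) (hδm : δ ≤ m) (hloc : LocalizesLabels e r η) (hrρ : r ≤ ρ)
    (hη : 0 < η) (hmη : 3 * m ≤ η) : IsFundamentalIn e (ρ - m) (Mod2Chain.map p z) where
  le_dist c hc pτ hpτ px hpx := by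
    rw [← map_boundary] at hpτ
    obtain ⟨τ, hτ, rfl, -⟩ := exists_mem_support_of_map_ne_zero (Finsupp.mem_support_iff.1 hpτ)
    obtain ⟨x, hx, rfl⟩ := mem_image.1 hpx
    linarith [hz.le_dist c hc τ hτ x hx, dist_triangle_left x (e.symm c) (p x), hp x]
  degree_ne_zero c hc := by
    have hsmall : ∀ σ ∈ z.support, IsSmall η (id '' (σ : Set M) ∪ p '' σ) := fun σ hσ ↦ by
      have hdist {x : M} (hx : x ∈ id '' (σ : Set M) ∪ p '' σ) : ∃ x' ∈ σ, dist x x' < m := by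
        obtain ⟨x, hx, rfl⟩ | ⟨x, hx, rfl⟩ := hx
        · exact ⟨x, hx, (dist_self x).trans_lt (dist_nonneg.trans_lt (hp x))⟩
        · exact ⟨x, hx, hp x⟩
      intro x hx y hy
      obtain ⟨x', hx', hxx'⟩ := hdist hx
      obtain ⟨y', hy', hyy'⟩ := hdist hy
      linarith [dist_triangle4_right x y x' y', (hfine σ hσ).2 x' hx' y' hy']
    have hboundary : ∀ τ ∈ (boundary z).support, ∃ x ∈ τ, r ≤ dist (id x) (e.symm c) :=
      fun τ hτ ↦ by
        obtain ⟨x, hx⟩ := hfine.nonempty_of_mem_support_boundary hn hτ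
        exact ⟨x, hx, hrρ.trans (hz.le_dist c hc τ hτ x hx)⟩
    rw [degree_map, ← hloc.degree_comp_eq (by linarith) (by simpa using hη) hsmall hboundary]
    exact hz.degree_ne_zero c hc

lemma add (hz : IsFundamentalIn e ρ z) (hρ' : ρ' ≤ ρ) (hloc : LocalizesLabels e ρ' η) (hη : 0 < η)
    (hn : n ≠ 0) (hw : IsFine n η w)
    (hfar : ∀ c : Fin n → ℝ, ‖c‖ ≤ 1 → ∀ σ ∈ w.support, ∀ x ∈ σ, ρ' ≤ dist x (e.symm c)) :
    IsFundamentalIn e ρ' (z + w) where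
  le_dist c hc τ hτ x hx := by
    rw [map_add] at hτ
    obtain hτ | hτ := mem_union.1 (Finsupp.support_add hτ)
    · exact hρ'.trans (hz.le_dist c hc τ hτ x hx)
    · obtain ⟨σ, hσ, hτσ, -⟩ :=
        exists_mem_support_of_boundary_ne_zero (Finsupp.mem_support_iff.1 hτ)
      exact hfar c hc σ hσ x (hτσ hx)
  degree_ne_zero c hc := by
    have hdegree : degree (chartLabel e c) w = 0 := by
      by_contra hne
      obtain ⟨σ, hσ, hnear⟩ := hloc.exists_mem_support_of_degree_ne_zero hη (by linarith) hw hne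
      obtain ⟨x, hx⟩ : σ.Nonempty := card_pos.1 (by have := (hw σ hσ).1; lia)
      exact (hfar c hc σ hσ x hx).not_gt (hnear x hx)
    rw [degree_add, hdegree, add_zero]
    exact hz.degree_ne_zero c hc

lemma apply_chartSimplex_ne_zero (hz : IsFundamentalIn f ρ z) (hn : n ≠ 0)
    (hlocf : LocalizesLabels f ρ' η) (hη : 0 < η) (hfine : IsFine n η z) {h κ : ℝ}
    (hgrid : IsGridChain e h z) (he : Metric.closedBall 0 4 ⊆ e.target)
    (hloc : LocalizesLabels e ρ' η)
    (hh : 0 < h) (hhκ : h ≤ κ) (hκ : κ ≤ 1 / 4) (hρ' : 0 < ρ') (hρρ' : ρ' ≤ ρ / 4)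
    (hmod : IsChartModulus e κ (2 * ρ')) (hsymm : IsChartSymmModulus e (ρ / 4) (3 * κ))
    {ς : Finset (Fin n → ℤ)} (hς : ς ∈ gridSimplices n h (3 / 2)) {v : Fin n → ℤ} (hv : v ∈ ς)
    {c : Fin n → ℝ} (hc : ‖c‖ ≤ 1)
    (hvc : dist (chartGridPoint e h v) (f.symm c) < ρ') :
    z (chartSimplex e h ς) ≠ 0 := by
  have hv' := hς.2.2 v hv
  obtain ⟨σ, hσ, hnear⟩ := hlocf.exists_mem_support_of_degree_ne_zero hη (by linarith) hfine
    (hz.degree_ne_zero c hc)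
  obtain ⟨x, hx⟩ : σ.Nonempty := card_pos.1 (by have := (hfine σ hσ).1; lia)
  obtain ⟨hx_source, hxv⟩ := hmod.apply_of_dist_symm_lt he (c := gridPoint h v) (by linarith)
    (show dist x (chartGridPoint e h v) < 2 * ρ' by
      linarith [dist_triangle_right x (chartGridPoint e h v) (f.symm c), hnear x hx])
  obtain ⟨ς', hς', rfl⟩ := hgrid σ hσ x hx hx_source
    (by linarith [norm_le_norm_add_norm_sub' (e x) (gridPoint h v)])
  obtain ⟨v', hv', rfl⟩ := mem_image.1 hx
  rw [apply_chartGridPoint he (hς'.2.2 v' hv')] at hxv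
  rw [hgrid.apply_chartSimplex_eq he hn hh (by linarith) hρ'
    (hmod.mono (by linarith) (by linarith)) hloc hη hfine hhκ (a := gridPoint h v) (by linarith)
    (fun b hb τ hτ y hy ↦ ?_) hς.1 hς.2.1 hv (by simpa using hh.trans_le hhκ) hς'.1 hς'.2.1 hv' hxv]
  · exact Finsupp.mem_support_iff.1 hσ
  · have hvb : dist (chartGridPoint e h v) (e.symm b) < ρ / 4 :=
      hsymm (gridPoint h v) (by linarith) b (norm_sub_rev b _ ▸ hb)
    linarith [hz.le_dist c hc τ hτ y hy, dist_comm (chartGridPoint e h v) (e.symm b),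
      dist_triangle4 y (e.symm b) (chartGridPoint e h v) (f.symm c)]

end IsFundamentalIn

namespace IsGridChain

variable {h R : ℝ}

lemma boundary_apply_eq_zero (hz : IsGridChain e h z) (hn : n ≠ 0)
    (he : Metric.closedBall 0 4 ⊆ e.target) (hh : 0 < h) (hh1 : h ≤ 1)
    (hone : ∀ ς ∈ gridSimplices n h R, z (chartSimplex e h ς) = 1) {τ : Finset (Fin n → ℤ)}
    (hτ : #τ = n) {u v : Fin n → ℤ} (hu : u ∉ τ) (hclique : IsGridClique (insert u τ)) (hv : v ∈ τ)
    (hv3 : ‖gridPoint h v‖ ≤ 3) (hvR : ‖gridPoint h v‖ + h ≤ R) :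
    boundary z (chartSimplex e h τ) = 0 := by
  obtain ⟨u', huu', hu', hclique', -⟩ := hclique.exists_opposite_vertex hn hτ hu
  have hinsert {u : Fin n → ℤ} (hu : u ∉ τ) (hclique : IsGridClique (insert u τ)) :
      z (chartSimplex e h (insert u τ)) = 1 :=
    hone _ (hclique.mem_gridSimplices (by rw [card_insert_of_notMem hu, hτ]) hh
      (mem_insert_of_mem hv) hvR)
  rw [hz.boundary_apply he hh hh1 hτ hv hv3 huu'.symm hu hu' hclique hclique', hinsert hu hclique,
    hinsert hu' hclique', CharTwo.add_self_eq_zero]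

lemma le_dist_of_mem_support_boundary (hz : IsGridChain e h z) (hn : n ≠ 0)
    (he : Metric.closedBall 0 4 ⊆ e.target) (hh : 0 < h) (hh1 : h ≤ 1 / 8)
    (hmod : IsChartModulus e (1 / 4) r) (hfine : IsFine n η z)
    (hone : ∀ ς ∈ gridSimplices n h (3 / 2), z (chartSimplex e h ς) = 1) {c : Fin n → ℝ}
    (hc : ‖c‖ ≤ 1) {τ : Finset M} (hτ : τ ∈ (boundary z).support) {x : M} (hx : x ∈ τ) :
    r ≤ dist x (e.symm c) := by
  by_contra! hxc
  obtain ⟨hx_source, hxc⟩ := hmod.apply_of_dist_symm_lt he (by linarith) hxc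
  have hx_norm : ‖e x‖ ≤ 5 / 4 := by linarith [norm_le_norm_add_norm_sub' (e x) c]
  obtain ⟨σ, hσ, hτσ, hcard⟩ :=
    exists_mem_support_of_boundary_ne_zero (Finsupp.mem_support_iff.1 hτ)
  obtain ⟨ς, hς, hςσ⟩ := hz σ hσ x (hτσ hx) hx_source (by linarith)
  obtain ⟨τ, hτς, rfl⟩ := subset_image_iff.1 (hςσ ▸ hτσ)
  obtain ⟨v, hv, rfl⟩ := mem_image.1 hx
  have hτ4 : ∀ w ∈ τ, ‖gridPoint h w‖ ≤ 4 := fun w hw ↦ hς.2.2 w (hτς hw)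
  have hτn : #τ = n := by
    have := (hfine σ hσ).1
    have := card_chartSimplex he hh hτ4
    rw [chartSimplex] at this
    lia
  rw [apply_chartGridPoint he (hτ4 v hv)] at hx_norm
  obtain ⟨u, hu, hclique, -⟩ :=
    hz.exists_chartSimplex_insert_eq he hh hτn hτ4 hv (by linarith) hσ hτσ
  exact Finsupp.mem_support_iff.1 hτ (hz.boundary_apply_eq_zero hn he hh (by linarith) hone hτn hu
    hclique hv (by linarith) (by linarith))

lemma isFundamentalIn (hz : IsGridChain e h z) (hn : n ≠ 0)
    (he : Metric.closedBall 0 4 ⊆ e.target) (hh : 0 < h) (hh1 : h ≤ 1 / 8)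
    (hmod : IsChartModulus e (1 / 4) r) (hloc : LocalizesLabels e r η) (hhη : h < η)
    (hfine : IsFine n η z) (hone : ∀ ς ∈ gridSimplices n h (3 / 2), z (chartSimplex e h ς) = 1) :
    IsFundamentalIn e r z where
  le_dist _ hc _ hτ _ hx := hz.le_dist_of_mem_support_boundary hn he hh hh1 hmod hfine hone hc hτ hx
  degree_ne_zero c hc := by
    obtain ⟨v, hv⟩ := exists_norm_gridCentre_sub_le hh c
    have hv_norm := norm_le_norm_add_norm_sub' (gridCentre h v) c
    have hboundary : ∀ τ ∈ (boundary z).support, ∃ x ∈ τ, r ≤ dist x (e.symm c) := fun τ hτ ↦ by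
      obtain ⟨x, hx⟩ := hfine.nonempty_of_mem_support_boundary hn hτ
      exact ⟨x, hx, hz.le_dist_of_mem_support_boundary hn he hh hh1 hmod hfine hone hc hτ hx⟩
    rw [hloc.degree_eq_of_norm_sub_lt (by linarith) (norm_sub_rev c _ ▸ hv.trans_lt hhη) hfine
      hboundary, hz.degree_eq_apply he hh (by linarith) (hmod.mono (by norm_num) le_rfl) hloc
      (hh.trans hhη) hfine (by linarith), hone _ (kuhnSimplex_mem_gridSimplices hh 1 (by linarith))]
    exact one_ne_zero

end IsGridChain

-- The missing grid simplices are added to `y`. None is missing where `y` is already fundamental in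
-- another chart, so nothing changes there.
lemma exists_isFundamentalIn_insert_of_isGridChain
    {s : Set (OpenPartialHomeomorph M (Fin n → ℝ))} {h κ κ' : ℝ} {y : Mod2Chain M}
    (hs : ∀ f ∈ s, IsFundamentalIn f ρ y) (hn : n ≠ 0) (he : Metric.closedBall 0 4 ⊆ e.target)
    (hy : IsGridChain e h y) (hfine : IsFine n η y)
    (hloc : ∀ f ∈ insert e s, LocalizesLabels f ρ' η)
    (hh : 0 < h) (hhη : h < η) (hhκ : h ≤ κ) (hκ : κ ≤ 1 / 8) (hρ' : 0 < ρ') (hρρ' : ρ' ≤ ρ / 4)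
    (hmod : IsChartModulus e κ (2 * ρ')) (hsymm : IsChartSymmModulus e (ρ / 4) (3 * κ))
    (hsymm' : IsChartSymmModulus e η κ') (hhκ' : h < κ') :
    ∃ z, IsFine n η z ∧ ∀ f ∈ insert e s, IsFundamentalIn f ρ' z := by
  have hloce := hloc e (Set.mem_insert e s)
  obtain ⟨w, hw, hone⟩ := exists_add_apply_eq_one y
    (((gridSimplices_finite hh).image (chartSimplex e h)) : (chartSimplex e h ''
      gridSimplices n h (3 / 2)).Finite)
  have hw_simplex : ∀ σ ∈ w.support, ∃ ς ∈ gridSimplices n h 4, chartSimplex e h ς = σ :=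
    fun σ hσ ↦ Set.image_mono (gridSimplices_mono (by norm_num)) (hw σ hσ).1
  have hw_fine := isFine_of_forall_exists_chartSimplex_eq he hh hsymm' hhκ' hw_simplex
  refine ⟨y + w, hfine.add hw_fine, Set.forall_mem_insert.2 ⟨?_, fun f hf ↦ ?_⟩⟩
  · exact (hy.add fun σ hσ _ _ _ _ ↦ hw_simplex σ hσ).isFundamentalIn hn he hh (by linarith)
      (hmod.mono (by linarith) (by linarith)) hloce hhη (hfine.add hw_fine)
      fun ς hς ↦ hone _ (Set.mem_image_of_mem _ hς)
  · have hlocf := hloc f (Set.mem_insert_of_mem e hf)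
    refine (hs f hf).add (by linarith) hlocf (hh.trans hhη) hn hw_fine fun c hc σ hσ x hx ↦ ?_
    by_contra! hxc
    obtain ⟨⟨ς, hς, rfl⟩, hzero⟩ := hw σ hσ
    obtain ⟨v, hv, rfl⟩ := mem_image.1 hx
    exact (hs f hf).apply_chartSimplex_ne_zero hn hlocf (hh.trans hhη) hfine hy he hloce hh hhκ
      (by linarith) hρ' hρρ' hmod hsymm hς hv hc hxc hzero

lemma exists_isFundamentalIn_insert {s : Set (OpenPartialHomeomorph M (Fin n → ℝ))}
    (hs : s.Finite) (hs4 : ∀ f ∈ insert e s, Metric.closedBall 0 4 ⊆ f.target) (hn : n ≠ 0)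
    (hρ : 0 < ρ) (hfund : ∀ ε > 0, ∃ z, IsFine n ε z ∧ ∀ f ∈ s, IsFundamentalIn f ρ z) :
    ∃ ρ' > 0, ∀ ε > 0, ∃ z, IsFine n ε z ∧ ∀ f ∈ insert e s, IsFundamentalIn f ρ' z := by
  have he := hs4 e (Set.mem_insert e s)
  obtain ⟨κ, hκ, hκ₀, hκ₁⟩ : ∃ κ, IsChartSymmModulus e (ρ / 8) κ ∧ 0 < κ ∧ κ < 3 / 16 :=
    ((eventually_isChartSymmModulus he (by positivity)).and
      (Ioo_mem_nhdsGT (by norm_num))).exists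
  obtain ⟨r, hr, hr₀⟩ : ∃ r, IsChartModulus e (κ / 3) r ∧ 0 < r :=
    ((eventually_isChartModulus he (by positivity)).and self_mem_nhdsWithin).exists
  have hρ' : 0 < min (ρ / 8) (r / 2) := by positivity
  have hρ₁ := min_le_left (ρ / 8) (r / 2)
  refine ⟨min (ρ / 8) (r / 2), hρ', fun ε hε ↦ ?_⟩
  obtain ⟨η, hloc, hη, hηε⟩ : ∃ η, (∀ f ∈ insert e s, LocalizesLabels f (min (ρ / 8) (r / 2)) η) ∧
      0 < η ∧ η < ε :=
    (((Filter.eventually_all_finite (hs.insert e)).2 fun f hf ↦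
      eventually_localizesLabels (hs4 f hf) hρ').and (Ioo_mem_nhdsGT hε)).exists
  obtain ⟨m, hm, hm₀, hmlt⟩ : ∃ m, IsChartModulus e (1 / 4) m ∧ 0 < m ∧ m < min (η / 3) (ρ / 2) :=
    ((eventually_isChartModulus he (by positivity)).and (Ioo_mem_nhdsGT (by positivity))).exists
  obtain ⟨hmη, hmρ⟩ := lt_min_iff.1 hmlt
  obtain ⟨κ', hκ', hκ'₀⟩ : ∃ κ', IsChartSymmModulus e m κ' ∧ 0 < κ' :=
    ((eventually_isChartSymmModulus he hm₀).and self_mem_nhdsWithin).exists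
  obtain ⟨h, hh, hhlt⟩ := exists_between (lt_min (lt_min hκ'₀ hη) (show 0 < κ / 3 by positivity))
  simp only [lt_min_iff] at hhlt
  obtain ⟨⟨hhκ', hhη⟩, hhκ⟩ := hhlt
  obtain ⟨p, hp, hpgrid⟩ := exists_chartGridRounding he hh (by linarith) hm₀ hm hκ' hhκ'
  obtain ⟨δ, hδ, hδ₀, hδm⟩ := (hpgrid.and (Ioo_mem_nhdsGT hm₀)).exists
  obtain ⟨z, hz, hzs⟩ := hfund δ hδ₀
  obtain ⟨w, hw, hws⟩ := exists_isFundamentalIn_insert_of_isGridChain (κ := κ / 3)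
    (fun f hf ↦ (hzs f hf).map hn hz hp hδm.le (hloc f (Set.mem_insert_of_mem e hf)) (by linarith)
      hη (by linarith)) hn he (hδ z hz) ((hz.map hp hδm.le).mono (by linarith)) hloc hh hhη hhκ.le
    (by linarith) hρ' (by linarith) (hr.mono le_rfl (by linarith [min_le_right (ρ / 8) (r / 2)]))
    (by rw [mul_div_cancel₀ _ three_ne_zero]; exact hκ.mono (by linarith))
    (hκ'.mono (by linarith)) hhκ'
  exact ⟨w, hw.mono hηε.le, hws⟩

lemma exists_isFundamentalIn (hn : n ≠ 0) {s : Set (OpenPartialHomeomorph M (Fin n → ℝ))}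
    (hs : s.Finite) (hs4 : ∀ f ∈ s, Metric.closedBall 0 4 ⊆ f.target) :
    ∃ ρ > 0, ∀ ε > 0, ∃ z, IsFine n ε z ∧ ∀ f ∈ s, IsFundamentalIn f ρ z := by
  induction s, hs using Set.Finite.induction_on with
  | empty => exact ⟨1, one_pos, fun ε _ ↦ ⟨0, by simp [IsFine]⟩⟩
  | insert _ hs ih =>
    obtain ⟨ρ, hρ, hfund⟩ := ih fun f hf ↦ hs4 f (Set.mem_insert_of_mem _ hf)
    exact exists_isFundamentalIn_insert hs hs4 hn hρ hfund

end Fundamental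

/-! ### Maps homotopic to the identity -/

section Surjective

open Mod2Chain

lemma exists_chart_closedBall_subset_target {n : ℕ} {M : Type*} [TopologicalSpace M]
    [ChartedSpace (EuclideanSpace ℝ (Fin n)) M] (q : M) :
    ∃ e : OpenPartialHomeomorph M (Fin n → ℝ),
      Metric.closedBall 0 4 ⊆ e.target ∧ q ∈ e.source ∧ e q = 0 := by
  let e₀ : OpenPartialHomeomorph M (Fin n → ℝ) :=
    (chartAt (EuclideanSpace ℝ (Fin n)) q).transHomeomorph
      (EuclideanSpace.equiv (Fin n) ℝ).toHomeomorph
  have hq : q ∈ e₀.source := mem_chart_source _ q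
  obtain ⟨r, hr, hball⟩ := Metric.isOpen_iff.1 e₀.open_target (e₀ q) (e₀.map_source hq)
  have hscale : 8 / r ≠ 0 := by positivity
  let g : (Fin n → ℝ) ≃ₜ (Fin n → ℝ) :=
    (Homeomorph.subRight (e₀ q)).trans (Homeomorph.smulOfNeZero (8 / r) hscale)
  refine ⟨e₀.transHomeomorph g, fun u hu ↦ hball ?_, hq, by simp [g]⟩
  have hgu : g.symm u - e₀ q = (r / 8) • u := by simp [g]
  have hu4 : r / 8 * ‖u‖ ≤ r / 8 * 4 := by gcongr; simpa using hu
  rw [mem_ball_iff_norm]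
  refine (congrArg norm hgu).trans_lt ?_
  rw [norm_smul, Real.norm_of_nonneg (by positivity)]
  linarith

lemma exists_finite_charts_cover (n : ℕ) (M : Type*) [TopologicalSpace M] [CompactSpace M]
    [ChartedSpace (EuclideanSpace ℝ (Fin n)) M] :
    ∃ s : Set (OpenPartialHomeomorph M (Fin n → ℝ)), s.Finite ∧
      (∀ e ∈ s, Metric.closedBall 0 4 ⊆ e.target) ∧
      ∀ x, ∃ e ∈ s, ∃ c, ‖c‖ ≤ 1 ∧ e.symm c = x := by
  choose e he hes he₀ using exists_chart_closedBall_subset_target (n := n) (M := M)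
  obtain ⟨t, ht⟩ := CompactSpace.elim_nhds_subcover
    (fun q ↦ (e q).source ∩ e q ⁻¹' Metric.ball 0 1)
    fun q ↦ ((e q).isOpen_inter_preimage Metric.isOpen_ball).mem_nhds ⟨hes q, by simp [he₀]⟩
  refine ⟨e '' t, t.finite_toSet.image e, by simpa using fun q _ ↦ he q, fun x ↦ ?_⟩
  obtain ⟨q, hq, hx_source, hx⟩ := Set.mem_iUnion₂.1 (ht.ge (Set.mem_univ x))
  exact ⟨e q, Set.mem_image_of_mem e hq, e q x, (mem_ball_zero_iff.1 hx).le,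
    (e q).left_inv hx_source⟩

variable {M X : Type*} [PseudoMetricSpace M] [PseudoMetricSpace X] {n k : ℕ}
  {e : OpenPartialHomeomorph M (Fin n → ℝ)} {r ε η ρ : ℝ} {c : Fin n → ℝ}

lemma boundary_eq_zero_of_isFundamentalIn [DecidableEq M] (hn : n ≠ 0) {z : Mod2Chain M}
    (hz : IsFine n ε z) (hρ : 0 < ρ)
    (hcover : ∀ x, ∃ e, IsFundamentalIn (n := n) e ρ z ∧ ∃ c, ‖c‖ ≤ 1 ∧ e.symm c = x) :
    boundary z = 0 := by
  refine Finsupp.support_eq_empty.1 (eq_empty_of_forall_notMem fun τ hτ ↦ ?_)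
  obtain ⟨x, hx⟩ := hz.nonempty_of_mem_support_boundary hn hτ
  obtain ⟨e, he, c, hc, rfl⟩ := hcover x
  exact hρ.not_ge (by simpa using he.le_dist c hc τ hτ _ hx)

lemma eventually_isSmall_image {f : X → M} (hf : UniformContinuous f) (hη : 0 < η) :
    ∀ᶠ δ in 𝓝[>] 0, ∀ S, IsSmall δ S → IsSmall η (f '' S) := by
  obtain ⟨δ₀, hδ₀, hdist⟩ := Metric.uniformContinuous_iff.1 hf η hη
  filter_upwards [Ioo_mem_nhdsGT hδ₀] with δ hδ S hS
  rintro _ ⟨x, hx, rfl⟩ _ ⟨y, hy, rfl⟩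
  exact hdist ((hS x hx y hy).trans hδ.2)

lemma eventually_degree_comp_eq_of_homotopy [CompactSpace X] [DecidableEq X] {f g : C(X, M)}
    (H : f.Homotopy g) (hloc : LocalizesLabels e r η) (hη : 0 < η) (hc : ‖c‖ ≤ 2) :
    ∀ᶠ δ in 𝓝[>] 0, ∀ z, IsFine k δ z → boundary z = 0 →
      degree (chartLabel e c ∘ f) z = degree (chartLabel e c ∘ g) z := by
  filter_upwards [eventually_isSmall_image
    (CompactSpace.uniformContinuous_of_continuous H.continuous) hη, self_mem_nhdsWithin] with
    δ hδ hδ₀ z hz hcycle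
  have hconst := apply_eq_of_isPreconnected (X := unitInterval) isPreconnected_univ hδ₀
    (f := fun s ↦ degree (chartLabel e c ∘ fun x ↦ H (s, x)) z) (fun s _ s' _ hss' ↦ ?_)
    (Set.mem_univ 0) (Set.mem_univ 1)
  · simpa only [H.apply_zero, H.apply_one] using hconst
  refine hloc.degree_comp_eq hc (by simpa using hη) (fun σ hσ ↦ ?_) (by simp [hcycle])
  refine (hδ ({s, s'} ×ˢ σ) ?_).mono le_rfl (Set.union_subset ?_ ?_)
  · rintro ⟨t, x⟩ ⟨ht, hx⟩ ⟨t', x'⟩ ⟨ht', hx'⟩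
    refine max_lt ?_ ((hz σ hσ).2 x hx x' hx')
    obtain rfl | rfl := ht <;> obtain rfl | rfl := ht' <;> first
      | exact hss'
      | exact (dist_comm _ _).trans_lt hss'
      | exact (dist_self _).trans_lt hδ₀
  · rintro _ ⟨x, hx, rfl⟩
    exact ⟨(s, x), ⟨.inl rfl, hx⟩, rfl⟩
  · rintro _ ⟨x, hx, rfl⟩
    exact ⟨(s', x), ⟨.inr rfl, hx⟩, rfl⟩

end Surjective

lemma surjective_of_homotopic_id {n : ℕ} (hn : n ≠ 0) {M : Type*} [MetricSpace M] [CompactSpace M]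
    [ChartedSpace (EuclideanSpace ℝ (Fin n)) M] {f : C(M, M)}
    (hf : f.Homotopic (ContinuousMap.id M)) : Function.Surjective f := by
  classical
  intro q
  by_contra hq
  obtain ⟨r, hr, hfar⟩ : ∃ r > 0, ∀ x, r ≤ dist (f x) q := by
    obtain ⟨r, hr, hball⟩ :=
      Metric.isOpen_iff.1 (isCompact_range f.continuous).isClosed.isOpen_compl q hq
    exact ⟨r, hr, fun x ↦ not_lt.1 fun hx ↦ hball hx ⟨x, rfl⟩⟩
  obtain ⟨s, hs, hs4, hcover⟩ := exists_finite_charts_cover n M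
  obtain ⟨ρ, hρ, hfund⟩ := exists_isFundamentalIn hn hs hs4
  obtain ⟨e, he, c, hc, rfl⟩ := hcover q
  obtain ⟨η, hloc, hη⟩ : ∃ η, LocalizesLabels e r η ∧ 0 < η :=
    ((eventually_localizesLabels (hs4 e he) hr).and self_mem_nhdsWithin).exists
  obtain ⟨H⟩ := hf
  obtain ⟨δ, ⟨hdegree, hsmall⟩, hδ⟩ :=
    (((eventually_degree_comp_eq_of_homotopy (k := n) H hloc hη (hc.trans one_le_two)).and
      (eventually_isSmall_image (CompactSpace.uniformContinuous_of_continuous f.continuous) hη)).and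
      self_mem_nhdsWithin).exists
  obtain ⟨z, hz, hzs⟩ := hfund δ hδ
  have hcycle := boundary_eq_zero_of_isFundamentalIn hn hz hρ fun x ↦ by
    obtain ⟨e, he, hx⟩ := hcover x
    exact ⟨e, hzs e he, hx⟩
  refine (hzs e he).degree_ne_zero c hc ((hdegree z hz hcycle).symm.trans ?_)
  exact hloc.degree_comp_eq_zero hη (hc.trans one_le_two) (fun σ hσ ↦ hsmall _ (hz σ hσ).2) hfar

lemma eq_of_homotopic_of_discreteTopology {X Y : Type*} [TopologicalSpace X] [TopologicalSpace Y]
    [DiscreteTopology Y] {f g : C(X, Y)} (hfg : f.Homotopic g) : f = g := by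
  obtain ⟨H⟩ := hfg
  ext x
  rw [← H.apply_zero, ← H.apply_one]
  exact PreconnectedSpace.constant inferInstance (by fun_prop : Continuous fun s ↦ H (s, x))

theorem statement0_general (n : ℕ) (M : Type*) [TopologicalSpace M] [T2Space M]
    [ChartedSpace (EuclideanSpace ℝ (Fin n)) M] [CompactSpace M] (f : C(M, M))
    (hf : f.Homotopic (ContinuousMap.id M)) : Function.Surjective f := by
  obtain rfl | hn := eq_or_ne n 0
  · have := ChartedSpace.discreteTopology (EuclideanSpace ℝ (Fin 0)) M
    rw [eq_of_homotopic_of_discreteTopology hf]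
    exact Function.surjective_id
  · have := ChartedSpace.secondCountable_of_sigmaCompact (EuclideanSpace ℝ (Fin n)) M
    let _ : MetricSpace M := TopologicalSpace.metrizableSpaceMetric M
    exact surjective_of_homotopic_id hn hf

/-- Let `M` be a connected compact topological `n`-manifold without
boundary and `f : M → M` a continuous map. If `f` is homotopic to the identity map,
then `f` is surjective. -/
theorem statement0 (n : ℕ) (M : Type*) [TopologicalSpace M] [T2Space M]
    [SecondCountableTopology M] [ChartedSpace (EuclideanSpace ℝ (Fin n)) M]
    [CompactSpace M] [ConnectedSpace M]
    (f : C(M, M)) (hf : f.Homotopic (ContinuousMap.id M)) :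
    Function.Surjective f :=
  statement0_general n M f hf
end

section
/- Let K be a finite simplicial complex of dimension r with H_r(|K|; ℤ/2) ≠ 0, and let σ = Σᵢ σᵢ be a nonzero r-cycle in the simplicial chain group C_r(K; ℤ/2) (so ∂_r σ = 0, σ ≠ 0). If f : |K| → |K| is continuous and homotopic to the identity, then the support ⋃ᵢ σᵢ(Δ_r) of σ is contained in f(|K|). -/
open Geometry

/-!
Since the image of `f` is closed, it suffices that `f` hits all interior points of the simplices of
the cycle. Suppose it misses an interior point `x` of such a simplex `s₀`, and let `h` be the
homotopy from `f` at time `0` to the identity at time `1`. Choose thresholds `θ v` equal to the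
barycentric coordinates of `x` at the vertices of `s₀`, and small positive elsewhere; their sum over
any simplex is at most `1`, so every point `p` of `[0, 1] × |K|` can be labelled by a vertex `v` at
which the coordinate of `h p` is at least `θ v`. The labels of a sufficiently fine simplex of
`[0, 1] × |K|` span a simplex of `K`, so the labelling pushes subdivided chains of the prism forward
to `K`. The prism over the cycle is pushed to chains of dimension `r + 1`, that is, to `0`; hence
the images of the cycle at the times `0` and `1` agree. At time `1` every simplex is labelled by its
own vertices, and the image is the cycle itself by Sperner's lemma. At time `0` the simplex `s₀`
does not occur: if it were the set of labels of a fine simplex, the coordinates of a value of `f`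
would almost dominate those of `x`, and so this value would be close to `x`.
-/

open Finset Metric

/-- Simplicial chains over `ℤ/2`. A simplex is its finite set of vertices; the empty simplex is
allowed, so that these are augmented chains. -/
abbrev ModTwoChain (A : Type*) := Finset A →₀ ZMod 2

namespace ModTwoChain

variable {A B : Type*}

/-- The basis chain consisting of a single simplex. -/
noncomputable def simplex (s : Finset A) : ModTwoChain A := Finsupp.single s 1

/-- The chains all of whose simplices belong to `S`. -/
noncomputable def chainsOn (S : Set (Finset A)) : Submodule (ZMod 2) (ModTwoChain A) :=
  Finsupp.supported _ _ S

theorem linearCombination_simplex {M : Type*} [AddCommGroup M] [Module (ZMod 2) M]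
    (g : Finset A → M) (s : Finset A) :
    Finsupp.linearCombination (ZMod 2) g (simplex s) = g s := by
  rw [simplex, Finsupp.linearCombination_single, one_smul]

theorem linearMap_congr {M : Type*} [AddCommGroup M] [Module (ZMod 2) M]
    {f g : ModTwoChain A →ₗ[ZMod 2] M} (h : ∀ s, f (simplex s) = g (simplex s))
    (x : ModTwoChain A) : f x = g x :=
  DFunLike.congr_fun (Finsupp.lhom_ext' fun s => LinearMap.ext_ring (h s)) x

theorem simplex_mem_chainsOn {S : Set (Finset A)} {s : Finset A} (hs : s ∈ S) :
    simplex s ∈ chainsOn S :=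
  Finsupp.single_mem_supported _ _ hs

theorem chainsOn_mono {S T : Set (Finset A)} (h : S ⊆ T) : chainsOn S ≤ chainsOn T :=
  Finsupp.supported_mono h

theorem mem_chainsOn_iff {S : Set (Finset A)} {x : ModTwoChain A} :
    x ∈ chainsOn S ↔ ∀ s, x s ≠ 0 → s ∈ S := by
  simp only [chainsOn, Finsupp.mem_supported', not_imp_comm, ne_eq]

theorem chainsOn_le_comap {M : Type*} [AddCommGroup M] [Module (ZMod 2) M] {S : Set (Finset A)}
    {N : Submodule (ZMod 2) M} {f : ModTwoChain A →ₗ[ZMod 2] M}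
    (h : ∀ s ∈ S, f (simplex s) ∈ N) : chainsOn S ≤ N.comap f := by
  rw [chainsOn, Finsupp.supported_eq_span_single, Submodule.span_le]
  rintro _ ⟨s, hs, rfl⟩
  exact h s hs

theorem eqOn_chainsOn {M : Type*} [AddCommGroup M] [Module (ZMod 2) M] {S : Set (Finset A)}
    {f g : ModTwoChain A →ₗ[ZMod 2] M} (h : ∀ s ∈ S, f (simplex s) = g (simplex s)) :
    Set.EqOn f g (chainsOn S) := fun _ hx =>
  chainsOn_le_comap (N := LinearMap.eqLocus f g) (f := LinearMap.id) h hx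

theorem apply_eq_zero_of_mem_chainsOn {M : Type*} [AddCommGroup M] [Module (ZMod 2) M]
    {S : Set (Finset A)} {f : ModTwoChain A →ₗ[ZMod 2] M} (h : ∀ s ∈ S, f (simplex s) = 0)
    {x : ModTwoChain A} (hx : x ∈ chainsOn S) : f x = 0 :=
  chainsOn_le_comap (N := ⊥) h hx

variable [DecidableEq B]

/-- The chain map induced by a vertex map. It annihilates the simplices on which the vertex map
is not injective. -/
noncomputable def map (l : A → B) : ModTwoChain A →ₗ[ZMod 2] ModTwoChain B :=
  Finsupp.linearCombination (ZMod 2) fun s => if #(s.image l) = #s then simplex (s.image l) else 0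

theorem map_simplex (l : A → B) (s : Finset A) :
    map l (simplex s) = if #(s.image l) = #s then simplex (s.image l) else 0 :=
  linearCombination_simplex _ _

theorem map_simplex_of_injective {l : A → B} (hl : l.Injective) (s : Finset A) :
    map l (simplex s) = simplex (s.image l) := by
  rw [map_simplex, if_pos (card_image_of_injective s hl)]

theorem map_simplex_mem_chainsOn {l : A → B} {s : Finset A} {S : Set (Finset B)}
    (h : #(s.image l) = #s → s.image l ∈ S) : map l (simplex s) ∈ chainsOn S := by
  rw [map_simplex]
  split_ifs with hcard
  · exact simplex_mem_chainsOn (h hcard)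
  · exact zero_mem _

variable [DecidableEq A]

/-- The simplicial boundary. The boundary of a vertex is the empty simplex. -/
noncomputable def boundary : Module.End (ZMod 2) (ModTwoChain A) :=
  Finsupp.linearCombination (ZMod 2) fun s => ∑ v ∈ s, simplex (s.erase v)

/-- The cone with apex `b`. It annihilates the simplices that already contain `b`. -/
noncomputable def cone (b : A) : Module.End (ZMod 2) (ModTwoChain A) :=
  Finsupp.linearCombination (ZMod 2) fun s => if b ∈ s then 0 else simplex (insert b s)

theorem boundary_simplex (s : Finset A) :
    boundary (simplex s) = ∑ v ∈ s, simplex (s.erase v) :=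
  linearCombination_simplex _ _

theorem cone_simplex (b : A) (s : Finset A) :
    cone b (simplex s) = if b ∈ s then 0 else simplex (insert b s) :=
  linearCombination_simplex _ _

theorem cone_simplex_of_notMem {b : A} {s : Finset A} (hb : b ∉ s) :
    cone b (simplex s) = simplex (insert b s) := by
  rw [cone_simplex, if_neg hb]

theorem cone_mem_chainsOn {b : A} {S T : Set (Finset A)}
    (h : ∀ s ∈ S, b ∉ s → insert b s ∈ T) {x : ModTwoChain A} (hx : x ∈ chainsOn S) :
    cone b x ∈ chainsOn T := by
  refine chainsOn_le_comap (f := cone b) (N := chainsOn T) (fun s hs => ?_) hx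
  rw [cone_simplex]
  split_ifs with hb
  · exact zero_mem _
  · exact simplex_mem_chainsOn (h s hs hb)

theorem boundary_cone (b : A) (x : ModTwoChain A) :
    boundary (cone b x) = x + cone b (boundary x) := by
  refine linearMap_congr (f := boundary ∘ₗ cone b) (g := .id + cone b ∘ₗ boundary) (fun s => ?_) x
  simp only [LinearMap.comp_apply, LinearMap.add_apply, LinearMap.id_apply, cone_simplex,
    boundary_simplex, map_sum]
  by_cases hb : b ∈ s
  · have cone_erase : ∀ v ∈ s.erase b,
        (if b ∈ s.erase v then 0 else simplex (insert b (s.erase v))) = 0 := fun v hv =>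
      if_pos (mem_erase.2 ⟨(ne_of_mem_erase hv).symm, hb⟩)
    rw [if_pos hb, map_zero, ← add_sum_erase s _ hb, sum_eq_zero cone_erase,
      if_neg (notMem_erase b s), insert_erase hb, add_zero, ZModModule.add_self]
  · rw [if_neg hb, boundary_simplex, sum_insert hb, erase_insert hb]
    congr 1
    refine sum_congr rfl fun v hv => ?_
    rw [if_neg fun h => hb (mem_of_mem_erase h),
      erase_insert_of_ne (ne_of_mem_of_not_mem hv hb).symm]

theorem boundary_boundary (x : ModTwoChain A) : boundary (boundary x) = 0 := by
  rw [← LinearMap.comp_apply, linearMap_congr (g := 0) (fun s => ?_) x, LinearMap.zero_apply]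
  rw [LinearMap.comp_apply, LinearMap.zero_apply]
  induction s using Finset.induction_on with
  | empty => rw [boundary_simplex, sum_empty, map_zero]
  | insert b s hb ih =>
    rw [← cone_simplex_of_notMem hb, boundary_cone, map_add, boundary_cone, ih, map_zero, add_zero,
      ZModModule.add_self]

theorem map_cone (l : A → B) (b : A) (x : ModTwoChain A) :
    map l (cone b x) = cone (l b) (map l x) := by
  refine linearMap_congr (f := map l ∘ₗ cone b) (g := cone (l b) ∘ₗ map l) (fun s => ?_) x
  simp only [LinearMap.comp_apply, cone_simplex, map_simplex]
  by_cases hb : b ∈ s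
  · rw [if_pos hb, map_zero]
    split_ifs
    · rw [cone_simplex, if_pos (mem_image_of_mem l hb)]
    · rw [map_zero]
  · rw [if_neg hb, map_simplex, image_insert, card_insert_of_notMem hb]
    have hle : #(s.image l) ≤ #s := card_image_le
    by_cases hlb : l b ∈ s.image l
    · rw [insert_eq_of_mem hlb, if_neg (by lia)]
      split_ifs
      · rw [cone_simplex, if_pos hlb]
      · rw [map_zero]
    · simp only [card_insert_of_notMem hlb, add_left_inj]
      split_ifs
      · rw [cone_simplex_of_notMem hlb]
      · rw [map_zero]

theorem boundary_map (l : A → B) (x : ModTwoChain A) :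
    boundary (map l x) = map l (boundary x) := by
  refine linearMap_congr (f := boundary ∘ₗ map l) (g := map l ∘ₗ boundary) (fun s => ?_) x
  simp only [LinearMap.comp_apply]
  induction s using Finset.induction_on with
  | empty =>
    rw [map_simplex, image_empty, if_pos (card_empty.trans card_empty.symm), boundary_simplex,
      boundary_simplex, sum_empty, sum_empty, map_zero]
  | insert b s hb ih =>
    rw [← cone_simplex_of_notMem hb, map_cone, boundary_cone, ih, boundary_cone, map_add, map_cone]

open Classical in
theorem boundary_simplex_apply (s t : Finset A) :
    boundary (simplex s) t = if t ⋖ s then 1 else 0 := by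
  rw [boundary_simplex, Finsupp.finsetSum_apply]
  simp only [simplex, Finsupp.single_apply]
  split_ifs with h
  · obtain ⟨a, ha, rfl⟩ := covBy_iff_exists_erase.1 h
    rw [sum_eq_single_of_mem a ha fun v hv hva => if_neg fun heq => hva (erase_inj s hv |>.1 heq),
      if_pos rfl]
  · exact sum_eq_zero fun v hv => if_neg fun heq : s.erase v = t => h (heq ▸ erase_covBy hv)

open Classical in
theorem boundary_apply (x : ModTwoChain A) (t : Finset A) :
    boundary x t = ∑ s ∈ x.support with t ⋖ s, x s := by
  rw [boundary, Finsupp.linearCombination_apply, Finsupp.sum, Finsupp.finsetSum_apply, sum_filter]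
  refine sum_congr rfl fun s _ => ?_
  rw [← boundary_simplex, Finsupp.smul_apply, boundary_simplex_apply, smul_eq_mul, mul_ite, mul_one,
    mul_zero]

theorem boundary_eq_zero_of_forall_card {r : ℕ} {x : ModTwoChain A}
    (hx : x ∈ chainsOn {s | #s = r + 1})
    (h : ∀ s, x s ≠ 0 → ∀ t ⊆ s, #t = r → ∑ u ∈ x.support with t ⊆ u, x u = 0) :
    boundary x = 0 := by
  classical
  ext t
  rw [boundary_apply, Finsupp.zero_apply]
  by_cases hex : ∃ s, x s ≠ 0 ∧ t ⋖ s
  · obtain ⟨s, hs, hts⟩ := hex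
    have hcard {u : Finset A} (hu : x u ≠ 0) : t ⋖ u ↔ t ⊆ u ∧ #t = r := by
      have := mem_chainsOn_iff.1 hx u hu
      rw [Finset.covBy_iff_card_sdiff_eq_one]
      refine and_congr_right fun htu => ?_
      rw [card_sdiff_of_subset htu]
      have := card_le_card htu
      rw [Set.mem_ofPred_eq] at *
      lia
    obtain ⟨hsub, ht⟩ := (hcard hs).1 hts
    rw [← h s hs t hsub ht]
    refine sum_congr (filter_congr fun u hu => ?_) fun _ _ => rfl
    rw [hcard (Finsupp.mem_support_iff.1 hu), and_iff_left ht]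
  · exact sum_eq_zero fun s hs => by_contra fun hxs => hex ⟨s, hxs, (mem_filter.1 hs).2⟩

theorem boundary_simplex_ne_zero {s : Finset A} (hs : s.Nonempty) : boundary (simplex s) ≠ 0 := by
  obtain ⟨v, hv⟩ := hs
  intro h
  have := DFunLike.congr_fun h (s.erase v)
  rw [boundary_simplex_apply, if_pos (erase_covBy hv)] at this
  exact one_ne_zero this

theorem eq_simplex_of_boundary_eq {s : Finset A} (hs : s.Nonempty) {x : ModTwoChain A}
    (hx : x ∈ chainsOn {s}) (h : boundary x = boundary (simplex s)) : x = simplex s := by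
  have hx' : x = x s • simplex s := by
    ext t
    by_cases hts : t = s
    · simp [simplex, hts]
    · have hxt : x t = 0 := by_contra fun hxt => hts (mem_chainsOn_iff.1 hx t hxt)
      simp [simplex, hxt, Ne.symm hts]
  have hxs : x s = 1 := by
    refine (show ∀ a : ZMod 2, a ≠ 0 → a = 1 by decide) _ fun h0 => boundary_simplex_ne_zero hs ?_
    rw [← h, hx', h0, zero_smul, map_zero]
  rw [hx', hxs, one_smul]

/-- Algebraic form of Sperner's lemma. -/
theorem apply_simplex_eq_self_of_carrier {F : Set (Finset A)} (hF : IsLowerSet F)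
    {φ : Module.End (ZMod 2) (ModTwoChain A)} (hφ : ∀ x, boundary (φ x) = φ (boundary x))
    (hempty : φ (simplex ∅) = simplex ∅) (hcarrier : ∀ s ∈ F, φ (simplex s) ∈ chainsOn {s})
    {s : Finset A} (hs : s ∈ F) : φ (simplex s) = simplex s := by
  induction s using Finset.strongInduction with
  | H s ih =>
    obtain rfl | hne := s.eq_empty_or_nonempty
    · exact hempty
    refine eq_simplex_of_boundary_eq hne (hcarrier s hs) ?_
    rw [hφ, boundary_simplex, map_sum]
    exact sum_congr rfl fun v hv => ih _ (erase_ssubset hv) (hF (erase_subset v s) hs)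

section ConeExtension

/-- The value on a simplex of `coneExtension`. -/
noncomputable def coneExtensionAux (apex : Finset A → B)
    (g : ModTwoChain A →ₗ[ZMod 2] ModTwoChain B) (z : ModTwoChain B) (s : Finset A) :
    ModTwoChain B :=
  if s = ∅ then z
  else cone (apex s) (g (simplex s) + ∑ v ∈ s.attach, coneExtensionAux apex g z (s.erase v))
termination_by #s
decreasing_by exact card_erase_lt_of_mem v.2

/-- The chain homotopy with boundary `g` obtained by acyclicity of cones: it sends `∅` to `z`, and a
nonempty simplex `s` to the cone with apex `apex s` on what its boundary has to be. -/
noncomputable def coneExtension (apex : Finset A → B)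
    (g : ModTwoChain A →ₗ[ZMod 2] ModTwoChain B) (z : ModTwoChain B) :
    ModTwoChain A →ₗ[ZMod 2] ModTwoChain B :=
  Finsupp.linearCombination (ZMod 2) (coneExtensionAux apex g z)

variable {apex : Finset A → B} {g : ModTwoChain A →ₗ[ZMod 2] ModTwoChain B} {z : ModTwoChain B}

theorem coneExtension_simplex_empty : coneExtension apex g z (simplex ∅) = z := by
  rw [coneExtension, linearCombination_simplex, coneExtensionAux, if_pos rfl]

theorem coneExtension_simplex {s : Finset A} (hs : s.Nonempty) :
    coneExtension apex g z (simplex s) =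
      cone (apex s) (g (simplex s) + coneExtension apex g z (boundary (simplex s))) := by
  rw [boundary_simplex, map_sum]
  simp only [coneExtension, linearCombination_simplex]
  rw [coneExtensionAux, if_neg hs.ne_empty,
    sum_attach s fun v => coneExtensionAux apex g z (s.erase v)]

theorem boundary_coneExtension (hz : boundary z = g (simplex ∅))
    (hg : ∀ x, boundary (g x) = g (boundary x)) (x : ModTwoChain A) :
    boundary (coneExtension apex g z x) = g x + coneExtension apex g z (boundary x) := by
  set R := coneExtension apex g z
  refine linearMap_congr (f := boundary ∘ₗ R) (g := g + R ∘ₗ boundary) (fun s => ?_) x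
  simp only [LinearMap.comp_apply, LinearMap.add_apply]
  induction s using Finset.strongInduction with
  | H s ih =>
    obtain rfl | hs := s.eq_empty_or_nonempty
    · rw [coneExtension_simplex_empty, hz, boundary_simplex, sum_empty, map_zero, add_zero]
    have h : boundary (R (boundary (simplex s))) = g (boundary (simplex s)) := by
      calc boundary (R (boundary (simplex s)))
          = g (boundary (simplex s)) + R (boundary (boundary (simplex s))) := by
            simp only [boundary_simplex s, map_sum, ← sum_add_distrib]
            exact sum_congr rfl fun v hv => ih _ (erase_ssubset hv)
        _ = g (boundary (simplex s)) := by rw [boundary_boundary, map_zero, add_zero]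
    rw [coneExtension_simplex hs, boundary_cone, map_add, hg, h, ZModModule.add_self, map_zero,
      add_zero]

theorem coneExtension_simplex_mem {M : Finset A → Submodule (ZMod 2) (ModTwoChain B)}
    (hz : z ∈ M ∅) (hg : ∀ s, s.Nonempty → cone (apex s) (g (simplex s)) ∈ M s)
    (hM : ∀ s, ∀ v ∈ s, ∀ y ∈ M (s.erase v), cone (apex s) y ∈ M s) (s : Finset A) :
    coneExtension apex g z (simplex s) ∈ M s := by
  induction s using Finset.strongInduction with
  | H s ih =>
    obtain rfl | hs := s.eq_empty_or_nonempty
    · rwa [coneExtension_simplex_empty]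
    rw [coneExtension_simplex hs, map_add, boundary_simplex, map_sum, map_sum]
    exact add_mem (hg s hs) (sum_mem fun v hv => hM s v hv _ (ih _ (erase_ssubset hv)))

end ConeExtension

end ModTwoChain

section Centroid

theorem centroid_eq_inv_card_smul_sum {V : Type*} [AddCommGroup V] [Module ℝ V] {s : Finset V}
    (hs : s.Nonempty) :
    s.centroid ℝ id = (#s : ℝ)⁻¹ • ∑ v ∈ s, v := by
  rw [centroid_eq_centerMass s hs, centerMass, sum_centroidWeights_eq_one_of_nonempty ℝ s hs,
    inv_one, one_smul, smul_sum]
  rfl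

theorem one_sub_inv_card_nonneg {A : Type*} (s : Finset A) : (0 : ℝ) ≤ 1 - 1 / #s := by
  rw [sub_nonneg, one_div]
  exact Nat.cast_inv_le_one _

theorem one_sub_inv_card_mul_diam_mono {W : Type*} [PseudoMetricSpace W] {s t : Finset W}
    (h : s ⊆ t) :
    (1 - 1 / #s) * diam (s : Set W) ≤ (1 - 1 / #t) * diam (t : Set W) := by
  obtain rfl | hs := s.eq_empty_or_nonempty
  · rw [coe_empty, diam_empty, mul_zero]
    exact mul_nonneg (one_sub_inv_card_nonneg t) diam_nonneg
  · have : (0 : ℝ) < #s := by exact_mod_cast hs.card_pos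
    refine mul_le_mul ?_ (diam_mono (coe_subset.2 h) t.finite_toSet.isBounded) diam_nonneg
      (one_sub_inv_card_nonneg t)
    gcongr

variable {W : Type*} [NormedAddCommGroup W] [NormedSpace ℝ W]

theorem dist_centroid_le_of_mem {s : Finset W} {v : W} (hv : v ∈ s) :
    dist v (s.centroid ℝ id) ≤ (1 - 1 / #s) * diam (s : Set W) := by
  classical
  have hs : s.Nonempty := ⟨v, hv⟩
  have hcard : (0 : ℝ) < #s := by exact_mod_cast hs.card_pos
  have hsub : v - s.centroid ℝ id = (#s : ℝ)⁻¹ • ∑ w ∈ s.erase v, (v - w) := by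
    rw [sum_erase _ (sub_self v), sum_sub_distrib, smul_sub, sum_const, ← Nat.cast_smul_eq_nsmul ℝ,
      inv_smul_smul₀ hcard.ne', centroid_eq_inv_card_smul_sum hs]
  have hsum : ‖∑ w ∈ s.erase v, (v - w)‖ ≤ (#s - 1) * diam (s : Set W) := by
    calc ‖∑ w ∈ s.erase v, (v - w)‖ ≤ ∑ _ ∈ s.erase v, diam (s : Set W) :=
          norm_sum_le_of_le _ fun w hw => (dist_eq_norm v w).symm.trans_le
            (dist_le_diam_of_mem s.finite_toSet.isBounded hv (mem_of_mem_erase hw))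
      _ = (#s - 1) * diam (s : Set W) := by
          rw [sum_const, nsmul_eq_mul, cast_card_erase_of_mem hv]
  calc dist v (s.centroid ℝ id) = (#s : ℝ)⁻¹ * ‖∑ w ∈ s.erase v, (v - w)‖ := by
        rw [dist_eq_norm, hsub, norm_smul, norm_inv, RCLike.norm_natCast]
    _ ≤ (#s : ℝ)⁻¹ * ((#s - 1) * diam (s : Set W)) := by gcongr
    _ = (1 - 1 / #s) * diam (s : Set W) := by field_simp

theorem dist_centroid_le {s : Finset W} {p : W} (hp : p ∈ convexHull ℝ (s : Set W)) :
    dist p (s.centroid ℝ id) ≤ (1 - 1 / #s) * diam (s : Set W) :=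
  convexHull_min (fun _ hv => dist_centroid_le_of_mem hv) (convex_closedBall _ _) hp

end Centroid

namespace ModTwoChain

section Subdivision

variable {W : Type*} [NormedAddCommGroup W] [NormedSpace ℝ W]

/-- The simplices in the convex hull of `s`, of the same dimension as `s`, of diameter at most
`d`. -/
def smallSimplices (s : Finset W) (d : ℝ) : Set (Finset W) :=
  {t | #t = #s ∧ (t : Set W) ⊆ convexHull ℝ s ∧ diam (t : Set W) ≤ d}

theorem smallSimplices_subset {s t : Finset W} {d d' : ℝ} (ht : t ∈ smallSimplices s d')
    {e : ℝ} (hd : e ≤ d) : smallSimplices t e ⊆ smallSimplices s d := fun _ hu =>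
  ⟨hu.1.trans ht.1, hu.2.1.trans (convexHull_min ht.2.1 (convex_convexHull ℝ _)), hu.2.2.trans hd⟩

variable [DecidableEq W]

/-- Barycentric subdivision. -/
noncomputable def subdivision : Module.End (ZMod 2) (ModTwoChain W) :=
  coneExtension (fun s => s.centroid ℝ id) 0 (simplex ∅)

theorem boundary_subdivision (x : ModTwoChain W) :
    boundary (subdivision x) = subdivision (boundary x) := by
  rw [subdivision, boundary_coneExtension, LinearMap.zero_apply, zero_add]
  · rw [boundary_simplex, sum_empty, LinearMap.zero_apply]
  · intro x
    rw [LinearMap.zero_apply, LinearMap.zero_apply, map_zero]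

theorem boundary_subdivision_pow (m : ℕ) (x : ModTwoChain W) :
    boundary ((subdivision ^ m) x) = (subdivision ^ m) (boundary x) := by
  induction m with
  | zero => rfl
  | succ m ih =>
    rw [pow_succ', Module.End.mul_apply, Module.End.mul_apply, boundary_subdivision, ih]

theorem subdivision_pow_simplex_empty (m : ℕ) :
    (subdivision ^ m) (simplex (∅ : Finset W)) = simplex ∅ := by
  rw [Module.End.pow_apply]
  exact Function.iterate_fixed coneExtension_simplex_empty m

theorem insert_centroid_mem_smallSimplices {s t : Finset W} {v : W} (hv : v ∈ s)
    (ht : t ∈ smallSimplices (s.erase v) ((1 - 1 / #(s.erase v)) * diam (s.erase v : Set W)))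
    (hb : s.centroid ℝ id ∉ t) :
    insert (s.centroid ℝ id) t ∈ smallSimplices s ((1 - 1 / #s) * diam (s : Set W)) := by
  have hts : (t : Set W) ⊆ convexHull ℝ s :=
    ht.2.1.trans (convexHull_mono (coe_subset.2 (erase_subset v s)))
  have hr := mul_nonneg (one_sub_inv_card_nonneg s) (diam_nonneg (s := (s : Set W)))
  refine ⟨?_, ?_, diam_le_of_forall_dist_le hr fun p hp q hq => ?_⟩
  · rw [card_insert_of_notMem hb, ht.1, card_erase_add_one hv]
  · rw [coe_insert]
    exact Set.insert_subset (s.centroid_mem_convexHull ⟨v, hv⟩) hts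
  · rw [mem_coe, mem_insert] at hp hq
    obtain rfl | hp := hp <;> obtain rfl | hq := hq
    · rwa [dist_self]
    · exact dist_comm q _ ▸ dist_centroid_le (hts hq)
    · exact dist_centroid_le (hts hp)
    · exact (dist_le_diam_of_mem t.finite_toSet.isBounded hp hq).trans
        (ht.2.2.trans (one_sub_inv_card_mul_diam_mono (erase_subset v s)))

theorem subdivision_simplex_mem (s : Finset W) :
    subdivision (simplex s) ∈ chainsOn (smallSimplices s ((1 - 1 / #s) * diam (s : Set W))) := by
  rw [subdivision]
  refine coneExtension_simplex_mem
    (M := fun s : Finset W => chainsOn (smallSimplices s ((1 - 1 / #s) * diam (s : Set W))))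
    ?_ ?_ ?_ s
  · exact simplex_mem_chainsOn ⟨rfl, subset_convexHull ℝ _, by simp⟩
  · intro s _
    rw [LinearMap.zero_apply, map_zero]
    exact Submodule.zero_mem _
  · exact fun s v hv y hy => cone_mem_chainsOn
      (fun t ht hb => insert_centroid_mem_smallSimplices hv ht hb) hy

theorem subdivision_pow_simplex_mem (s : Finset W) (m : ℕ) :
    (subdivision ^ m) (simplex s) ∈
      chainsOn (smallSimplices s ((1 - 1 / #s) ^ m * diam (s : Set W))) := by
  induction m with
  | zero =>
    exact simplex_mem_chainsOn ⟨rfl, subset_convexHull ℝ _, by rw [pow_zero, one_mul]⟩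
  | succ m ih =>
    rw [pow_succ' subdivision, Module.End.mul_apply]
    refine chainsOn_le_comap (f := subdivision) (N := chainsOn _) (fun t ht => ?_) ih
    refine chainsOn_mono (smallSimplices_subset ht ?_) (subdivision_simplex_mem t)
    rw [ht.1, pow_succ', mul_assoc]
    exact mul_le_mul_of_nonneg_left ht.2.2 (one_sub_inv_card_nonneg s)

theorem exists_subdivision_pow_simplex_mem {X : Set W} (hX : Bornology.IsBounded X) (N : ℕ)
    {δ : ℝ} (hδ : 0 < δ) :
    ∃ m, ∀ s : Finset W, #s ≤ N → (s : Set W) ⊆ X →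
      (subdivision ^ m) (simplex s) ∈ chainsOn (smallSimplices s δ) := by
  have hX0 : 0 < diam X + 1 := by have := diam_nonneg (s := X); positivity
  obtain ⟨m, hm⟩ := exists_pow_lt_of_lt_one (div_pos hδ hX0)
    (sub_lt_self 1 (Nat.one_div_pos_of_nat (α := ℝ) (n := N)))
  refine ⟨m, fun s hsN hsX => ?_⟩
  refine chainsOn_mono (smallSimplices_subset (d' := diam (s : Set W))
    ⟨rfl, subset_convexHull ℝ _, le_rfl⟩ ?_) (subdivision_pow_simplex_mem s m)
  obtain rfl | hs := s.eq_empty_or_nonempty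
  · simpa using hδ.le
  have hratio : 1 - 1 / (#s : ℝ) ≤ 1 - 1 / (N + 1) := by
    have : (#s : ℝ) ≤ N + 1 := by exact_mod_cast hsN.trans N.le_succ
    have : (0 : ℝ) < #s := by exact_mod_cast hs.card_pos
    gcongr
  calc (1 - 1 / #s) ^ m * diam (s : Set W)
      ≤ (1 - 1 / (N + 1)) ^ m * (diam X + 1) :=
        mul_le_mul (pow_le_pow_left₀ (one_sub_inv_card_nonneg s) hratio m)
          ((diam_mono hsX hX).trans (le_add_of_nonneg_right zero_le_one)) diam_nonneg
          (pow_nonneg ((one_sub_inv_card_nonneg s).trans hratio) m)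
    _ ≤ δ := ((lt_div_iff₀ hX0).1 hm).le

end Subdivision

section Prism

variable {E : Type*} [NormedAddCommGroup E] [NormedSpace ℝ E] [DecidableEq E]

theorem coe_image_mk_eq_prod {A B : Type*} [DecidableEq A] [DecidableEq B] (s : Finset B) (j : A) :
    (s.image (Prod.mk j) : Set (A × B)) = {j} ×ˢ (s : Set B) := by
  rw [coe_image, Set.singleton_prod]

theorem convexHull_image_mk (s : Finset E) (j : ℝ) :
    convexHull ℝ (s.image (Prod.mk j) : Set (ℝ × E)) = {j} ×ˢ convexHull ℝ (s : Set E) := by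
  rw [coe_image_mk_eq_prod, convexHull_prod, convexHull_singleton]

/-- The triangulation of the prism `[0, 1] × s` over a simplex `s` as a cone with apex in its
bottom. -/
noncomputable def prism : ModTwoChain E →ₗ[ZMod 2] ModTwoChain (ℝ × E) :=
  coneExtension (fun s => (0, s.centroid ℝ id)) (map (Prod.mk 1) + map (Prod.mk 0)) 0

theorem boundary_prism (x : ModTwoChain E) :
    boundary (prism x) = map (Prod.mk 1) x + map (Prod.mk 0) x + prism (boundary x) := by
  rw [prism, boundary_coneExtension, LinearMap.add_apply]
  · simp only [LinearMap.add_apply, map_simplex, image_empty, card_empty, if_true, map_zero,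
      ZModModule.add_self]
  · intro x
    simp only [LinearMap.add_apply, map_add, boundary_map]

/-- The simplices in the prism `[0, 1] × s` with `k` vertices more than `s`. -/
def prismSimplices (s : Finset E) (k : ℕ) : Set (Finset (ℝ × E)) :=
  {t | #t = #s + k ∧ (t : Set (ℝ × E)) ⊆ Set.Icc 0 1 ×ˢ convexHull ℝ (s : Set E)}

theorem insert_apex_mem_prismSimplices {s : Finset E} (hs : s.Nonempty) {k : ℕ}
    {t : Finset (ℝ × E)} (ht : t ∈ prismSimplices s k) (hb : (0, s.centroid ℝ id) ∉ t) :
    insert (0, s.centroid ℝ id) t ∈ prismSimplices s (k + 1) := by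
  refine ⟨(card_insert_of_notMem hb).trans (congrArg (· + 1) ht.1), ?_⟩
  rw [coe_insert]
  exact Set.insert_subset ⟨Set.left_mem_Icc.2 zero_le_one, s.centroid_mem_convexHull hs⟩ ht.2

theorem map_mk_simplex_mem_prismSimplices (s : Finset E) {j : ℝ} (hj : j ∈ Set.Icc (0 : ℝ) 1) :
    map (Prod.mk j) (simplex s) ∈ chainsOn (prismSimplices s 0) := by
  refine map_simplex_mem_chainsOn fun hcard => ⟨hcard, ?_⟩
  rw [coe_image_mk_eq_prod]
  exact Set.prod_mono (Set.singleton_subset_iff.2 hj) (subset_convexHull ℝ _)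

theorem prismSimplices_erase_subset {s : Finset E} {v : E} (hv : v ∈ s) (k : ℕ) :
    prismSimplices (s.erase v) (k + 1) ⊆ prismSimplices s k := fun t ht =>
  ⟨by rw [ht.1, ← card_erase_add_one hv, add_right_comm, add_assoc],
    ht.2.trans (Set.prod_mono_right (convexHull_mono (coe_subset.2 (erase_subset v s))))⟩

theorem prism_simplex_mem (s : Finset E) : prism (simplex s) ∈ chainsOn (prismSimplices s 1) := by
  rw [prism]
  refine coneExtension_simplex_mem (M := fun s : Finset E => chainsOn (prismSimplices s 1))
    (zero_mem _) (fun s hs => ?_) (fun s v hv y hy => ?_) s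
  · rw [LinearMap.add_apply]
    exact cone_mem_chainsOn (fun t ht hb => insert_apex_mem_prismSimplices hs ht hb)
      (add_mem (map_mk_simplex_mem_prismSimplices s (Set.right_mem_Icc.2 zero_le_one))
        (map_mk_simplex_mem_prismSimplices s (Set.left_mem_Icc.2 zero_le_one)))
  · exact cone_mem_chainsOn (fun t ht hb => insert_apex_mem_prismSimplices ⟨v, hv⟩
      (prismSimplices_erase_subset hv 0 ht) hb) hy

end Prism

section Approximation

variable {E : Type*} [NormedAddCommGroup E] [NormedSpace ℝ E] [DecidableEq E]

/-- The simplicial approximation of a homotopy at time `j`, on the `m`-th barycentric subdivision,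
that is given by a labelling `l` of space-time by vertices. -/
noncomputable def approximation (l : ℝ × E → E) (m : ℕ) (j : ℝ) :
    Module.End (ZMod 2) (ModTwoChain E) :=
  map l ∘ₗ (subdivision ^ m) ∘ₗ map (Prod.mk j)

variable {l : ℝ × E → E} {m : ℕ} {j δ : ℝ} {X : Set E}

theorem boundary_approximation (x : ModTwoChain E) :
    boundary (approximation l m j x) = approximation l m j (boundary x) := by
  simp only [approximation, LinearMap.comp_apply, boundary_map, boundary_subdivision_pow]

theorem approximation_simplex_empty :
    approximation l m j (simplex ∅) = simplex ∅ := by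
  rw [approximation, LinearMap.comp_apply, LinearMap.comp_apply,
    map_simplex_of_injective (Prod.mk_right_injective j), image_empty,
    subdivision_pow_simplex_empty, map_simplex, image_empty,
    if_pos (card_empty.trans card_empty.symm)]

theorem approximation_simplex_mem {s : Finset E} {T : Set (Finset E)}
    (hm : (subdivision ^ m) (simplex (s.image (Prod.mk j))) ∈
      chainsOn (smallSimplices (s.image (Prod.mk j)) δ))
    (hT : ∀ t : Finset (ℝ × E), (t : Set (ℝ × E)) ⊆ {j} ×ˢ convexHull ℝ (s : Set E) →
      diam (t : Set (ℝ × E)) ≤ δ → #(t.image l) = #s → t.image l ∈ T) :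
    approximation l m j (simplex s) ∈ chainsOn T := by
  rw [approximation, LinearMap.comp_apply, LinearMap.comp_apply,
    map_simplex_of_injective (Prod.mk_right_injective j)]
  refine chainsOn_le_comap (f := map l) (N := chainsOn T) (fun t ht => ?_) hm
  obtain ⟨htcard, hts, htδ⟩ := ht
  rw [convexHull_image_mk] at hts
  rw [card_image_of_injective s (Prod.mk_right_injective j)] at htcard
  exact map_simplex_mem_chainsOn fun hcard => hT t hts htδ (hcard.trans htcard)

/-- The simplices of a subdivided prism have too many vertices to be labelled injectively. -/
theorem map_subdivision_prism_simplex_eq_zero {r : ℕ}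
    (hm : ∀ t : Finset (ℝ × E), #t ≤ r + 2 → (t : Set (ℝ × E)) ⊆ Set.Icc 0 1 ×ˢ X →
      (subdivision ^ m) (simplex t) ∈ chainsOn (smallSimplices t δ))
    (hl : ∀ t : Finset (ℝ × E), (t : Set (ℝ × E)) ⊆ Set.Icc 0 1 ×ˢ X →
      diam (t : Set (ℝ × E)) ≤ δ → #(t.image l) ≤ r + 1)
    {s : Finset E} (hs : #s = r + 1) (hsX : convexHull ℝ (s : Set E) ⊆ X) :
    map l ((subdivision ^ m) (prism (simplex s))) = 0 := by
  rw [← LinearMap.comp_apply]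
  refine apply_eq_zero_of_mem_chainsOn (fun t ht => ?_) (prism_simplex_mem s)
  obtain ⟨htcard, hts⟩ := ht
  have htX : (t : Set (ℝ × E)) ⊆ Set.Icc 0 1 ×ˢ X := hts.trans (Set.prod_mono_right hsX)
  rw [LinearMap.comp_apply]
  refine apply_eq_zero_of_mem_chainsOn (fun u hu => ?_) (hm t (by lia) htX)
  obtain ⟨hucard, hut, huδ⟩ := hu
  have hus : (u : Set (ℝ × E)) ⊆ Set.Icc 0 1 ×ˢ convexHull ℝ (s : Set E) :=
    hut.trans (convexHull_min hts ((convex_Icc 0 1).prod (convex_convexHull ℝ _)))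
  have hcard := hl u (hus.trans (Set.prod_mono_right hsX)) huδ
  rw [map_simplex, if_neg (by lia)]

theorem approximation_one_eq_approximation_zero {r : ℕ}
    (hm : ∀ t : Finset (ℝ × E), #t ≤ r + 2 → (t : Set (ℝ × E)) ⊆ Set.Icc 0 1 ×ˢ X →
      (subdivision ^ m) (simplex t) ∈ chainsOn (smallSimplices t δ))
    (hl : ∀ t : Finset (ℝ × E), (t : Set (ℝ × E)) ⊆ Set.Icc 0 1 ×ˢ X →
      diam (t : Set (ℝ × E)) ≤ δ → #(t.image l) ≤ r + 1)
    {c : ModTwoChain E} (hc : c ∈ chainsOn {s | #s = r + 1 ∧ convexHull ℝ (s : Set E) ⊆ X})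
    (hcycle : boundary c = 0) : approximation l m 1 c = approximation l m 0 c := by
  have hprism : map l ((subdivision ^ m) (prism c)) = 0 :=
    apply_eq_zero_of_mem_chainsOn (f := map l ∘ₗ (subdivision ^ m) ∘ₗ prism)
      (fun s hs => map_subdivision_prism_simplex_eq_zero hm hl hs.1 hs.2) hc
  have hboundary := congrArg boundary hprism
  rw [boundary_map, boundary_subdivision_pow, boundary_prism, hcycle, map_zero, map_zero, add_zero,
    map_add, map_add] at hboundary
  exact eq_of_sub_eq_zero (ZModModule.sub_eq_add (_ : ModTwoChain E) _ ▸ hboundary)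

theorem apply_eq_zero_of_labelling {F : Set (Finset E)} (hF : IsLowerSet F) {r : ℕ}
    (hr : ∀ s ∈ F, #s ≤ r + 1) (hX : Bornology.IsBounded X)
    (hFX : ∀ s ∈ F, convexHull ℝ (s : Set E) ⊆ X) {c : ModTwoChain E}
    (hc : c ∈ chainsOn {s ∈ F | #s = r + 1}) (hcycle : boundary c = 0) (hδ : 0 < δ)
    (hl : ∀ t : Finset (ℝ × E), (t : Set (ℝ × E)) ⊆ Set.Icc 0 1 ×ˢ X →
      diam (t : Set (ℝ × E)) ≤ δ → t.image l ∈ F)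
    (hl₁ : ∀ s ∈ F, ∀ y ∈ convexHull ℝ (s : Set E), l (1, y) ∈ s) {s₀ : Finset E}
    (hl₀ : ∀ t : Finset (ℝ × E), (t : Set (ℝ × E)) ⊆ {0} ×ˢ X →
      diam (t : Set (ℝ × E)) ≤ δ → t.image l ≠ s₀) : c s₀ = 0 := by
  obtain ⟨m, hm⟩ :=
    exists_subdivision_pow_simplex_mem ((isBounded_Icc (0 : ℝ) 1).prod hX) (r + 2) hδ
  have hslice : ∀ s ∈ F, ∀ j ∈ Set.Icc (0 : ℝ) 1,
      (subdivision ^ m) (simplex (s.image (Prod.mk j))) ∈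
        chainsOn (smallSimplices (s.image (Prod.mk j)) δ) := by
    intro s hs j hj
    refine hm _ (card_image_le.trans ((hr s hs).trans (Nat.le_succ _))) ?_
    rw [coe_image_mk_eq_prod]
    exact Set.prod_mono (Set.singleton_subset_iff.2 hj)
      ((subset_convexHull ℝ _).trans (hFX s hs))
  have hone : approximation l m 1 c = c := by
    refine eqOn_chainsOn (f := approximation l m 1) (g := .id) (fun s hs => ?_) hc
    refine apply_simplex_eq_self_of_carrier hF boundary_approximation approximation_simplex_empty
      (fun s hs => approximation_simplex_mem
        (hslice s hs 1 (Set.right_mem_Icc.2 zero_le_one)) fun t ht _ hcard => ?_) hs.1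
    refine eq_of_subset_of_card_le (image_subset_iff.2 fun p hp => ?_) hcard.ge
    obtain ⟨hp₁, hps⟩ := ht hp
    rw [← Prod.mk.eta (p := p), Set.mem_singleton_iff.1 hp₁]
    exact hl₁ s hs p.2 hps
  have hzero : approximation l m 0 c ∈ chainsOn {s₀}ᶜ :=
    chainsOn_le_comap (f := approximation l m 0) (N := chainsOn {s₀}ᶜ) (fun s hs =>
      approximation_simplex_mem (hslice s hs.1 0 (Set.left_mem_Icc.2 zero_le_one))
        fun t ht htδ _ => hl₀ t (ht.trans (Set.prod_mono_right (hFX s hs.1))) htδ) hc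
  have hsub : {s ∈ F | #s = r + 1} ⊆ {s | #s = r + 1 ∧ convexHull ℝ (s : Set E) ⊆ X} :=
    fun s hs => ⟨hs.2, hFX s hs.1⟩
  have heq := approximation_one_eq_approximation_zero hm (fun t ht htδ => hr _ (hl t ht htδ))
    (chainsOn_mono hsub hc) hcycle
  rw [← heq, hone] at hzero
  exact by_contra fun hcs => mem_chainsOn_iff.1 hzero s₀ hcs rfl

end Approximation

end ModTwoChain

section BarycentricWeights

variable {E : Type*} [AddCommGroup E] [Module ℝ E]

/-- The function `w` expresses `y` as a convex combination of the vertices in `s`. It is required to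
vanish off `s`, so that weights on different simplices can be compared. -/
structure IsBarycentricWeight (s : Finset E) (y : E) (w : E → ℝ) : Prop where
  nonneg : ∀ v, 0 ≤ w v
  eq_zero_of_notMem : ∀ v ∉ s, w v = 0
  sum_eq_one : ∑ v ∈ s, w v = 1
  sum_smul_eq : ∑ v ∈ s, w v • v = y

namespace IsBarycentricWeight

variable {s t : Finset E} {y y' : E} {w w' : E → ℝ}

theorem mem_convexHull (h : IsBarycentricWeight s y w) : y ∈ convexHull ℝ (s : Set E) :=
  Finset.mem_convexHull'.2 ⟨w, fun v _ => h.nonneg v, h.sum_eq_one, h.sum_smul_eq⟩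

theorem exists_of_mem_convexHull (hy : y ∈ convexHull ℝ (s : Set E)) :
    ∃ w, IsBarycentricWeight s y w := by
  classical
  obtain ⟨w, hw, hsum, hsmul⟩ := Finset.mem_convexHull'.1 hy
  refine ⟨fun v => if v ∈ s then w v else 0, fun v => ?_, fun v hv => if_neg hv, ?_, ?_⟩
  · split_ifs with hv
    exacts [hw v hv, le_rfl]
  · rw [← hsum]
    exact sum_congr rfl fun v hv => if_pos hv
  · rw [← hsmul]
    exact sum_congr rfl fun v hv => by rw [if_pos hv]

theorem mono (h : IsBarycentricWeight s y w) (hst : s ⊆ t) : IsBarycentricWeight t y w where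
  nonneg := h.nonneg
  eq_zero_of_notMem v hv := h.eq_zero_of_notMem v fun hvs => hv (hst hvs)
  sum_eq_one := by
    rw [← h.sum_eq_one, sum_subset hst fun v _ hv => h.eq_zero_of_notMem v hv]
  sum_smul_eq := by
    rw [← h.sum_smul_eq, sum_subset hst fun v _ hv => by rw [h.eq_zero_of_notMem v hv, zero_smul]]

theorem unique (hs : AffineIndependent ℝ ((↑) : s → E)) (h : IsBarycentricWeight s y w)
    (h' : IsBarycentricWeight s y w') : w = w' := by
  funext v
  by_cases hv : v ∈ s
  · refine sub_eq_zero.1 (affineIndependent_iff.1 hs univ (fun i => w i - w' i) ?_ ?_ ⟨v, hv⟩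
      (mem_univ _))
    · rw [sum_coe_sort s fun i => w i - w' i, sum_sub_distrib, h.sum_eq_one, h'.sum_eq_one,
        sub_self]
    · rw [sum_coe_sort s fun i => (w i - w' i) • i]
      simp only [sub_smul]
      rw [sum_sub_distrib, h.sum_smul_eq, h'.sum_smul_eq, sub_self]
  · rw [h.eq_zero_of_notMem v hv, h'.eq_zero_of_notMem v hv]

theorem eq_of_le (h : IsBarycentricWeight s y w) (h' : IsBarycentricWeight t y' w')
    (hle : ∀ v ∈ s, w v ≤ w' v) : y = y' := by
  classical
  have hU := h.mono (subset_union_left (s₂ := t))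
  have hU' := h'.mono (subset_union_right (s₁ := s))
  have hleU : ∀ v ∈ s ∪ t, w v ≤ w' v := fun v _ => by
    by_cases hv : v ∈ s
    · exact hle v hv
    · exact (h.eq_zero_of_notMem v hv).trans_le (h'.nonneg v)
  have heq := (sum_eq_sum_iff_of_le hleU).1 (hU.sum_eq_one.trans hU'.sum_eq_one.symm)
  rw [← hU.sum_smul_eq, ← hU'.sum_smul_eq]
  exact sum_congr rfl fun v hv => by rw [heq v hv]

theorem convexCombination (h : IsBarycentricWeight s y w) (h' : IsBarycentricWeight s y' w')
    {a b : ℝ} (ha : 0 ≤ a) (hb : 0 ≤ b) (hab : a + b = 1) :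
    IsBarycentricWeight s (a • y + b • y') (fun v => a * w v + b * w' v) where
  nonneg v := add_nonneg (mul_nonneg ha (h.nonneg v)) (mul_nonneg hb (h'.nonneg v))
  eq_zero_of_notMem v hv := by
    rw [h.eq_zero_of_notMem v hv, h'.eq_zero_of_notMem v hv, mul_zero, mul_zero, add_zero]
  sum_eq_one := by
    rw [sum_add_distrib, ← mul_sum, ← mul_sum, h.sum_eq_one, h'.sum_eq_one, mul_one, mul_one, hab]
  sum_smul_eq := by
    simp only [add_smul, mul_smul]
    rw [sum_add_distrib, ← smul_sum, ← smul_sum, h.sum_smul_eq, h'.sum_smul_eq]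

theorem centroid (hs : s.Nonempty) :
    IsBarycentricWeight s (s.centroid ℝ id) ((s : Set E).indicator fun _ => (#s : ℝ)⁻¹) where
  nonneg := Set.indicator_nonneg fun _ _ => by positivity
  eq_zero_of_notMem v hv := Set.indicator_of_notMem (mt mem_coe.1 hv) _
  sum_eq_one := by
    rw [sum_congr rfl fun v hv => Set.indicator_of_mem (mem_coe.2 hv) _, sum_const, nsmul_eq_mul,
      mul_inv_cancel₀ (Nat.cast_ne_zero.2 hs.card_ne_zero)]
  sum_smul_eq := by
    rw [centroid_eq_inv_card_smul_sum hs, smul_sum]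
    exact sum_congr rfl fun v hv => by rw [Set.indicator_of_mem (mem_coe.2 hv)]

theorem extend_stdSimplex {w : s → ℝ} (hw : w ∈ stdSimplex ℝ s) :
    IsBarycentricWeight s (∑ i, w i • (i : E)) (Function.extend Subtype.val w fun _ => 0) := by
  have happly (i : s) : Function.extend Subtype.val w (fun _ => 0) (i : E) = w i :=
    Subtype.val_injective.extend_apply w _ i
  have hzero : ∀ v ∉ s, Function.extend Subtype.val w (fun _ => (0 : ℝ)) v = 0 := fun v hv =>
    Function.extend_apply' w _ v fun ⟨i, hi⟩ => hv (hi ▸ i.2)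
  refine ⟨fun v => ?_, hzero, ?_, ?_⟩
  · by_cases hv : v ∈ s
    · exact (hw.1 ⟨v, hv⟩).trans_eq (happly ⟨v, hv⟩).symm
    · exact (hzero v hv).ge
  · rw [← sum_coe_sort, ← hw.2]
    exact sum_congr rfl fun i _ => happly i
  · rw [← sum_coe_sort]
    exact sum_congr rfl fun i _ => by rw [happly]

theorem unique_of_mem_faces {K : Geometry.SimplicialComplex ℝ E} (hs : s ∈ K.faces)
    (ht : t ∈ K.faces) (h : IsBarycentricWeight s y w) (h' : IsBarycentricWeight t y w') :
    w = w' := by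
  classical
  have hy := K.inter_subset_convexHull hs ht ⟨h.mem_convexHull, h'.mem_convexHull⟩
  rw [← coe_inter] at hy
  obtain ⟨u, hu⟩ := exists_of_mem_convexHull hy
  rw [h.unique (K.indep hs) (hu.mono inter_subset_left),
    h'.unique (K.indep ht) (hu.mono inter_subset_right)]

end IsBarycentricWeight

open Classical in
/-- The barycentric coordinates of the point `y` of the polyhedron of `K`; they are zero if `y` is
not in the polyhedron. -/
noncomputable def barycentricCoord (K : Geometry.SimplicialComplex ℝ E) (y : E) : E → ℝ :=
  if h : ∃ w, ∃ s ∈ K.faces, IsBarycentricWeight s y w then h.choose else 0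

variable {K : Geometry.SimplicialComplex ℝ E} {s : Finset E} {y : E}

theorem IsBarycentricWeight.barycentricCoord_eq {w : E → ℝ} (h : IsBarycentricWeight s y w)
    (hs : s ∈ K.faces) : barycentricCoord K y = w := by
  have hex : ∃ w, ∃ s ∈ K.faces, IsBarycentricWeight s y w := ⟨w, s, hs, h⟩
  obtain ⟨t, ht, hw⟩ := hex.choose_spec
  rw [barycentricCoord, dif_pos hex]
  exact hw.unique_of_mem_faces ht hs h

theorem isBarycentricWeight_barycentricCoord (hs : s ∈ K.faces)
    (hy : y ∈ convexHull ℝ (s : Set E)) : IsBarycentricWeight s y (barycentricCoord K y) := by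
  obtain ⟨w, hw⟩ := IsBarycentricWeight.exists_of_mem_convexHull hy
  rwa [hw.barycentricCoord_eq hs]

theorem exists_isBarycentricWeight_barycentricCoord (hy : y ∈ K.space) :
    ∃ s ∈ K.faces, IsBarycentricWeight s y (barycentricCoord K y) := by
  obtain ⟨s, hs, hys⟩ := SimplicialComplex.mem_space_iff.1 hy
  exact ⟨s, hs, isBarycentricWeight_barycentricCoord hs hys⟩

theorem isLowerSet_insert_empty_faces : IsLowerSet (insert ∅ K.faces) := by
  rintro s t hts hs
  obtain rfl | ht := t.eq_empty_or_nonempty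
  · exact Set.mem_insert _ _
  · obtain rfl | hs := hs
    · exact absurd (subset_empty.1 hts) ht.ne_empty
    · exact Set.mem_insert_of_mem _ (K.down_closed hs hts ht)

theorem exists_le_barycentricCoord {θ : E → ℝ} (hθ : ∀ s ∈ K.faces, ∑ v ∈ s, θ v ≤ 1)
    (hy : y ∈ K.space) : ∃ v, θ v ≤ barycentricCoord K y v := by
  obtain ⟨s, hs, hw⟩ := exists_isBarycentricWeight_barycentricCoord hy
  obtain ⟨v, -, hv⟩ := exists_le_of_sum_le (K.nonempty_of_mem_faces hs)
    ((hθ s hs).trans_eq hw.sum_eq_one.symm)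
  exact ⟨v, hv⟩

theorem barycentricCoord_eq_zero_of_notMem_vertices (hy : y ∈ K.space) {v : E}
    (hv : v ∉ K.vertices) : barycentricCoord K y v = 0 := by
  obtain ⟨s, hs, hw⟩ := exists_isBarycentricWeight_barycentricCoord hy
  refine hw.eq_zero_of_notMem v fun hvs => hv ?_
  rw [SimplicialComplex.vertices_eq]
  exact Set.mem_biUnion hs hvs

theorem finite_vertices (hK : K.faces.Finite) : K.vertices.Finite := by
  rw [SimplicialComplex.vertices_eq]
  exact hK.biUnion fun s _ => s.finite_toSet

theorem barycentricCoord_sum_smul (hs : s ∈ K.faces) {w : s → ℝ} (hw : w ∈ stdSimplex ℝ s) (i : s) :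
    barycentricCoord K (∑ j, w j • (j : E)) i = w i := by
  rw [(IsBarycentricWeight.extend_stdSimplex hw).barycentricCoord_eq hs,
    Subtype.val_injective.extend_apply]

theorem exists_mem_stdSimplex_sum_smul_eq {y : E} (hy : y ∈ convexHull ℝ (s : Set E)) :
    ∃ w ∈ stdSimplex ℝ s, ∑ j, w j • (j : E) = y := by
  obtain ⟨w, hw⟩ := IsBarycentricWeight.exists_of_mem_convexHull hy
  refine ⟨fun i => w i, ⟨fun i => hw.nonneg i, ?_⟩, ?_⟩
  · rw [sum_coe_sort s w, hw.sum_eq_one]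
  · rw [sum_coe_sort s fun v => w v • v, hw.sum_smul_eq]

end BarycentricWeights

section Continuity

variable {E : Type*} [NormedAddCommGroup E] [NormedSpace ℝ E]
  {K : Geometry.SimplicialComplex ℝ E} {s : Finset E}

theorem continuousOn_barycentricCoord_convexHull (hs : s ∈ K.faces) (v : E) :
    ContinuousOn (barycentricCoord K · v) (convexHull ℝ (s : Set E)) := by
  by_cases hv : v ∈ s
  · let e : stdSimplex ℝ s → E := fun w => ∑ i, w.1 i • (i : E)
    have he : Continuous e := continuous_finsetSum _ fun i _ =>
      ((continuous_apply i).comp continuous_subtype_val).smul continuous_const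
    have hinj : e.Injective := fun w w' h => Subtype.ext <| funext fun i => by
      rw [← barycentricCoord_sum_smul hs w.2, ← barycentricCoord_sum_smul hs w'.2]
      exact congrArg (barycentricCoord K · i) h
    have hrange : convexHull ℝ (s : Set E) ⊆ Set.range e := fun y hy => by
      obtain ⟨w, hw, rfl⟩ := exists_mem_stdSimplex_sum_smul_eq hy
      exact ⟨⟨w, hw⟩, rfl⟩
    refine ContinuousOn.mono ?_ hrange
    rw [← Set.image_univ, (he.isClosedEmbedding hinj).isInducing.continuousOn_image_iff,
      continuousOn_univ]
    have hcomp : (barycentricCoord K · v) ∘ e = fun w => w.1 ⟨v, hv⟩ := funext fun w =>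
      barycentricCoord_sum_smul hs w.2 ⟨v, hv⟩
    rw [hcomp]
    exact (continuous_apply _).comp continuous_subtype_val
  · exact continuousOn_const.congr fun y hy =>
      (isBarycentricWeight_barycentricCoord hs hy).eq_zero_of_notMem v hv

theorem continuousOn_barycentricCoord (hK : K.faces.Finite) (v : E) :
    ContinuousOn (barycentricCoord K · v) K.space := by
  have : Finite K.faces := hK
  rw [SimplicialComplex.space, Set.biUnion_eq_iUnion]
  exact LocallyFinite.continuousOn_iUnion (locallyFinite_of_finite _)
    (fun s => (s : Finset E).finite_toSet.isClosed_convexHull ℝ)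
    fun s => continuousOn_barycentricCoord_convexHull s.2 v

theorem isCompact_space (hK : K.faces.Finite) : IsCompact K.space :=
  hK.isCompact_biUnion fun s _ => s.finite_toSet.isCompact_convexHull ℝ

end Continuity

section Threshold

theorem exists_threshold {A : Type*} {s : Finset A} (hs : s.Nonempty) {w : A → ℝ}
    (hw : ∀ v ∈ s, 0 < w v) :
    ∃ θ : A → ℝ, ∃ η > 0, (∀ v ∈ s, θ v = w v) ∧ (∀ v, η ≤ θ v) ∧
      ∀ t : Finset A, #t ≤ #s → ∑ v ∈ t, θ v ≤ ∑ v ∈ s, w v := by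
  classical
  have hη : 0 < s.inf' hs w := (lt_inf'_iff hs).2 hw
  set η := s.inf' hs w
  have hηw : ∀ v ∈ s, η ≤ w v := fun v hv => inf'_le w hv
  refine ⟨s.piecewise w fun _ => η, η, hη, fun v hv => piecewise_eq_of_mem _ _ _ hv,
    fun v => ?_, fun t ht => ?_⟩
  · by_cases hv : v ∈ s
    · rw [piecewise_eq_of_mem _ _ _ hv]
      exact hηw v hv
    · rw [piecewise_eq_of_notMem _ _ _ hv]
  · have hcard : (#(t \ s) : ℝ) ≤ #(s \ t) := by
      exact_mod_cast card_sdiff_le_card_sdiff_iff.2 ht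
    calc ∑ v ∈ t, s.piecewise w (fun _ => η) v
        = ∑ v ∈ t ∩ s, w v + #(t \ s) * η := by
          rw [sum_piecewise, sum_const, nsmul_eq_mul]
      _ ≤ ∑ v ∈ s ∩ t, w v + #(s \ t) * η := by rw [inter_comm]; gcongr
      _ ≤ ∑ v ∈ s ∩ t, w v + ∑ v ∈ s \ t, w v := by
          gcongr
          rw [← nsmul_eq_mul]
          exact card_nsmul_le_sum _ _ _ fun v hv => hηw v (mem_sdiff.1 hv).1
      _ = ∑ v ∈ s, w v := sum_inter_add_sum_sdiff s t w

end Threshold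

section Coordinates

variable {E : Type*} [NormedAddCommGroup E] [NormedSpace ℝ E]
  {K : Geometry.SimplicialComplex ℝ E} {s : Finset E} {x y : E}

theorem exists_pos_forall_dist_le_barycentricCoord_lt_add (hK : K.faces.Finite) {P : Type*}
    [PseudoMetricSpace P] {A : Set P} (hA : IsCompact A) {h : P → E} (hh : ContinuousOn h A)
    (hhK : Set.MapsTo h A K.space) {ε : ℝ} (hε : 0 < ε) :
    ∃ δ > 0, ∀ p ∈ A, ∀ q ∈ A, dist p q ≤ δ →
      ∀ v, barycentricCoord K (h p) v < barycentricCoord K (h q) v + ε := by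
  have := (finite_vertices hK).fintype
  have hcont : ContinuousOn (fun p (v : K.vertices) => barycentricCoord K (h p) v) A :=
    continuousOn_pi.2 fun v => (continuousOn_barycentricCoord hK v).comp hh hhK
  obtain ⟨δ, hδ, hunif⟩ := uniformContinuousOn_iff_le.1
    (hA.uniformContinuousOn_of_continuous hcont) (ε / 2) (half_pos hε)
  refine ⟨δ, hδ, fun p hp q hq hpq v => ?_⟩
  by_cases hv : v ∈ K.vertices
  · have := (dist_le_pi_dist _ _ (⟨v, hv⟩ : K.vertices)).trans (hunif p hp q hq hpq)
    rw [Real.dist_eq] at this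
    linarith [le_abs_self (barycentricCoord K (h p) v - barycentricCoord K (h q) v)]
  · rw [barycentricCoord_eq_zero_of_notMem_vertices (hhK hp) hv,
      barycentricCoord_eq_zero_of_notMem_vertices (hhK hq) hv, zero_add]
    exact hε

theorem exists_pos_forall_exists_barycentricCoord_add_le (hK : K.faces.Finite) (hs : s ∈ K.faces)
    (hx : x ∈ convexHull ℝ (s : Set E)) {Y : Set E} (hY : IsCompact Y) (hYK : Y ⊆ K.space)
    (hxY : x ∉ Y) :
    ∃ ε > 0, ∀ y ∈ Y, ∃ v ∈ s, barycentricCoord K y v + ε ≤ barycentricCoord K x v := by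
  have hne := K.nonempty_of_mem_faces hs
  have hcont : ContinuousOn
      (fun y => s.sup' hne fun v => barycentricCoord K x v - barycentricCoord K y v) Y :=
    ContinuousOn.finset_sup'_apply hne fun v _ =>
      continuousOn_const.sub ((continuousOn_barycentricCoord hK v).mono hYK)
  have hpos : ∀ y ∈ Y,
      0 < s.sup' hne fun v => barycentricCoord K x v - barycentricCoord K y v := fun y hy => by
    obtain ⟨t, -, hw⟩ := exists_isBarycentricWeight_barycentricCoord (hYK hy)
    by_contra! hle
    refine hxY ((isBarycentricWeight_barycentricCoord hs hx).eq_of_le hw (fun v hv => ?_) ▸ hy)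
    exact sub_nonpos.1 ((le_sup' _ hv).trans hle)
  obtain ⟨ε, hε, hle⟩ := hY.exists_forall_le' hcont hpos
  refine ⟨ε, hε, fun y hy => ?_⟩
  obtain ⟨v, hv, hεv⟩ := (le_sup'_iff hne).1 (hle y hy)
  exact ⟨v, hv, by linarith⟩

theorem mem_closure_forall_barycentricCoord_pos (hs : s ∈ K.faces)
    (hy : y ∈ convexHull ℝ (s : Set E)) :
    y ∈ closure {x ∈ convexHull ℝ (s : Set E) | ∀ v ∈ s, 0 < barycentricCoord K x v} := by
  have hne := K.nonempty_of_mem_faces hs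
  have hw := isBarycentricWeight_barycentricCoord hs hy
  refine closure_mono ?_ (segment_subset_closure_openSegment
    (left_mem_segment ℝ y (s.centroid ℝ id)))
  rintro _ ⟨a, b, ha, hb, hab, rfl⟩
  have hcomb := hw.convexCombination (.centroid hne) ha.le hb.le hab
  refine ⟨hcomb.mem_convexHull, fun v hv => ?_⟩
  have : (0 : ℝ) < #s := by exact_mod_cast hne.card_pos
  calc 0 < a * barycentricCoord K y v + b * (#s : ℝ)⁻¹ :=
        add_pos_of_nonneg_of_pos (mul_nonneg ha.le (hw.nonneg v)) (by positivity)
    _ = barycentricCoord K (a • y + b • s.centroid ℝ id) v := by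
        simp only [hcomb.barycentricCoord_eq hs, Set.indicator_of_mem (mem_coe.2 hv)]

end Coordinates

theorem exists_homotopy_on_ambient {A B : Type*} [TopologicalSpace A] [TopologicalSpace B]
    [Nonempty B] {X : Set A} {Y : Set B} {f g : C(X, Y)} (h : f.Homotopic g) :
    ∃ H : ℝ × A → B, ContinuousOn H (Set.Icc 0 1 ×ˢ X) ∧ Set.MapsTo H (Set.Icc 0 1 ×ˢ X) Y ∧
      (∀ y : X, H (0, y) = f y) ∧ ∀ y : X, H (1, y) = g y := by
  obtain ⟨F⟩ := h
  let e : unitInterval × X → ℝ × A := Prod.map Subtype.val Subtype.val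
  have he : Topology.IsEmbedding e := .prodMap .subtypeVal .subtypeVal
  have hrange : Set.range e = Set.Icc 0 1 ×ˢ X := by
    rw [Set.range_prodMap, Subtype.range_coe, Subtype.range_coe]
  let H : ℝ × A → B := Function.extend e (fun p => F p) fun _ => Classical.arbitrary B
  have hHe (p : unitInterval × X) : H (e p) = F p := he.injective.extend_apply _ _ p
  refine ⟨H, ?_, ?_, fun y => ?_, fun y => ?_⟩
  · rw [← hrange, ← Set.image_univ, he.isInducing.continuousOn_image_iff, continuousOn_univ]
    exact (continuous_subtype_val.comp F.continuous).congr fun p => (hHe p).symm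
  · rw [← hrange]
    rintro _ ⟨p, rfl⟩
    exact hHe p ▸ (F p).2
  · exact (hHe (0, y)).trans (congrArg Subtype.val (F.apply_zero y))
  · exact (hHe (1, y)).trans (congrArg Subtype.val (F.apply_one y))

section Labelling

variable {E P : Type*} [AddCommGroup E] [Module ℝ E] [DecidableEq E]
  [PseudoMetricSpace P] {K : Geometry.SimplicialComplex ℝ E} {A : Set P} {h : P → E} {l : P → E}

theorem image_mem_insert_empty_faces {δ η : ℝ} (hhK : Set.MapsTo h A K.space)
    (hδ : ∀ p ∈ A, ∀ q ∈ A, dist p q ≤ δ →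
      ∀ v, barycentricCoord K (h p) v < barycentricCoord K (h q) v + η)
    (hl : ∀ p ∈ A, η ≤ barycentricCoord K (h p) (l p)) {t : Finset P} (htA : (t : Set P) ⊆ A)
    (ht : diam (t : Set P) ≤ δ) : t.image l ∈ insert ∅ K.faces := by
  obtain rfl | ⟨p, hp⟩ := t.eq_empty_or_nonempty
  · exact Set.mem_insert _ _
  obtain ⟨s, hs, hw⟩ := exists_isBarycentricWeight_barycentricCoord (hhK (htA hp))
  refine isLowerSet_insert_empty_faces (image_subset_iff.2 fun q hq => ?_)
    (Set.mem_insert_of_mem _ hs)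
  by_contra hlq
  have hpq := (dist_le_diam_of_mem t.finite_toSet.isBounded hq hp).trans ht
  have := hδ q (htA hq) p (htA hp) hpq (l q)
  rw [hw.eq_zero_of_notMem _ hlq] at this
  linarith [hl q (htA hq)]

theorem image_ne_of_gap {θ : E → ℝ} {δ ε : ℝ}
    (hδ : ∀ p ∈ A, ∀ q ∈ A, dist p q ≤ δ →
      ∀ v, barycentricCoord K (h p) v < barycentricCoord K (h q) v + ε)
    (hl : ∀ p ∈ A, θ (l p) ≤ barycentricCoord K (h p) (l p)) {s : Finset E} (hs : s.Nonempty)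
    (hgap : ∀ p ∈ A, ∃ v ∈ s, barycentricCoord K (h p) v + ε ≤ θ v) {t : Finset P}
    (htA : (t : Set P) ⊆ A) (ht : diam (t : Set P) ≤ δ) : t.image l ≠ s := by
  rintro rfl
  obtain ⟨p, hp⟩ := image_nonempty.1 hs
  obtain ⟨v, hv, hpv⟩ := hgap p (htA hp)
  obtain ⟨q, hq, rfl⟩ := mem_image.1 hv
  have hqp := (dist_le_diam_of_mem t.finite_toSet.isBounded hq hp).trans ht
  linarith [hδ q (htA hq) p (htA hp) hqp (l q), hl q (htA hq)]

end Labelling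

section Cycle

variable {E : Type*} [NormedAddCommGroup E] [NormedSpace ℝ E] [DecidableEq E]
  {K : Geometry.SimplicialComplex ℝ E} {r : ℕ} {s : Finset E} {x : E}

open ModTwoChain

theorem apply_eq_zero_of_threshold (hK : K.faces.Finite) (hr : ∀ s ∈ K.faces, #s ≤ r + 1)
    {c : ModTwoChain E} (hc : c ∈ chainsOn {s ∈ K.faces | #s = r + 1}) (hcycle : boundary c = 0)
    {h : ℝ × E → E} (hh : ContinuousOn h (Set.Icc 0 1 ×ˢ K.space))
    (hhK : Set.MapsTo h (Set.Icc 0 1 ×ˢ K.space) K.space) (h₁ : ∀ y ∈ K.space, h (1, y) = y)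
    {θ : E → ℝ} {η : ℝ} (hη : 0 < η) (hηθ : ∀ v, η ≤ θ v)
    (hθ : ∀ s ∈ K.faces, ∑ v ∈ s, θ v ≤ 1) {ε : ℝ} (hε : 0 < ε) (hs : s.Nonempty)
    (hgap : ∀ y ∈ K.space, ∃ v ∈ s, barycentricCoord K (h (0, y)) v + ε ≤ θ v) : c s = 0 := by
  have hX : IsCompact K.space := isCompact_space hK
  set A : Set (ℝ × E) := Set.Icc 0 1 ×ˢ K.space
  have hA₀ : {0} ×ˢ K.space ⊆ A :=
    Set.prod_mono_left (Set.singleton_subset_iff.2 unitInterval.zero_mem)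
  obtain ⟨δ, hδ, hunif⟩ := exists_pos_forall_dist_le_barycentricCoord_lt_add hK
    (isCompact_Icc.prod hX) hh hhK (lt_min hε hη)
  obtain ⟨l, hl⟩ : ∃ l : ℝ × E → E, ∀ p ∈ A, θ (l p) ≤ barycentricCoord K (h p) (l p) := by
    choose! l hl using fun p (hp : p ∈ A) => exists_le_barycentricCoord hθ (hhK hp)
    exact ⟨l, hl⟩
  have hcF : c ∈ chainsOn {s ∈ insert ∅ K.faces | #s = r + 1} :=
    mem_chainsOn_iff.2 fun s hs =>
      (mem_chainsOn_iff.1 hc s hs).imp_left (Set.mem_insert_of_mem _)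
  refine apply_eq_zero_of_labelling (F := insert ∅ K.faces) (X := K.space) (l := l)
    isLowerSet_insert_empty_faces (Set.forall_mem_insert.2 ⟨zero_le, hr⟩) hX.isBounded
    (Set.forall_mem_insert.2 ⟨by simp, fun s hs => K.convexHull_subset_space hs⟩)
    hcF hcycle hδ ?_ ?_ ?_
  · exact fun t htA ht => image_mem_insert_empty_faces hhK
      (fun p hp q hq hpq v => (hunif p hp q hq hpq v).trans_le (by gcongr; exact min_le_right _ _))
      (fun p hp => (hηθ _).trans (hl p hp)) htA ht
  · refine Set.forall_mem_insert.2 ⟨by simp, fun s hs y hy => ?_⟩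
    have hyK := K.convexHull_subset_space hs hy
    have hly := hl (1, y) ⟨unitInterval.one_mem, hyK⟩
    rw [h₁ y hyK] at hly
    by_contra hns
    rw [(isBarycentricWeight_barycentricCoord hs hy).eq_zero_of_notMem _ hns] at hly
    linarith [hηθ (l (1, y))]
  · refine fun t htA ht => image_ne_of_gap (A := {0} ×ˢ K.space) (ε := ε) (fun p hp q hq hpq v =>
      (hunif p (hA₀ hp) q (hA₀ hq) hpq v).trans_le (by gcongr; exact min_le_left _ _))
      (fun p hp => hl p (hA₀ hp)) hs ?_ htA ht
    rintro ⟨_, y⟩ ⟨rfl, hy⟩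
    exact hgap y hy

theorem exists_apply_zero_eq_of_barycentricCoord_pos (hK : K.faces.Finite)
    (hr : ∀ s ∈ K.faces, #s ≤ r + 1) {c : ModTwoChain E}
    (hc : c ∈ chainsOn {s ∈ K.faces | #s = r + 1}) (hcycle : boundary c = 0) {h : ℝ × E → E}
    (hh : ContinuousOn h (Set.Icc 0 1 ×ˢ K.space))
    (hhK : Set.MapsTo h (Set.Icc 0 1 ×ˢ K.space) K.space) (h₁ : ∀ y ∈ K.space, h (1, y) = y)
    (hcs : c s ≠ 0) (hx : x ∈ convexHull ℝ (s : Set E))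
    (hpos : ∀ v ∈ s, 0 < barycentricCoord K x v) : ∃ y ∈ K.space, h (0, y) = x := by
  by_contra! hmiss
  obtain ⟨hs, hsr⟩ := mem_chainsOn_iff.1 hc s hcs
  have h₀mem : Set.MapsTo (fun y : E => ((0 : ℝ), y)) K.space (Set.Icc 0 1 ×ˢ K.space) :=
    fun y hy => ⟨unitInterval.zero_mem, hy⟩
  obtain ⟨ε, hε, hgap⟩ := exists_pos_forall_exists_barycentricCoord_add_le hK hs hx
    ((isCompact_space hK).image_of_continuousOn
      (hh.comp (Continuous.prodMk_right 0).continuousOn h₀mem))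
    (Set.image_subset_iff.2 fun y hy => hhK (h₀mem hy))
    (by rintro ⟨y, hy, hyx⟩; exact hmiss y hy hyx)
  have hne := K.nonempty_of_mem_faces hs
  obtain ⟨θ, η, hη, hθs, hηθ, hθ⟩ := exists_threshold hne hpos
  rw [(isBarycentricWeight_barycentricCoord hs hx).sum_eq_one, hsr] at hθ
  refine hcs (apply_eq_zero_of_threshold hK hr hc hcycle hh hhK h₁ hη hηθ
    (fun t ht => hθ t (hr t ht)) hε hne fun y hy => ?_)
  obtain ⟨v, hv, hle⟩ := hgap _ (Set.mem_image_of_mem _ hy)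
  exact ⟨v, hv, hle.trans_eq (hθs v hv).symm⟩

end Cycle

theorem ModTwoChain.exists_cycle_coe_eq {E : Type*} [AddCommGroup E] [Module ℝ E] [DecidableEq E]
    {K : Geometry.SimplicialComplex ℝ E} {r : ℕ} (hK : K.faces.Finite) (hr : 1 ≤ r)
    {c : Finset E → ZMod 2}
    (hc : ∀ s, c s ≠ 0 → s ∈ K.faces ∧ #s = r + 1)
    (hcycle : ∀ t ∈ K.faces, #t = r → ∑ s ∈ hK.toFinset with t ⊆ s ∧ #s = r + 1, c s = 0) :
    ∃ C : ModTwoChain E, C ∈ chainsOn {s ∈ K.faces | #s = r + 1} ∧ boundary C = 0 ∧ ⇑C = c := by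
  let C : ModTwoChain E := .onFinset hK.toFinset c fun s hs => hK.mem_toFinset.2 (hc s hs).1
  refine ⟨C, mem_chainsOn_iff.2 hc, boundary_eq_zero_of_forall_card
    (mem_chainsOn_iff.2 fun s hs => (hc s hs).2) fun s hs t hts ht => ?_, rfl⟩
  rw [← hcycle t (K.down_closed (hc s hs).1 hts (card_pos.1 (by lia))) ht]
  refine sum_subset_zero_on_sdiff (fun u hu => ?_) (fun u hu => ?_) fun _ _ => rfl
  · obtain ⟨hu, htu⟩ := mem_filter.1 hu
    obtain ⟨huK, hur⟩ := hc u (Finsupp.mem_support_iff.1 hu)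
    exact mem_filter.2 ⟨hK.mem_toFinset.2 huK, htu, hur⟩
  · by_contra hcu
    obtain ⟨hu, hnot⟩ := mem_sdiff.1 hu
    exact hnot (mem_filter.2 ⟨Finsupp.mem_support_iff.2 hcu, (mem_filter.1 hu).2.1⟩)

/-- Let `K` be a finite simplicial complex of dimension `r` with
`H_r(|K|; ℤ/2) ≠ 0`, and let `c` be a nonzero `r`-cycle in the simplicial chain group
`C_r(K; ℤ/2)` (since `dim K = r`, the nonvanishing of `H_r` is equivalent to the
existence of such a cycle, and with `ℤ/2`-coefficients the boundary of an `r`-chain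
evaluated on an `(r−1)`-face `t` is the number mod 2 of `r`-simplices of the chain
containing `t`).  If `f : |K| → |K|` is continuous and homotopic to the identity,
then the support of `c` is contained in the image of `f`. -/
theorem statement10 (E : Type*) [NormedAddCommGroup E] [NormedSpace ℝ E] [DecidableEq E]
    (K : Geometry.SimplicialComplex ℝ E) (hKfin : K.faces.Finite)
    (r : ℕ) (hr : 1 ≤ r)
    (hdim : ∀ s ∈ K.faces, s.card ≤ r + 1)
    (c : Finset E → ZMod 2)
    (hsupp : ∀ s : Finset E, c s ≠ 0 → s ∈ K.faces ∧ s.card = r + 1)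
    (hne : c ≠ 0)
    (hcycle : ∀ t : Finset E, t ∈ K.faces → t.card = r →
      (∑ s ∈ hKfin.toFinset.filter (fun s => t ⊆ s ∧ s.card = r + 1), c s) = 0)
    (f : C(↥K.space, ↥K.space))
    (hf : f.Homotopic (ContinuousMap.id ↥K.space)) :
    (⋃ s ∈ {s : Finset E | c s ≠ 0}, convexHull ℝ (s : Set E)) ⊆
      Subtype.val '' Set.range f := by
  have : CompactSpace K.space := isCompact_iff_compactSpace.1 (isCompact_space hKfin)
  have hclosed : IsClosed (Subtype.val '' Set.range f) :=
    ((isCompact_range f.continuous).image continuous_subtype_val).isClosed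
  obtain ⟨C, hC, hCcycle, rfl⟩ := ModTwoChain.exists_cycle_coe_eq hKfin hr hsupp hcycle
  obtain ⟨h, hh, hhK, h₀, h₁⟩ := exists_homotopy_on_ambient hf
  refine Set.iUnion₂_subset fun s hs => ?_
  suffices hint : {x ∈ convexHull ℝ (s : Set E) | ∀ v ∈ s, 0 < barycentricCoord K x v} ⊆
      Subtype.val '' Set.range f from fun y hy =>
    closure_minimal hint hclosed (mem_closure_forall_barycentricCoord_pos (hsupp s hs).1 hy)
  rintro x ⟨hx, hpos⟩
  obtain ⟨y, hy, rfl⟩ := exists_apply_zero_eq_of_barycentricCoord_pos hKfin hdim hC hCcycle hh hhK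
    (fun y hy => h₁ ⟨y, hy⟩) hs hx hpos
  exact ⟨_, ⟨⟨y, hy⟩, rfl⟩, (h₀ ⟨y, hy⟩).symm⟩
end
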